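/- arXiv:2108.02857 — 2 statements merged into one kernel-verified Lean document; each statement's English description precedes it below -/
import Mathlib

section
/- For every θ > 0 there exist a constant C(θ) > 0 and T₀ ≥ 1, depending only on θ, such that for all T ≥ T₀, d_Kol(Y₁₂(T)/√T, N(0, 1/(4θ³))) ≤ C(θ) · ln(T)/√T. In particular, Y₁₂(T)/√T converges in distribution to N(0, 1/(4θ³)) as T → ∞. -/
open MeasureTheory ProbabilityTheory Real Filter Finset
open scoped Topology ENNReal NNReal

noncomputable section

/-- Kolmogorov distance between two Borel measures on `ℝ`. -/
def dKol (μ ν : Measure ℝ) : ℝ :=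
  ⨆ z : ℝ, |(μ (Set.Iic z)).toReal - (ν (Set.Iic z)).toReal|

/-- `X 0, X 1 : ℝ → Ω → ℝ` is a pair of independent centered Gaussian processes,
started at `0`, with almost surely continuous paths on `[0,∞)` and the
Ornstein–Uhlenbeck covariance `E[Xᵢ(s)Xᵢ(t)] = (e^{−θ|t−s|} − e^{−θ(t+s)})/(2θ)`. -/
structure IsOUPair {Ω : Type} [MeasureSpace Ω] (θ : ℝ) (X : Fin 2 → ℝ → Ω → ℝ) : Prop where
  meas : ∀ i t, Measurable (X i t)
  gaussian : ∀ (i : Fin 2) (n : ℕ) (t : Fin n → ℝ) (c : Fin n → ℝ), (∀ j, 0 ≤ t j) →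
      ∃ v : NNReal, Measure.map (fun ω => ∑ j, c j * X i (t j) ω) ℙ = gaussianReal 0 v
  indep : IndepFun (fun ω t => X 0 t ω) (fun ω t => X 1 t ω) ℙ
  cont : ∀ᵐ ω ∂(ℙ : Measure Ω), ∀ i, ContinuousOn (fun t => X i t ω) (Set.Ici 0)
  init : ∀ i ω, X i 0 ω = 0
  cov : ∀ (i : Fin 2) (s t : ℝ), 0 ≤ s → 0 ≤ t →
      ∫ ω, X i s ω * X i t ω ∂ℙ
        = (Real.exp (-θ * |t - s|) - Real.exp (-θ * (t + s))) / (2 * θ)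

variable {Ω : Type} [MeasureSpace Ω]

/-- `F_T := T^{-1/2} ∫₀^T X₁(u) X₂(u) du`. -/
def ouF (X : Fin 2 → ℝ → Ω → ℝ) (T : ℝ) (ω : Ω) : ℝ :=
  (1 / Real.sqrt T) * ∫ u in (0:ℝ)..T, X 0 u ω * X 1 u ω

/-- `X̄ᵢ(T) := T^{-1} ∫₀^T Xᵢ(u) du`. -/
def ouXbar (X : Fin 2 → ℝ → Ω → ℝ) (i : Fin 2) (T : ℝ) (ω : Ω) : ℝ :=
  (1 / T) * ∫ u in (0:ℝ)..T, X i u ω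

/-- `Y_{ij}(T) := ∫₀^T Xᵢ(u)Xⱼ(u) du − T·X̄ᵢ(T)·X̄ⱼ(T)`. -/
def ouY (X : Fin 2 → ℝ → Ω → ℝ) (i j : Fin 2) (T : ℝ) (ω : Ω) : ℝ :=
  (∫ u in (0:ℝ)..T, X i u ω * X j u ω) - T * ouXbar X i T ω * ouXbar X j T ω

/-- Yule's nonsense correlation `ρ(T)`. -/
def ouRho (X : Fin 2 → ℝ → Ω → ℝ) (T : ℝ) (ω : Ω) : ℝ :=
  ouY X 0 1 T ω / Real.sqrt (ouY X 0 0 T ω * ouY X 1 1 T ω)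

/-- `A(n) := (√Tₙ/n) Σ_{k<n} X₁(kΔ)X₂(kΔ)` with `Tₙ = nΔ`. -/
def ouA (X : Fin 2 → ℝ → Ω → ℝ) (n : ℕ) (Δ : ℝ) (ω : Ω) : ℝ :=
  (Real.sqrt (n * Δ) / n) * ∑ k ∈ Finset.range n, X 0 (k * Δ) ω * X 1 (k * Δ) ω

/-- `X̃ᵢ(n) := n^{-1} Σ_{k<n} Xᵢ(kΔ)`. -/
def ouXtilde (X : Fin 2 → ℝ → Ω → ℝ) (i : Fin 2) (n : ℕ) (Δ : ℝ) (ω : Ω) : ℝ :=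
  (1 / n) * ∑ k ∈ Finset.range n, X i (k * Δ) ω

/-- `Ỹ_{ij}(n) := Δ Σ_{k<n} Xᵢ(kΔ)Xⱼ(kΔ) − Tₙ·X̃ᵢ(n)·X̃ⱼ(n)` with `Tₙ = nΔ`. -/
def ouYtilde (X : Fin 2 → ℝ → Ω → ℝ) (i j : Fin 2) (n : ℕ) (Δ : ℝ) (ω : Ω) : ℝ :=
  Δ * ∑ k ∈ Finset.range n, X i (k * Δ) ω * X j (k * Δ) ω
    - (n * Δ) * ouXtilde X i n Δ ω * ouXtilde X j n Δ ω

/-- Yule's discrete nonsense correlation `ρ̃(n)`. -/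
def ouRhoTilde (X : Fin 2 → ℝ → Ω → ℝ) (n : ℕ) (Δ : ℝ) (ω : Ω) : ℝ :=
  ouYtilde X 0 1 n Δ ω / Real.sqrt (ouYtilde X 0 0 n Δ ω * ouYtilde X 1 1 n Δ ω)

/-! ### Gaussian moments -/

lemma gauss_mom4 (v : ℝ≥0) : ∫ x, x ^ 4 ∂(gaussianReal 0 v) = 3 * (v : ℝ) ^ 2 := by
  have h := iteratedDeriv_mgf_zero (X := id) (μ := gaussianReal 0 v) (by simp) 4
  simp only [id, Pi.pow_apply] at h
  have h' : ∫ x, x ^ 4 ∂(gaussianReal 0 v) = iteratedDeriv 4 (mgf id (gaussianReal 0 v)) 0 := by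
    rw [h]
  rw [h', mgf_id_gaussianReal]
  generalize (v : ℝ) = w
  have hE : ∀ t : ℝ, HasDerivAt (fun t : ℝ => rexp (0 * t + w * t ^ 2 / 2))
      (w * t * rexp (0 * t + w * t ^ 2 / 2)) t := by
    intro t
    have h1 : HasDerivAt (fun t : ℝ => 0 * t + w * t ^ 2 / 2) (w * t) t := by
      have := (((hasDerivAt_id t).const_mul 0).add
        ((((hasDerivAt_id t).pow 2).const_mul w).div_const 2))
      convert! this using 1
      simp; ring
    convert! h1.exp using 1
    ring
  have key : ∀ (p p' : ℝ → ℝ), (∀ t, HasDerivAt p (p' t) t) →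
      deriv (fun t => p t * rexp (0 * t + w * t ^ 2 / 2)) =
        fun t => (p' t + p t * (w * t)) * rexp (0 * t + w * t ^ 2 / 2) := by
    intro p p' hp
    funext t
    rw [(HasDerivAt.fun_mul (hp t) (hE t)).deriv]
    ring
  have d1 : deriv (fun t : ℝ => rexp (0 * t + w * t ^ 2 / 2)) =
      fun t => (w * t) * rexp (0 * t + w * t ^ 2 / 2) := funext fun t => (hE t).deriv
  rw [iteratedDeriv_eq_iterate]
  simp only [Function.iterate_succ, Function.iterate_zero, Function.comp, id]
  rw [d1, key (fun t => w * t) (fun _ => w) (fun t => by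
      simpa using (hasDerivAt_id t).const_mul w),
    key (fun t => w + w * t * (w * t)) (fun t => 2 * w ^ 2 * t) (fun t => by
      have := (((hasDerivAt_id t).pow 2).const_mul (w ^ 2)).const_add w
      convert! this using 1
      · funext s; simp; ring
      · simp; ring),
    key (fun t => 2 * w ^ 2 * t + (w + w * t * (w * t)) * (w * t))
      (fun t => 3 * w ^ 2 + 3 * w ^ 3 * t ^ 2) (fun t => by
      have := ((hasDerivAt_id t).const_mul (3 * w ^ 2)).add
        (((hasDerivAt_id t).pow 3).const_mul (w ^ 3))
      convert! this using 1
      · funext s; simp; ring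
      · simp; ring)]
  simp

lemma gauss_mom2 (v : ℝ≥0) : ∫ x, x ^ 2 ∂(gaussianReal 0 v) = (v : ℝ) := by
  have h := variance_fun_id_gaussianReal (μ := 0) (v := v)
  rw [variance_eq_integral (by fun_prop)] at h
  simpa using h

section GaussVec
variable {Ω' : Type} [MeasurableSpace Ω'] {P : Measure Ω'} [IsProbabilityMeasure P]

lemma gv_memLp {n : ℕ} {x : Fin n → Ω' → ℝ} (hm : ∀ i, Measurable (x i))
    (hG : ∀ c : Fin n → ℝ, ∃ v : ℝ≥0, P.map (fun ω => ∑ j, c j * x j ω) = gaussianReal 0 v)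
    (i : Fin n) : MemLp (x i) 4 P := by
  obtain ⟨v, hv⟩ := hG (Pi.single i 1)
  have h1 : (fun ω => ∑ j, (Pi.single i (1:ℝ) : Fin n → ℝ) j * x j ω) = x i := by
    funext ω; simp [Pi.single_apply]
  rw [h1] at hv
  have := memLp_id_gaussianReal' (μ := 0) (v := v) 4 (by simp)
  rw [← hv, memLp_map_measure_iff (by fun_prop) (hm i).aemeasurable] at this
  simpa using this

lemma gv_int2 {f g : Ω' → ℝ} (hf : MemLp f 4 P) (hg : MemLp g 4 P) :
    Integrable (fun ω => f ω * g ω) P := 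
  MemLp.integrable_mul (hf.mono_exponent (p := 2) (by norm_num))
    (hg.mono_exponent (p := 2) (by norm_num))

lemma gv_int_pow4 {f : Ω' → ℝ} (hf : MemLp f 4 P) : Integrable (fun ω => f ω ^ 4) P := by
  have := hf.integrable_norm_pow (p := 4) (by norm_num)
  refine this.congr (Eventually.of_forall fun ω => ?_)
  simp only [Real.norm_eq_abs]
  exact (even_two_mul 2).pow_abs (f ω)

lemma gv_int4 {f g h k : Ω' → ℝ} (hf : MemLp f 4 P) (hg : MemLp g 4 P) (hh : MemLp h 4 P)
    (hk : MemLp k 4 P) : Integrable (fun ω => f ω * g ω * h ω * k ω) P := by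
  refine (((gv_int_pow4 hf).add (gv_int_pow4 hg)).add
    ((gv_int_pow4 hh).add (gv_int_pow4 hk))).mono' ?_ (Eventually.of_forall fun ω => ?_)
  · exact ((hf.1.mul hg.1).mul hh.1).mul hk.1
  · simp only [Pi.add_apply, Real.norm_eq_abs]
    rw [abs_le]
    constructor <;>
    nlinarith [sq_nonneg (f ω * g ω + h ω * k ω), sq_nonneg (f ω * g ω - h ω * k ω),
      sq_nonneg (f ω ^ 2 - g ω ^ 2), sq_nonneg (h ω ^ 2 - k ω ^ 2),
      sq_nonneg (f ω ^ 2), sq_nonneg (g ω ^ 2), sq_nonneg (h ω ^ 2), sq_nonneg (k ω ^ 2)]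

lemma gv_sum_sq {n : ℕ} {x : Fin n → Ω' → ℝ} (hL : ∀ i, MemLp (x i) 4 P) (c : Fin n → ℝ) :
    ∫ ω, (∑ j, c j * x j ω) ^ 2 ∂P = ∑ i, ∑ j, c i * c j * ∫ ω, x i ω * x j ω ∂P := by
  have h1 : (fun ω => (∑ j, c j * x j ω) ^ 2) =
      fun ω => ∑ i, ∑ j, c i * c j * (x i ω * x j ω) := by
    funext ω
    rw [sq, Finset.sum_mul_sum]
    refine Finset.sum_congr rfl fun i _ => Finset.sum_congr rfl fun j _ => by ring
  rw [h1, integral_finsetSum _ fun i _ => integrable_finsetSum _ fun j _ =>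
    (gv_int2 (hL i) (hL j)).const_mul _]
  refine Finset.sum_congr rfl fun i _ => ?_
  rw [integral_finsetSum _ fun j _ => (gv_int2 (hL i) (hL j)).const_mul _]
  refine Finset.sum_congr rfl fun j _ => ?_
  rw [integral_const_mul]

/-- the variance of a Gaussian linear combination -/
lemma gv_law {n : ℕ} {x : Fin n → Ω' → ℝ} (hm : ∀ i, Measurable (x i))
    (hG : ∀ c : Fin n → ℝ, ∃ v : ℝ≥0, P.map (fun ω => ∑ j, c j * x j ω) = gaussianReal 0 v)
    (c : Fin n → ℝ) :
    0 ≤ (∑ i, ∑ j, c i * c j * ∫ ω, x i ω * x j ω ∂P) ∧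
    P.map (fun ω => ∑ j, c j * x j ω) = gaussianReal 0
      (Real.toNNReal (∑ i, ∑ j, c i * c j * ∫ ω, x i ω * x j ω ∂P)) := by
  rw [← gv_sum_sq (gv_memLp hm hG)]
  refine ⟨integral_nonneg fun ω => sq_nonneg _, ?_⟩
  obtain ⟨v, hv⟩ := hG c
  have h2 := gauss_mom2 v
  rw [← hv, integral_map (by fun_prop) (by fun_prop)] at h2
  rw [hv, h2, Real.toNNReal_coe]

lemma gv_mom4 {n : ℕ} {x : Fin n → Ω' → ℝ} (hm : ∀ i, Measurable (x i))
    (hG : ∀ c : Fin n → ℝ, ∃ v : ℝ≥0, P.map (fun ω => ∑ j, c j * x j ω) = gaussianReal 0 v)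
    (c : Fin n → ℝ) :
    ∫ ω, (∑ j, c j * x j ω) ^ 4 ∂P =
      3 * (∑ i, ∑ j, c i * c j * ∫ ω, x i ω * x j ω ∂P) ^ 2 := by
  have h4 := gauss_mom4 (Real.toNNReal (∑ i, ∑ j, c i * c j * ∫ ω, x i ω * x j ω ∂P))
  obtain ⟨h0, hl⟩ := gv_law hm hG c
  rw [← hl, integral_map (by fun_prop) (by fun_prop), Real.coe_toNNReal _ h0] at h4
  exact h4

/-- Wick's formula for four jointly Gaussian variables -/
lemma wick4 {x : Fin 4 → Ω' → ℝ} (hm : ∀ i, Measurable (x i))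
    (hG : ∀ c : Fin 4 → ℝ, ∃ v : ℝ≥0, P.map (fun ω => ∑ j, c j * x j ω) = gaussianReal 0 v)
    (K : Fin 4 → Fin 4 → ℝ) (hK : ∀ i j, ∫ ω, x i ω * x j ω ∂P = K i j) :
    ∫ ω, x 0 ω * x 1 ω * x 2 ω * x 3 ω ∂P = K 0 1 * K 2 3 + K 0 2 * K 1 3 + K 0 3 * K 1 2 := by
  have hL := gv_memLp hm hG
  have hs : ∀ i j, K i j = K j i := by
    intro i j; rw [← hK, ← hK]; congr 1; funext ω; ring
  let c : Fin 8 → Fin 4 → ℝ := ![![1,1,1,1], ![1,1,1,-1], ![1,1,-1,1], ![1,1,-1,-1],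
    ![1,-1,1,1], ![1,-1,1,-1], ![1,-1,-1,1], ![1,-1,-1,-1]]
  let e : Fin 8 → ℝ := ![1,-1,-1,1,-1,1,1,-1]
  have h1 : (fun ω => x 0 ω * x 1 ω * x 2 ω * x 3 ω) =
      fun ω => ∑ s, e s / 192 * (∑ j, c s j * x j ω) ^ 4 := by
    funext ω
    simp [Fin.sum_univ_succ, c, e]
    ring
  have h2 : ∀ s, Integrable (fun ω => (∑ j, c s j * x j ω) ^ 4) P := fun s =>
    gv_int_pow4 (memLp_finsetSum _ fun j _ => (hL j).const_mul _)
  rw [h1, integral_finsetSum _ fun s _ => (h2 s).const_mul _]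
  simp_rw [integral_const_mul, gv_mom4 hm hG, hK]
  simp [Fin.sum_univ_succ, c, e]
  rw [hs 1 0, hs 2 0, hs 3 0, hs 2 1, hs 3 1, hs 3 2]
  ring

end GaussVec

section Quad
variable {Ω' : Type} [MeasurableSpace Ω'] {P : Measure Ω'} [IsProbabilityMeasure P]

lemma quad_moment {n : ℕ} {x : Fin n → Ω' → ℝ} (hL : ∀ i, MemLp (x i) 4 P)
    (K : Fin n → Fin n → ℝ) (hK : ∀ i j, ∫ ω, x i ω * x j ω ∂P = K i j)
    (hW : ∀ i j k l, ∫ ω, x i ω * x j ω * x k ω * x l ω ∂P =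
      K i j * K k l + K i k * K j l + K i l * K j k) (M : Fin n → Fin n → ℝ) (c : ℝ) :
    Integrable (fun ω => (∑ i, ∑ j, M i j * (x i ω * x j ω) - c) ^ 2) P ∧
    ∫ ω, (∑ i, ∑ j, M i j * (x i ω * x j ω) - c) ^ 2 ∂P =
      (∑ i, ∑ j, M i j * K i j - c) ^ 2 +
      ∑ i, ∑ j, ∑ k, ∑ l, M i j * M k l * (K i k * K j l + K i l * K j k) := by
  have hI1 : Integrable (fun ω => ∑ i, ∑ j, M i j * (x i ω * x j ω)) P :=
    integrable_finsetSum _ fun i _ => integrable_finsetSum _ fun j _ =>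
      (gv_int2 (hL i) (hL j)).const_mul _
  have hE1 : ∫ ω, ∑ i, ∑ j, M i j * (x i ω * x j ω) ∂P = ∑ i, ∑ j, M i j * K i j := by
    rw [integral_finsetSum _ fun i _ => integrable_finsetSum _ fun j _ =>
      (gv_int2 (hL i) (hL j)).const_mul _]
    refine Finset.sum_congr rfl fun i _ => ?_
    rw [integral_finsetSum _ fun j _ => (gv_int2 (hL i) (hL j)).const_mul _]
    refine Finset.sum_congr rfl fun j _ => ?_
    rw [integral_const_mul, hK]
  have hI4 : ∀ i j k l, Integrable (fun ω => M i j * M k l * (x i ω * x j ω * x k ω * x l ω)) P :=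
    fun i j k l => (gv_int4 (hL i) (hL j) (hL k) (hL l)).const_mul _
  have hsq : (fun ω => (∑ i, ∑ j, M i j * (x i ω * x j ω)) ^ 2) = fun ω =>
      ∑ i, ∑ j, ∑ k, ∑ l, M i j * M k l * (x i ω * x j ω * x k ω * x l ω) := by
    funext ω
    rw [sq, Finset.sum_mul]
    refine Finset.sum_congr rfl fun i _ => ?_
    rw [Finset.sum_mul]
    refine Finset.sum_congr rfl fun j _ => ?_
    rw [Finset.mul_sum]
    refine Finset.sum_congr rfl fun k _ => ?_
    rw [Finset.mul_sum]
    refine Finset.sum_congr rfl fun l _ => by ring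
  have hI2 : Integrable (fun ω => (∑ i, ∑ j, M i j * (x i ω * x j ω)) ^ 2) P := by
    rw [hsq]
    exact integrable_finsetSum _ fun i _ => integrable_finsetSum _ fun j _ =>
      integrable_finsetSum _ fun k _ => integrable_finsetSum _ fun l _ => hI4 i j k l
  have hE2 : ∫ ω, (∑ i, ∑ j, M i j * (x i ω * x j ω)) ^ 2 ∂P =
      (∑ i, ∑ j, M i j * K i j) ^ 2 +
      ∑ i, ∑ j, ∑ k, ∑ l, M i j * M k l * (K i k * K j l + K i l * K j k) := by
    rw [hsq]
    rw [integral_finsetSum _ fun i _ => integrable_finsetSum _ fun j _ =>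
      integrable_finsetSum _ fun k _ => integrable_finsetSum _ fun l _ => hI4 i j k l]
    rw [sq, Finset.sum_mul, ← Finset.sum_add_distrib]
    refine Finset.sum_congr rfl fun i _ => ?_
    rw [integral_finsetSum _ fun j _ =>
      integrable_finsetSum _ fun k _ => integrable_finsetSum _ fun l _ => hI4 i j k l]
    rw [Finset.sum_mul, ← Finset.sum_add_distrib]
    refine Finset.sum_congr rfl fun j _ => ?_
    rw [integral_finsetSum _ fun k _ => integrable_finsetSum _ fun l _ => hI4 i j k l]
    rw [Finset.mul_sum, ← Finset.sum_add_distrib]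
    refine Finset.sum_congr rfl fun k _ => ?_
    rw [integral_finsetSum _ fun l _ => hI4 i j k l]
    rw [Finset.mul_sum, ← Finset.sum_add_distrib]
    refine Finset.sum_congr rfl fun l _ => ?_
    rw [integral_const_mul, hW]
    ring
  have hexp : (fun ω => (∑ i, ∑ j, M i j * (x i ω * x j ω) - c) ^ 2) = fun ω =>
      (∑ i, ∑ j, M i j * (x i ω * x j ω)) ^ 2 -
        (2 * c) * (∑ i, ∑ j, M i j * (x i ω * x j ω)) + c ^ 2 := by
    funext ω; ring
  rw [hexp]
  have hIa : Integrable (fun ω => (∑ i, ∑ j, M i j * (x i ω * x j ω)) ^ 2 -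
        (2 * c) * (∑ i, ∑ j, M i j * (x i ω * x j ω))) P := hI2.sub (hI1.const_mul _)
  refine ⟨hIa.add (integrable_const _), ?_⟩
  rw [integral_add hIa (integrable_const _), integral_sub hI2 (hI1.const_mul _),
    integral_const_mul, hE1, hE2]
  simp
  ring

lemma quad_sum_bound {n : ℕ} (K M : Fin n → Fin n → ℝ)
    (hMs : ∀ i j, M i j = M j i) (κ RK RM : ℝ) (hκ : ∀ i j, |K i j| ≤ κ)
    (hRK : ∀ i, ∑ j, |K i j| ≤ RK) (hRM : ∀ i, ∑ j, |M i j| ≤ RM) (h0 : 0 ≤ κ) (h0K : 0 ≤ RK)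
    (h0M : 0 ≤ RM) :
    ∑ i, ∑ j, ∑ k, ∑ l, M i j * M k l * (K i k * K j l + K i l * K j k)
      ≤ 2 * (n * (κ * RM ^ 2 * RK)) := by
  have h1 : ∑ i, ∑ j, ∑ k, ∑ l, |M i j| * |M k l| * (|K i k| * |K j l|)
      ≤ n * (κ * RM ^ 2 * RK) := by
    have : ∀ i, ∑ j, ∑ k, ∑ l, |M i j| * |M k l| * (|K i k| * |K j l|) ≤ κ * RM ^ 2 * RK := by
      intro i
      calc ∑ j, ∑ k, ∑ l, |M i j| * |M k l| * (|K i k| * |K j l|)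
          ≤ ∑ j, ∑ k, ∑ l, |M i j| * |K i k| * κ * |M k l| := by
            refine Finset.sum_le_sum fun j _ => Finset.sum_le_sum fun k _ =>
              Finset.sum_le_sum fun l _ => ?_
            have := mul_le_mul_of_nonneg_left (hκ j l)
              (show 0 ≤ |M i j| * |K i k| * |M k l| by positivity)
            linarith
        _ ≤ ∑ j, ∑ k, |M i j| * (κ * RM) * |K i k| := by
            refine Finset.sum_le_sum fun j _ => Finset.sum_le_sum fun k _ => ?_
            rw [← Finset.mul_sum]
            have := mul_le_mul_of_nonneg_left (hRM k)
              (show 0 ≤ |M i j| * |K i k| * κ by positivity)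
            linarith
        _ ≤ ∑ j, (κ * RM * RK) * |M i j| := by
            refine Finset.sum_le_sum fun j _ => ?_
            rw [← Finset.mul_sum]
            have := mul_le_mul_of_nonneg_left (hRK i)
              (show 0 ≤ |M i j| * (κ * RM) by positivity)
            linarith
        _ ≤ κ * RM ^ 2 * RK := by
            rw [← Finset.mul_sum]
            have := mul_le_mul_of_nonneg_left (hRM i)
              (show 0 ≤ κ * RM * RK by positivity)
            linarith
    calc _ ≤ ∑ i : Fin n, κ * RM ^ 2 * RK := Finset.sum_le_sum fun i _ => this i
      _ = _ := by simp
  have h2 : ∑ i, ∑ j, ∑ k, ∑ l, M i j * M k l * (K i k * K j l)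
      ≤ ∑ i, ∑ j, ∑ k, ∑ l, |M i j| * |M k l| * (|K i k| * |K j l|) := by
    refine Finset.sum_le_sum fun i _ => Finset.sum_le_sum fun j _ =>
      Finset.sum_le_sum fun k _ => Finset.sum_le_sum fun l _ => ?_
    rw [← abs_mul, ← abs_mul, ← abs_mul]
    exact le_abs_self _
  have h3 : ∑ i, ∑ j, ∑ k, ∑ l, M i j * M k l * (K i k * K j l + K i l * K j k) =
      ∑ i, ∑ j, ∑ k, ∑ l, M i j * M k l * (K i k * K j l) +
      ∑ i, ∑ j, ∑ k, ∑ l, M i j * M k l * (K i k * K j l) := by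
    rw [← Finset.sum_add_distrib]
    refine Finset.sum_congr rfl fun i _ => ?_
    rw [← Finset.sum_add_distrib]
    refine Finset.sum_congr rfl fun j _ => ?_
    simp_rw [mul_add, Finset.sum_add_distrib]
    congr 1
    rw [Finset.sum_comm]
    refine Finset.sum_congr rfl fun k _ => Finset.sum_congr rfl fun l _ => ?_
    rw [hMs l k]
  linarith

end Quad

/-! ### Comparison of centered Gaussian laws -/

lemma gauss_Ioc_le {s t : ℝ} (hs : 0 ≤ s) (hst : s ≤ t) :
    (gaussianReal 0 1).real (Set.Ioc s t) ≤ (t - s) * rexp (-s ^ 2 / 2) := by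
  have h1 : (gaussianReal 0 1).real (Set.Ioc s t) = ∫ x in Set.Ioc s t, gaussianPDFReal 0 1 x := by
    rw [Measure.real, gaussianReal_apply_eq_integral 0 (by norm_num), ENNReal.toReal_ofReal]
    exact setIntegral_nonneg measurableSet_Ioc fun x _ => gaussianPDFReal_nonneg _ _ _
  rw [h1]
  have h2 : ∫ x in Set.Ioc s t, gaussianPDFReal 0 1 x ≤ ∫ x in Set.Ioc s t, rexp (-s ^ 2 / 2) := by
    refine setIntegral_mono_on (integrable_gaussianPDFReal 0 1).integrableOn
      (by simp) measurableSet_Ioc fun x hx => ?_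
    rw [gaussianPDFReal]
    simp only [NNReal.coe_one, mul_one, sub_zero]
    have hpi : (1:ℝ) ≤ √(2 * π) := by
      rw [Real.one_le_sqrt]; nlinarith [Real.pi_gt_three]
    have h3 : (√(2 * π))⁻¹ ≤ 1 := inv_le_one_of_one_le₀ hpi
    have h4 : rexp (-x ^ 2 / 2) ≤ rexp (-s ^ 2 / 2) := by
      apply Real.exp_le_exp.mpr
      nlinarith [hx.1]
    calc _ ≤ 1 * rexp (-s ^ 2 / 2) := by gcongr
      _ = _ := one_mul _
  refine h2.trans ?_
  simp [hst]

/-- Kolmogorov-type bound for scaled standard Gaussians -/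
lemma gauss_cdf_scale {a b : ℝ} (ha : 0 < a) (hab : a ≤ b) (z : ℝ) :
    |(gaussianReal 0 1).real (Set.Iic (z / a)) - (gaussianReal 0 1).real (Set.Iic (z / b))|
      ≤ (b - a) / a := by
  have hb : 0 < b := ha.trans_le hab
  have hdiff : ∀ s t : ℝ, s ≤ t → (gaussianReal 0 1).real (Set.Iic t) -
      (gaussianReal 0 1).real (Set.Iic s) = (gaussianReal 0 1).real (Set.Ioc s t) := by
    intro s t hst
    have hset : Set.Ioc s t = Set.Iic t \ Set.Iic s := by
      ext x; simp [and_comm]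
    rw [hset, measureReal_sdiff (Set.Iic_subset_Iic.mpr hst) measurableSet_Iic]
  have main : ∀ w : ℝ, 0 ≤ w → (gaussianReal 0 1).real (Set.Ioc (w / b) (w / a)) ≤ (b - a) / a := by
    intro w hw
    have hle : w / b ≤ w / a := div_le_div_of_nonneg_left hw ha hab
    refine (gauss_Ioc_le (by positivity) hle).trans ?_
    have h1 : w / a - w / b = (b - a) / a * (w / b) := by field_simp
    rw [h1, mul_assoc]
    have h2 : w / b * rexp (-(w / b) ^ 2 / 2) ≤ 1 := by
      set s := w / b
      have h3 : s ≤ rexp (s ^ 2 / 2) := by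
        have := Real.add_one_le_exp (s ^ 2 / 2)
        nlinarith [sq_nonneg (s - 1)]
      have h4 : rexp (-s ^ 2 / 2) = (rexp (s ^ 2 / 2))⁻¹ := by
        rw [← Real.exp_neg]; congr 1; ring
      rw [h4, ← div_eq_mul_inv, div_le_one (Real.exp_pos _)]
      exact h3
    have h5 : 0 ≤ (b - a) / a := div_nonneg (by linarith) ha.le
    nlinarith
  rcases le_total 0 z with hz | hz
  · have hle : z / b ≤ z / a := div_le_div_of_nonneg_left hz ha hab
    rw [hdiff _ _ hle, abs_of_nonneg measureReal_nonneg]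
    exact main z hz
  · have hle : z / a ≤ z / b := by
      have := div_le_div_of_nonneg_left (neg_nonneg.mpr hz) ha hab
      rw [neg_div, neg_div] at this
      linarith
    rw [abs_sub_comm, hdiff _ _ hle, abs_of_nonneg measureReal_nonneg]
    have hn : (gaussianReal 0 1).real (Set.Ioc (z / a) (z / b)) =
        (gaussianReal 0 1).real (Set.Ioc (-z / b) (-z / a)) := by
      have hmap : (gaussianReal 0 1).map (fun x => -x) = gaussianReal 0 1 := by
        rw [gaussianReal_map_neg]; simp
      have hna := nullSingletonClass_gaussianReal (μ := 0) (v := 1) (by norm_num)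
      conv_lhs => rw [← hmap]
      rw [map_measureReal_apply (by fun_prop) measurableSet_Ioc]
      have : (fun x : ℝ => -x) ⁻¹' Set.Ioc (z / a) (z / b) = Set.Ico (-z / b) (-z / a) := by
        ext x; simp only [Set.mem_preimage, Set.mem_Ioc, Set.mem_Ico, neg_div]
        constructor <;> rintro ⟨h1, h2⟩ <;> constructor <;> linarith
      rw [this]
      exact measureReal_congr Ico_ae_eq_Ioc
    rw [hn]
    exact main (-z) (by linarith)

lemma gauss_Iic_eq {v : ℝ} (hv : 0 < v) (z : ℝ) :
    (gaussianReal 0 (Real.toNNReal v)).real (Set.Iic z) =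
      (gaussianReal 0 1).real (Set.Iic (z / √v)) := by
  have hs : 0 < √v := Real.sqrt_pos.mpr hv
  have h := gaussianReal_map_const_mul (μ := 0) (v := 1) (√v)
  have h2 : gaussianReal 0 (Real.toNNReal v) = (gaussianReal 0 1).map (fun x => √v * x) := by
    rw [h]; congr 1
    · simp
    · ext; simp [Real.sq_sqrt hv.le, hv.le]
  rw [h2, map_measureReal_apply (by fun_prop) measurableSet_Iic]
  congr 1
  ext x
  simp only [Set.mem_preimage, Set.mem_Iic]
  rw [le_div_iff₀ hs, mul_comm]

lemma gauss_compare {v w : ℝ} (hv : 0 ≤ v) (hw : 0 < w) (z : ℝ) :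
    |(gaussianReal 0 (Real.toNNReal v)).real (Set.Iic z) -
      (gaussianReal 0 (Real.toNNReal w)).real (Set.Iic z)| ≤ 2 * |v - w| / w := by
  have htriv : |(gaussianReal 0 (Real.toNNReal v)).real (Set.Iic z) -
      (gaussianReal 0 (Real.toNNReal w)).real (Set.Iic z)| ≤ 1 := by
    have h1 := measureReal_le_one (μ := gaussianReal 0 (Real.toNNReal v)) (s := Set.Iic z)
    have h2 := measureReal_le_one (μ := gaussianReal 0 (Real.toNNReal w)) (s := Set.Iic z)
    have h3 := measureReal_nonneg (μ := gaussianReal 0 (Real.toNNReal v)) (s := Set.Iic z)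
    have h4 := measureReal_nonneg (μ := gaussianReal 0 (Real.toNNReal w)) (s := Set.Iic z)
    rw [abs_le]; constructor <;> linarith
  by_cases hc : v ≤ w / 2
  · refine htriv.trans ?_
    rw [le_div_iff₀ hw, abs_of_nonpos (by linarith)]
    linarith
  push Not at hc
  have hv' : 0 < v := by linarith
  have hsv : 0 < √v := Real.sqrt_pos.mpr hv'
  have hsw : 0 < √w := Real.sqrt_pos.mpr hw
  have ev := Real.sq_sqrt hv
  have ew := Real.sq_sqrt hw.le
  rw [gauss_Iic_eq hv', gauss_Iic_eq hw]
  rcases le_total v w with h | h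
  · have hs := Real.sqrt_le_sqrt h
    refine (gauss_cdf_scale hsv hs z).trans ?_
    rw [abs_of_nonpos (by linarith), div_le_div_iff₀ hsv hw]
    have : (w - v) = (√w - √v) * (√w + √v) := by nlinarith
    rw [neg_sub, this]
    have h6 : w ≤ 2 * (√w + √v) * √v := by nlinarith
    nlinarith [mul_le_mul_of_nonneg_left h6 (sub_nonneg.mpr hs)]
  · have hs := Real.sqrt_le_sqrt h
    rw [abs_sub_comm]
    refine (gauss_cdf_scale hsw hs z).trans ?_
    rw [abs_of_nonneg (by linarith), div_le_div_iff₀ hsw hw]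
    have : (v - w) = (√v - √w) * (√v + √w) := by nlinarith
    rw [this]
    have h6 : w ≤ 2 * (√v + √w) * √w := by nlinarith
    nlinarith [mul_le_mul_of_nonneg_left h6 (sub_nonneg.mpr hs)]

/-- continuity of the Gaussian distribution function -/
lemma gauss_cdf_cont {w : ℝ} (hw : 0 < w) :
    Continuous fun z => (gaussianReal 0 (Real.toNNReal w)).real (Set.Iic z) := by
  have hna := nullSingletonClass_gaussianReal (μ := 0) (v := Real.toNNReal w) (by simpa using hw)
  have h1 : (fun z => (gaussianReal 0 (Real.toNNReal w)).real (Set.Iic z)) =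
      fun z => ∫ x in Set.Iic z, (1:ℝ) ∂(gaussianReal 0 (Real.toNNReal w)) := by
    funext z; simp
  rw [h1]
  have h2 : ∀ z, ∫ x in Set.Iic z, (1:ℝ) ∂(gaussianReal 0 (Real.toNNReal w)) =
      (∫ x in (0:ℝ)..z, (1:ℝ) ∂(gaussianReal 0 (Real.toNNReal w))) +
      ∫ x in Set.Iic 0, (1:ℝ) ∂(gaussianReal 0 (Real.toNNReal w)) := by
    intro z
    rw [← intervalIntegral.integral_Iic_sub_Iic (by simp) (by simp)]
    ring
  rw [funext h2]
  refine Continuous.add ?_ continuous_const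
  exact intervalIntegral.continuous_primitive (fun a b => by simp) 0

/-! ### Geometric sums on the grid -/

lemma geo_row {ρ : ℝ} (h0 : 0 < ρ) (h1 : ρ < 1) (n j : ℕ) :
    ∑ k ∈ Finset.range n, ρ ^ ((k - j) + (j - k)) ≤ 2 / (1 - ρ) := by
  have hp : 0 < 1 - ρ := by linarith
  have hA : ∀ n : ℕ, ∑ k ∈ Finset.range n, (if j ≤ k then ρ ^ (k - j) else 0)
      ≤ (1 - ρ ^ (n - j)) / (1 - ρ) := by
    intro n
    induction n with
    | zero => simp
    | succ n ih =>
      rw [Finset.sum_range_succ]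
      by_cases h : j ≤ n
      · rw [if_pos h, Nat.succ_sub h, pow_succ]
        rw [le_div_iff₀ hp] at ih ⊢
        nlinarith
      · have e1 : n - j = 0 := by omega
        have e2 : n + 1 - j = 0 := by omega
        rw [if_neg h, e2]
        rw [e1] at ih
        simpa using ih
  have hB : ∀ n : ℕ, ∑ k ∈ Finset.range n, (if k ≤ j then ρ ^ (j - k) else 0)
      ≤ ρ ^ (j + 1 - n) / (1 - ρ) := by
    intro n
    induction n with
    | zero => simp; positivity
    | succ n ih =>
      rw [Finset.sum_range_succ]
      by_cases h : n ≤ j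
      · have e1 : j + 1 - n = (j - n) + 1 := by omega
        have e2 : j + 1 - (n + 1) = j - n := by omega
        rw [if_pos h, e2]
        rw [e1, pow_succ] at ih
        rw [le_div_iff₀ hp] at ih ⊢
        nlinarith
      · have e1 : j + 1 - n = 0 := by omega
        have e2 : j + 1 - (n + 1) = 0 := by omega
        rw [if_neg h, e2]
        rw [e1] at ih
        simpa using ih
  have hC : ∑ k ∈ Finset.range n, ρ ^ ((k - j) + (j - k)) ≤
      ∑ k ∈ Finset.range n, (if j ≤ k then ρ ^ (k - j) else 0) +
      ∑ k ∈ Finset.range n, (if k ≤ j then ρ ^ (j - k) else 0) := by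
    rw [← Finset.sum_add_distrib]
    refine Finset.sum_le_sum fun k _ => ?_
    rcases le_total j k with h | h
    · have e : j - k = 0 := by omega
      rw [if_pos h, e, add_zero]
      have : (0:ℝ) ≤ if k ≤ j then ρ ^ 0 else 0 := by split_ifs <;> positivity
      linarith
    · have e : k - j = 0 := by omega
      rw [if_pos h, e, zero_add]
      have : (0:ℝ) ≤ if j ≤ k then ρ ^ 0 else 0 := by split_ifs <;> positivity
      linarith
  have h2 : (1 - ρ ^ (n - j)) / (1 - ρ) ≤ 1 / (1 - ρ) := by
    gcongr
    have := pow_pos h0 (n - j)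
    linarith
  have h3 : ρ ^ (j + 1 - n) / (1 - ρ) ≤ 1 / (1 - ρ) := by
    gcongr
    exact pow_le_one₀ h0.le h1.le
  have h4 : 2 / (1 - ρ) = 1 / (1 - ρ) + 1 / (1 - ρ) := by ring
  linarith [hA n, hB n]

lemma geo_edge {ρ : ℝ} (h1 : ρ < 1) (n : ℕ) :
    ∑ k ∈ Finset.range n, ρ ^ (n - k) = ρ * (1 - ρ ^ n) / (1 - ρ) := by
  have hp : 1 - ρ ≠ 0 := by linarith
  induction n with
  | zero => simp
  | succ n ih =>
    rw [Finset.sum_range_succ]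
    have : ∑ k ∈ Finset.range n, ρ ^ (n + 1 - k) = ρ * ∑ k ∈ Finset.range n, ρ ^ (n - k) := by
      rw [Finset.mul_sum]
      refine Finset.sum_congr rfl fun k hk => ?_
      have := Finset.mem_range.mp hk
      rw [Nat.succ_sub this.le, pow_succ]; ring
    rw [this, ih]
    simp
    field_simp
    ring

lemma geo_tot {ρ : ℝ} (h1 : ρ < 1) (n : ℕ) :
    ∑ j ∈ Finset.range n, ∑ k ∈ Finset.range n, ρ ^ ((k - j) + (j - k)) =
      n * ((1 + ρ) / (1 - ρ)) - 2 * ρ * (1 - ρ ^ n) / (1 - ρ) ^ 2 := by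
  have hp : 1 - ρ ≠ 0 := by linarith
  induction n with
  | zero => simp
  | succ n ih =>
    rw [Finset.sum_range_succ]
    simp_rw [Finset.sum_range_succ (n := n)]
    rw [Finset.sum_add_distrib, ih]
    have e1 : ∑ j ∈ Finset.range n, ρ ^ (n - j + (j - n)) = ρ * (1 - ρ ^ n) / (1 - ρ) := by
      rw [← geo_edge h1]
      refine Finset.sum_congr rfl fun k hk => ?_
      have := Finset.mem_range.mp hk
      rw [show k - n = 0 by omega, add_zero]
    have e2 : ∑ j ∈ Finset.range n, ρ ^ (j - n + (n - j)) = ρ * (1 - ρ ^ n) / (1 - ρ) := by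
      rw [← geo_edge h1]
      refine Finset.sum_congr rfl fun k hk => ?_
      have := Finset.mem_range.mp hk
      rw [show k - n = 0 by omega, zero_add]
    rw [e1, e2]
    push_cast
    simp
    field_simp
    ring

lemma geo_half {ρ : ℝ} (h0 : 0 < ρ) (h1 : ρ < 1) (n : ℕ) :
    ∑ k ∈ Finset.range n, ρ ^ k ≤ 1 / (1 - ρ) := by
  have hp : 0 < 1 - ρ := by linarith
  have h := geom_sum_mul_neg ρ n
  rw [le_div_iff₀ hp, h]
  have := pow_pos h0 n
  linarith

/-- the covariance on the grid of mesh `Δ` -/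
def gridK (θ Δ : ℝ) (i j : ℕ) : ℝ :=
  (Real.exp (-θ * |(j:ℝ) * Δ - i * Δ|) - Real.exp (-θ * (j * Δ + i * Δ))) / (2 * θ)

lemma gridK_eq {θ Δ : ℝ} (hΔ : 0 < Δ) (i j : ℕ) :
    gridK θ Δ i j = (rexp (-θ * Δ) ^ ((j - i) + (i - j)) -
      rexp (-θ * Δ) ^ i * rexp (-θ * Δ) ^ j) / (2 * θ) := by
  rw [gridK]
  congr 2
  · rw [← Real.exp_nat_mul]
    congr 1
    rcases le_total i j with h | h
    · have h' : (i:ℝ) ≤ j := by exact_mod_cast h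
      rw [abs_of_nonneg (by nlinarith), show i - j = 0 by omega, add_zero, Nat.cast_sub h]
      ring
    · have h' : (j:ℝ) ≤ i := by exact_mod_cast h
      rw [abs_of_nonpos (by nlinarith), show j - i = 0 by omega, zero_add, Nat.cast_sub h]
      ring
  · rw [← Real.exp_nat_mul, ← Real.exp_nat_mul, ← Real.exp_add]
    congr 1
    ring

lemma gridK_symm (θ Δ : ℝ) (i j : ℕ) : gridK θ Δ i j = gridK θ Δ j i := by
  rw [gridK, gridK, abs_sub_comm, add_comm ((j:ℝ) * Δ)]

section Grid
variable {θ Δ : ℝ} (hθ : 0 < θ) (hΔ : 0 < Δ)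

include hθ hΔ in
lemma grid_r : 0 < rexp (-θ * Δ) ∧ rexp (-θ * Δ) < 1 :=
  ⟨Real.exp_pos _, by rw [Real.exp_lt_one_iff]; nlinarith [mul_pos hθ hΔ]⟩

include hθ hΔ in
lemma grid_inv (h1 : Δ ≤ 1) : 1 / (1 - rexp (-θ * Δ)) ≤ (1 + θ) / θ / Δ := by
  have hr := grid_r hθ hΔ
  have hx : 0 < θ * Δ := mul_pos hθ hΔ
  have h2 : rexp (-θ * Δ) ≤ 1 / (1 + θ * Δ) := by
    rw [neg_mul, Real.exp_neg, ← one_div]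
    apply one_div_le_one_div_of_le (by linarith)
    linarith [Real.add_one_le_exp (θ * Δ)]
  rw [div_div, div_le_div_iff₀ (by linarith) hx]
  have h3 : rexp (-θ * Δ) * (1 + θ * Δ) ≤ 1 := by
    rwa [le_div_iff₀ (by linarith)] at h2
  have h4 : 0 ≤ (1 - rexp (-θ * Δ)) * θ * (1 - Δ) := by
    have := hr.2
    apply mul_nonneg (mul_nonneg (by linarith) hθ.le) (by linarith)
  nlinarith

include hθ hΔ in
lemma gridK_bounds (i j : ℕ) : 0 ≤ gridK θ Δ i j ∧
    gridK θ Δ i j ≤ rexp (-θ * Δ) ^ ((j - i) + (i - j)) / (2 * θ) ∧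
    gridK θ Δ i j ≤ 1 / (2 * θ) := by
  have hr := grid_r hθ hΔ
  rw [gridK_eq hΔ]
  set r := rexp (-θ * Δ)
  have h1 : r ^ i * r ^ j ≤ r ^ ((j - i) + (i - j)) := by
    rw [← pow_add]
    exact pow_le_pow_of_le_one hr.1.le hr.2.le (by omega)
  have h2 : 0 < r ^ i * r ^ j := mul_pos (pow_pos hr.1 _) (pow_pos hr.1 _)
  have h3 : r ^ ((j - i) + (i - j)) ≤ 1 := pow_le_one₀ hr.1.le hr.2.le
  refine ⟨div_nonneg (by linarith) (by linarith), ?_, ?_⟩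
  · gcongr; linarith
  · gcongr; linarith

include hθ hΔ in
lemma gridK_row (h1 : Δ ≤ 1) (n i : ℕ) :
    ∑ j ∈ Finset.range n, gridK θ Δ i j ≤ (1 + θ) / θ / θ / Δ := by
  have hr := grid_r hθ hΔ
  calc ∑ j ∈ Finset.range n, gridK θ Δ i j
      ≤ ∑ j ∈ Finset.range n, rexp (-θ * Δ) ^ ((j - i) + (i - j)) / (2 * θ) :=
        Finset.sum_le_sum fun j _ => (gridK_bounds hθ hΔ i j).2.1
    _ ≤ 2 / (1 - rexp (-θ * Δ)) / (2 * θ) := by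
        rw [← Finset.sum_div]
        gcongr
        exact geo_row hr.1 hr.2 n i
    _ = 1 / (1 - rexp (-θ * Δ)) / θ := by
        have : 1 - rexp (-θ * Δ) ≠ 0 := by linarith [hr.2]
        field_simp
    _ ≤ (1 + θ) / θ / Δ / θ := by
        exact div_le_div_of_nonneg_right (grid_inv hθ hΔ h1) hθ.le
    _ = _ := by field_simp

include hθ hΔ in
lemma gridK_sq (h1 : Δ ≤ 1) (n : ℕ) (hn : n * Δ * Δ ≤ 1) :
    |Δ ^ 2 * ∑ i ∈ Finset.range n, ∑ j ∈ Finset.range n, gridK θ Δ i j ^ 2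
      - n * Δ / (4 * θ ^ 3)| ≤ (4 * ((1 + θ) / θ) ^ 2 + 1) / (4 * θ ^ 2) := by
  have hr := grid_r hθ hΔ
  have hinv := grid_inv hθ hΔ h1
  have hlow : 1 - 2 * θ * Δ ≤ rexp (-θ * Δ) ^ 2 := by
    rw [← Real.exp_nat_mul]
    have := Real.add_one_le_exp (((2:ℕ):ℝ) * (-θ * Δ))
    push_cast at this ⊢
    linarith
  have hup : rexp (-θ * Δ) ^ 2 * (1 + 2 * θ * Δ) ≤ 1 := by
    have h3 : rexp (-θ * Δ) ^ 2 = (rexp (2 * θ * Δ))⁻¹ := by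
      rw [← Real.exp_nat_mul, ← Real.exp_neg]; congr 1; push_cast; ring
    rw [h3, inv_mul_le_iff₀ (Real.exp_pos _)]
    linarith [Real.add_one_le_exp (2 * θ * Δ)]
  have hE : ∀ i j, gridK θ Δ i j = _ := fun i j => gridK_eq (θ := θ) hΔ i j
  set r := rexp (-θ * Δ) with hrdef
  set A := (1 + θ) / θ with hA
  set q := r ^ 2 with hq
  have hApos : 0 < A := by positivity
  have hq0 : 0 < q := by positivity
  have hqr : q ≤ r := by nlinarith
  have hq1 : q < 1 := by linarith
  have hr1 : 0 < 1 - r := by linarith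
  have hAr : Δ * (1 / (1 - r)) ≤ A := by
    have := mul_le_mul_of_nonneg_left hinv hΔ.le
    rwa [mul_div_cancel₀ _ hΔ.ne'] at this
  have hAq : Δ * (1 / (1 - q)) ≤ A := by
    refine le_trans ?_ hAr
    gcongr
  have hAr0 : 0 ≤ Δ * (1 / (1 - r)) := by positivity
  have hAq0 : 0 ≤ Δ * (1 / (1 - q)) := mul_nonneg hΔ.le (one_div_nonneg.mpr (by linarith))
  -- first part
  have p1 : |∑ i ∈ Finset.range n, ∑ j ∈ Finset.range n, gridK θ Δ i j ^ 2 -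
      (∑ i ∈ Finset.range n, ∑ j ∈ Finset.range n, q ^ ((j - i) + (i - j))) / (4 * θ ^ 2)| ≤
      2 * (1 / (1 - r)) ^ 2 / (4 * θ ^ 2) := by
    rw [Finset.sum_div, ← Finset.sum_sub_distrib]
    have hterm : ∀ i j : ℕ, |gridK θ Δ i j ^ 2 - q ^ ((j - i) + (i - j)) / (4 * θ ^ 2)| ≤
        2 / (4 * θ ^ 2) * (r ^ i * r ^ j) := by
      intro i j
      have hqe : q ^ ((j - i) + (i - j)) = (r ^ ((j - i) + (i - j))) ^ 2 := by
        rw [hq, ← pow_mul, ← pow_mul, mul_comm]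
      rw [hE, hqe]
      have g1 : r ^ i * r ^ j ≤ r ^ ((j - i) + (i - j)) := by
        rw [← pow_add]
        exact pow_le_pow_of_le_one hr.1.le hr.2.le (by omega)
      have g2 : 0 < r ^ i * r ^ j := mul_pos (pow_pos hr.1 _) (pow_pos hr.1 _)
      have g3 : r ^ ((j - i) + (i - j)) ≤ 1 := pow_le_one₀ hr.1.le hr.2.le
      set e := r ^ ((j - i) + (i - j))
      set f := r ^ i * r ^ j
      have : ((e - f) / (2 * θ)) ^ 2 - e ^ 2 / (4 * θ ^ 2) = - ((2 * e - f) * f / (4 * θ ^ 2)) := by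
        field_simp; ring
      rw [this, abs_neg, abs_of_nonneg (by apply div_nonneg (mul_nonneg (by linarith) g2.le);
                                           positivity),
        div_mul_eq_mul_div]
      gcongr
      linarith
    calc _ ≤ ∑ i ∈ Finset.range n, ∑ j ∈ Finset.range n, 2 / (4 * θ ^ 2) * (r ^ i * r ^ j) := by
          refine (Finset.abs_sum_le_sum_abs _ _).trans (Finset.sum_le_sum fun i _ => ?_)
          rw [Finset.sum_div, ← Finset.sum_sub_distrib]
          exact (Finset.abs_sum_le_sum_abs _ _).trans (Finset.sum_le_sum fun j _ => hterm i j)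
      _ = 2 / (4 * θ ^ 2) * ((∑ i ∈ Finset.range n, r ^ i) * (∑ i ∈ Finset.range n, r ^ i)) := by
          rw [Finset.sum_mul_sum, Finset.mul_sum]
          simp_rw [Finset.mul_sum]
      _ ≤ 2 / (4 * θ ^ 2) * ((1 / (1 - r)) * (1 / (1 - r))) := by
          have g := geo_half hr.1 hr.2 n
          have g0 : 0 ≤ ∑ i ∈ Finset.range n, r ^ i := Finset.sum_nonneg fun i _ => (pow_pos hr.1 i).le
          gcongr
      _ = _ := by ring
  rw [geo_tot hq1] at p1
  have p2 : |Δ * ((1 + q) / (1 - q)) - 1 / θ| ≤ Δ := by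
    have hq1' : 0 < 1 - q := by linarith
    have : Δ * ((1 + q) / (1 - q)) - 1 / θ = (Δ * θ * (1 + q) - (1 - q)) / (θ * (1 - q)) := by
      field_simp
    rw [this, abs_div, abs_of_pos (show 0 < θ * (1 - q) by positivity),
      div_le_iff₀ (by positivity), abs_le]
    constructor <;> nlinarith
  have hqn : 0 ≤ q ^ n ∧ q ^ n ≤ 1 := ⟨by positivity, pow_le_one₀ hq0.le hq1.le⟩
  have p3 : |2 * q * (1 - q ^ n) * (Δ * (1 / (1 - q))) ^ 2| ≤ 2 * A ^ 2 := by
    rw [abs_of_nonneg (by apply mul_nonneg _ (sq_nonneg _); apply mul_nonneg _ <;> linarith)]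
    have : (Δ * (1 / (1 - q))) ^ 2 ≤ A ^ 2 := by gcongr
    have g : 2 * q * (1 - q ^ n) ≤ 2 := by nlinarith
    have g' : 0 ≤ 2 * q * (1 - q ^ n) := by apply mul_nonneg _ <;> linarith
    nlinarith [sq_nonneg (Δ * (1 / (1 - q)))]
  have p4 : |n * Δ * (Δ * ((1 + q) / (1 - q)) - 1 / θ)| ≤ 1 := by
    have hnD : 0 ≤ n * Δ := by positivity
    rw [abs_mul, abs_of_nonneg hnD]
    refine le_trans (mul_le_mul_of_nonneg_left p2 hnD) hn
  have p5 : Δ ^ 2 * (2 * (1 / (1 - r)) ^ 2 / (4 * θ ^ 2)) ≤ 2 * A ^ 2 / (4 * θ ^ 2) := by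
    have : (Δ * (1 / (1 - r))) ^ 2 ≤ A ^ 2 := by gcongr
    calc _ = 2 * (Δ * (1 / (1 - r))) ^ 2 / (4 * θ ^ 2) := by ring
      _ ≤ _ := by gcongr
  set S := ∑ i ∈ Finset.range n, ∑ j ∈ Finset.range n, gridK θ Δ i j ^ 2
  have hdec : Δ ^ 2 * S - n * Δ / (4 * θ ^ 3) =
      Δ ^ 2 * (S - (n * ((1 + q) / (1 - q)) - 2 * q * (1 - q ^ n) / (1 - q) ^ 2) / (4 * θ ^ 2)) +
      (n * Δ * (Δ * ((1 + q) / (1 - q)) - 1 / θ)) / (4 * θ ^ 2) -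
      (2 * q * (1 - q ^ n) * (Δ * (1 / (1 - q))) ^ 2) / (4 * θ ^ 2) := by
    have : 1 - q ≠ 0 := by linarith
    field_simp
    ring
  rw [hdec]
  have hpos : 0 < 4 * θ ^ 2 := by positivity
  calc _ ≤ |Δ ^ 2 * (S - (n * ((1 + q) / (1 - q)) - 2 * q * (1 - q ^ n) / (1 - q) ^ 2) /
          (4 * θ ^ 2))| + |(n * Δ * (Δ * ((1 + q) / (1 - q)) - 1 / θ)) / (4 * θ ^ 2)| +
          |(2 * q * (1 - q ^ n) * (Δ * (1 / (1 - q))) ^ 2) / (4 * θ ^ 2)| :=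
        (abs_sub _ _).trans (add_le_add_left (abs_add_le _ _) _)
    _ ≤ 2 * A ^ 2 / (4 * θ ^ 2) + 1 / (4 * θ ^ 2) + 2 * A ^ 2 / (4 * θ ^ 2) := by
        refine add_le_add (add_le_add ?_ ?_) ?_
        · rw [abs_mul, abs_of_nonneg (sq_nonneg Δ)]
          exact (mul_le_mul_of_nonneg_left p1 (sq_nonneg Δ)).trans p5
        · rw [abs_div, abs_of_pos hpos]; gcongr
        · rw [abs_div, abs_of_pos hpos]; gcongr
    _ = _ := by ring

end Grid

/-! ### Centering -/

section Center
variable {n : ℕ} (K : Fin n → Fin n → ℝ)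

/-- doubly centered kernel -/
def cenM (i j : Fin n) : ℝ :=
  K i j - (1 / n) * ∑ k, K i k - (1 / n) * ∑ k, K j k + (1 / n) * ((1 / n) * ∑ k, ∑ l, K k l)

lemma cenM_quad (hs : ∀ i j, K i j = K j i) (x : Fin n → ℝ) :
    ∑ i, ∑ j, (x i - (1 / n) * ∑ k, x k) * (x j - (1 / n) * ∑ k, x k) * K i j =
      ∑ i, ∑ j, cenM K i j * (x i * x j) := by
  set m := (1 / n : ℝ) * ∑ k, x k with hm
  have hE1 : ∑ i, ∑ j, (x i - m) * (x j - m) * K i j =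
      ∑ i, ∑ j, x i * x j * K i j - m * ∑ i, ∑ j, x i * K i j - m * ∑ i, ∑ j, x j * K i j
        + m ^ 2 * ∑ i, ∑ j, K i j := by
    simp_rw [Finset.mul_sum, ← Finset.sum_sub_distrib, ← Finset.sum_add_distrib]
    refine Finset.sum_congr rfl fun i _ => Finset.sum_congr rfl fun j _ => by ring
  have hsw : ∑ i, ∑ j, x j * K i j = ∑ i, ∑ j, x i * K i j := by
    rw [Finset.sum_comm]
    refine Finset.sum_congr rfl fun i _ => Finset.sum_congr rfl fun j _ => by rw [hs]
  have hE2 : ∑ i, ∑ j, cenM K i j * (x i * x j) =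
      ∑ i, ∑ j, x i * x j * K i j - ∑ i, ∑ j, ((1 / n) * ∑ k, K i k) * (x i * x j)
       - ∑ i, ∑ j, ((1 / n) * ∑ k, K j k) * (x i * x j)
       + ∑ i, ∑ j, ((1 / n) * ((1 / n) * ∑ k, ∑ l, K k l)) * (x i * x j) := by
    simp_rw [← Finset.sum_sub_distrib, ← Finset.sum_add_distrib]
    refine Finset.sum_congr rfl fun i _ => Finset.sum_congr rfl fun j _ => by
      rw [cenM]; ring
  have h1 : ∑ i, ∑ j, ((1 / n) * ∑ k, K i k) * (x i * x j) = m * ∑ i, ∑ j, x i * K i j := by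
    rw [hm, mul_assoc, mul_comm (∑ k, x k), Finset.sum_mul, Finset.mul_sum]
    refine Finset.sum_congr rfl fun i _ => ?_
    rw [← Finset.mul_sum, ← Finset.mul_sum, ← Finset.mul_sum]
    ring
  have h2 : ∑ i, ∑ j, ((1 / n) * ∑ k, K j k) * (x i * x j) = m * ∑ i, ∑ j, x i * K i j := by
    rw [Finset.sum_comm, ← h1]
    refine Finset.sum_congr rfl fun i _ => Finset.sum_congr rfl fun j _ => by ring
  have h3 : ∑ i, ∑ j, ((1 / n) * ((1 / n) * ∑ k, ∑ l, K k l)) * (x i * x j) =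
      m ^ 2 * ∑ i, ∑ j, K i j := by
    simp_rw [← Finset.mul_sum]
    rw [← Finset.sum_mul, hm]
    ring
  rw [hE1, hE2, hsw, h1, h2, h3]

lemma cenM_symm (hs : ∀ i j, K i j = K j i) (i j : Fin n) : cenM K i j = cenM K j i := by
  rw [cenM, cenM, hs i j]; ring

lemma cenM_close {R : ℝ} (hK : ∀ i j, 0 ≤ K i j) (hR : ∀ i, ∑ j, K i j ≤ R) (hn : 0 < n)
    (i j : Fin n) : |cenM K i j - K i j| ≤ 3 * R / n := by
  have hn' : (0:ℝ) < n := by exact_mod_cast hn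
  have ha : ∀ i, 0 ≤ (1 / n : ℝ) * ∑ k, K i k ∧ (1 / n : ℝ) * ∑ k, K i k ≤ R / n := by
    intro i
    refine ⟨mul_nonneg (by positivity) (Finset.sum_nonneg fun k _ => hK i k), ?_⟩
    rw [one_div, inv_mul_eq_div]
    gcongr
    exact hR i
  have hb : 0 ≤ (1 / n : ℝ) * ((1 / n) * ∑ k, ∑ l, K k l) ∧
      (1 / n : ℝ) * ((1 / n) * ∑ k, ∑ l, K k l) ≤ R / n := by
    refine ⟨by have := Finset.sum_nonneg fun k (_ : k ∈ Finset.univ) =>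
                 Finset.sum_nonneg fun l (_ : l ∈ Finset.univ) => hK k l
               positivity, ?_⟩
    rw [one_div, inv_mul_eq_div]
    gcongr
    rw [inv_mul_le_iff₀ hn']
    calc _ ≤ ∑ k : Fin n, R := Finset.sum_le_sum fun k _ => hR k
      _ = _ := by simp
  have e : cenM K i j - K i j = - ((1 / n) * ∑ k, K i k) - (1 / n) * ∑ k, K j k
    + (1 / n) * ((1 / n) * ∑ k, ∑ l, K k l) := by rw [cenM]; ring
  have e3 : 3 * R / n = 3 * (R / n) := by ring
  rw [e, e3, abs_le]
  constructor <;> linarith [(ha i).1, (ha i).2, (ha j).1, (ha j).2, hb.1, hb.2]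

lemma cenM_row {R : ℝ} (hK : ∀ i j, 0 ≤ K i j) (hR : ∀ i, ∑ j, K i j ≤ R) (hn : 0 < n)
    (i : Fin n) : ∑ j, |cenM K i j| ≤ 4 * R := by
  have hn' : (0:ℝ) < n := by exact_mod_cast hn
  calc ∑ j, |cenM K i j| ≤ ∑ j, (K i j + 3 * R / n) := by
        refine Finset.sum_le_sum fun j _ => ?_
        have := cenM_close K hK hR hn i j
        have h2 := abs_add_le (cenM K i j - K i j) (K i j)
        rw [sub_add_cancel, abs_of_nonneg (hK i j)] at h2
        linarith
    _ = ∑ j, K i j + 3 * R := by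
        rw [Finset.sum_add_distrib]
        simp
        field_simp
    _ ≤ 4 * R := by linarith [hR i]

lemma cenM_mean {R : ℝ} (hK : ∀ i j, 0 ≤ K i j) (hR : ∀ i, ∑ j, K i j ≤ R) (hn : 0 < n) :
    |∑ i, ∑ j, cenM K i j * K i j - ∑ i, ∑ j, K i j ^ 2| ≤ 3 * R ^ 2 := by
  have hn' : (0:ℝ) < n := by exact_mod_cast hn
  have hR0 : 0 ≤ R := (Finset.sum_nonneg fun j _ => hK ⟨0, hn⟩ j).trans (hR ⟨0, hn⟩)
  rw [← Finset.sum_sub_distrib]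
  calc _ ≤ ∑ i : Fin n, 3 * R / n * R := by
        refine (Finset.abs_sum_le_sum_abs _ _).trans (Finset.sum_le_sum fun i _ => ?_)
        rw [← Finset.sum_sub_distrib]
        calc _ ≤ ∑ j, 3 * R / n * K i j := by
              refine (Finset.abs_sum_le_sum_abs _ _).trans (Finset.sum_le_sum fun j _ => ?_)
              rw [show cenM K i j * K i j - K i j ^ 2 = (cenM K i j - K i j) * K i j by ring,
                abs_mul, abs_of_nonneg (hK i j)]
              exact mul_le_mul_of_nonneg_right (cenM_close K hK hR hn i j) (hK i j)
          _ ≤ _ := by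
              rw [← Finset.mul_sum]
              exact mul_le_mul_of_nonneg_left (hR i) (by positivity)
    _ = 3 * R ^ 2 := by
        simp
        field_simp
end Center

/-! ### Conditioning -/

section Cond
variable {Ω' : Type} [MeasurableSpace Ω'] {P : Measure Ω'} [IsProbabilityMeasure P]

lemma cond_gauss {n : ℕ} {U W : Fin n → Ω' → ℝ} (hU : ∀ i, Measurable (U i))
    (hW : ∀ i, Measurable (W i))
    (hind : IndepFun (fun ω i => U i ω) (fun ω i => W i ω) P)
    (c : (Fin n → ℝ) → Fin n → ℝ) (hc : Measurable c) (V : (Fin n → ℝ) → ℝ) (hV : Measurable V)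
    (hV0 : ∀ u, 0 ≤ V u)
    (hlaw : ∀ u, P.map (fun ω => ∑ j, c u j * W j ω) = gaussianReal 0 (Real.toNNReal (V u)))
    {w : ℝ} (hw : 0 < w) (hI : Integrable (fun ω => |V (fun i => U i ω) - w|) P) (z : ℝ) :
    |(P.map (fun ω => ∑ j, c (fun i => U i ω) j * W j ω)).real (Set.Iic z) -
      (gaussianReal 0 (Real.toNNReal w)).real (Set.Iic z)| ≤
      2 / w * ∫ ω, |V (fun i => U i ω) - w| ∂P := by
  have hUm : Measurable (fun ω i => U i ω) := measurable_pi_lambda _ hU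
  have hWm : Measurable (fun ω i => W i ω) := measurable_pi_lambda _ hW
  have hprod := (indepFun_iff_map_prod_eq_prod_map_map hUm.aemeasurable hWm.aemeasurable).mp hind
  let S : Set ((Fin n → ℝ) × (Fin n → ℝ)) := {p | ∑ j, c p.1 j * p.2 j ≤ z}
  have hcj : ∀ j, Measurable fun u => c u j := fun j => (measurable_pi_apply j).comp hc
  have hS : MeasurableSet S := by
    refine measurableSet_le ?_ measurable_const
    refine Finset.measurable_sum _ fun j _ => ?_
    exact ((hcj j).comp measurable_fst).mul ((measurable_pi_apply j).comp measurable_snd)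
  have hmeas : Measurable (fun ω => ∑ j, c (fun i => U i ω) j * W j ω) :=
    Finset.measurable_sum _ fun j _ => ((hcj j).comp hUm).mul (hW j)
  have haepm : IsProbabilityMeasure (P.map (fun ω i => W i ω)) :=
    Measure.isProbabilityMeasure_map hWm.aemeasurable
  have hslice : ∀ u, (P.map (fun ω i => W i ω)) (Prod.mk u ⁻¹' S) =
      gaussianReal 0 (Real.toNNReal (V u)) (Set.Iic z) := by
    intro u
    rw [← hlaw u, Measure.map_apply hWm (measurable_prodMk_left hS),
      Measure.map_apply (by fun_prop) measurableSet_Iic]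
    rfl
  have h1 : (P.map (fun ω => ∑ j, c (fun i => U i ω) j * W j ω)) (Set.Iic z) =
      ∫⁻ ω, gaussianReal 0 (Real.toNNReal (V (fun i => U i ω))) (Set.Iic z) ∂P := by
    rw [Measure.map_apply hmeas measurableSet_Iic]
    have : (fun ω => ∑ j, c (fun i => U i ω) j * W j ω) ⁻¹' Set.Iic z =
        (fun ω => ((fun i => U i ω), (fun i => W i ω))) ⁻¹' S := rfl
    rw [this, ← Measure.map_apply (hUm.prodMk hWm) hS, hprod, Measure.prod_apply hS,
      lintegral_map (measurable_measure_prodMk_left hS) hUm]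
    simp_rw [hslice]
  have hgm : Measurable (fun ω => gaussianReal 0 (Real.toNNReal (V (fun i => U i ω))) (Set.Iic z)) := by
    have := (measurable_measure_prodMk_left (ν := P.map (fun ω i => W i ω)) hS).comp hUm
    simpa only [Function.comp_def, hslice] using this
  have h2 : (P.map (fun ω => ∑ j, c (fun i => U i ω) j * W j ω)).real (Set.Iic z) =
      ∫ ω, (gaussianReal 0 (Real.toNNReal (V (fun i => U i ω)))).real (Set.Iic z) ∂P := by
    rw [Measure.real, h1]
    exact (integral_toReal hgm.aemeasurable (Eventually.of_forall fun ω => measure_lt_top _ _)).symm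
  have hgI : Integrable (fun ω =>
      (gaussianReal 0 (Real.toNNReal (V (fun i => U i ω)))).real (Set.Iic z)) P := by
    refine Integrable.of_bound (C := 1) hgm.ennreal_toReal.aestronglyMeasurable
      (Eventually.of_forall fun ω => ?_)
    rw [Real.norm_eq_abs, abs_of_nonneg measureReal_nonneg]
    exact measureReal_le_one
  rw [h2]
  have h3 : ∫ ω, (gaussianReal 0 (Real.toNNReal (V (fun i => U i ω)))).real (Set.Iic z) ∂P -
      (gaussianReal 0 (Real.toNNReal w)).real (Set.Iic z) =
      ∫ ω, ((gaussianReal 0 (Real.toNNReal (V (fun i => U i ω)))).real (Set.Iic z) -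
        (gaussianReal 0 (Real.toNNReal w)).real (Set.Iic z)) ∂P := by
    rw [integral_sub hgI (integrable_const _)]
    simp
  rw [h3, ← integral_const_mul]
  refine (abs_integral_le_integral_abs).trans ?_
  refine integral_mono (hgI.sub (integrable_const _)).abs (hI.const_mul _) fun ω => ?_
  refine (gauss_compare (hV0 _) hw z).trans (le_of_eq ?_)
  ring

lemma abs_le_of_sq {f : Ω' → ℝ} (hf : Integrable (fun ω => f ω ^ 2) P) (hm : Measurable f)
    {s : ℝ} (hs : 0 < s) (h : ∫ ω, f ω ^ 2 ∂P ≤ s ^ 2) :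
    Integrable (fun ω => |f ω|) P ∧ ∫ ω, |f ω| ∂P ≤ s := by
  have hp : ∀ x : ℝ, |x| ≤ (1 / (2 * s)) * x ^ 2 + s / 2 := by
    intro x
    have : (1 / (2 * s)) * x ^ 2 + s / 2 - |x| = (|x| - s) ^ 2 / (2 * s) := by
      rw [← sq_abs x]; field_simp; ring
    have h2 : 0 ≤ (|x| - s) ^ 2 / (2 * s) := by positivity
    linarith
  have hI : Integrable (fun ω => (1 / (2 * s)) * f ω ^ 2 + s / 2) P :=
    (hf.const_mul _).add (integrable_const _)
  have hI1 : Integrable (fun ω => |f ω|) P := by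
    refine hI.mono' (by fun_prop) (Eventually.of_forall fun ω => ?_)
    rw [Real.norm_eq_abs, abs_abs]
    exact hp _
  refine ⟨hI1, (integral_mono hI1 hI fun ω => hp _).trans ?_⟩
  rw [integral_add (hf.const_mul _) (integrable_const _), integral_const_mul]
  simp only [integral_const, probReal_univ, one_smul]
  have : (1 / (2 * s)) * ∫ ω, f ω ^ 2 ∂P ≤ (1 / (2 * s)) * s ^ 2 := by gcongr
  have e : (1 / (2 * s)) * s ^ 2 = s / 2 := by field_simp
  linarith

/-- passing to the limit -/
lemma limit_bound {Z : ℕ → Ω' → ℝ} {Y : Ω' → ℝ} (hZ : ∀ n, Measurable (Z n))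
    (hlim : ∀ᵐ ω ∂P, Tendsto (fun n => Z n ω) atTop (𝓝 (Y ω))) {w : ℝ} (hw : 0 < w) {B : ℝ}
    (hB : ∀ᶠ n in atTop, ∀ z, |(P.map (Z n)).real (Set.Iic z) -
      (gaussianReal 0 (Real.toNNReal w)).real (Set.Iic z)| ≤ B) (z : ℝ) :
    |(P.map Y).real (Set.Iic z) - (gaussianReal 0 (Real.toNNReal w)).real (Set.Iic z)| ≤ B := by
  have hYm : AEMeasurable Y P :=
    aemeasurable_of_tendsto_metrizable_ae atTop (fun n => (hZ n).aemeasurable) hlim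
  have hTM := tendstoInMeasure_of_tendsto_ae (fun n => (hZ n).aestronglyMeasurable) hlim
  have hcont := gauss_cdf_cont hw
  set G := fun z => (gaussianReal 0 (Real.toNNReal w)).real (Set.Iic z) with hG
  have hYr : ∀ z, (P.map Y).real (Set.Iic z) = P.real {ω | Y ω ≤ z} := by
    intro z
    rw [Measure.real, Measure.map_apply_of_aemeasurable hYm measurableSet_Iic]; rfl
  have hZr : ∀ n z, (P.map (Z n)).real (Set.Iic z) = P.real {ω | Z n ω ≤ z} := by
    intro n z
    rw [Measure.real, Measure.map_apply (hZ n) measurableSet_Iic]; rfl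
  simp_rw [hZr] at hB
  rw [hYr]
  have hδ : ∀ ε > 0, Tendsto (fun n => P.real {ω | ε ≤ dist (Z n ω) (Y ω)}) atTop (𝓝 0) := by
    intro ε hε
    have := (tendstoInMeasure_iff_dist.mp hTM) ε hε
    have h2 := (ENNReal.tendsto_toReal ENNReal.zero_ne_top).comp this
    rw [ENNReal.toReal_zero] at h2
    exact h2
  have upper : ∀ ε > 0, P.real {ω | Y ω ≤ z} ≤ G (z + ε) + B := by
    intro ε hε
    have h1 : Tendsto (fun n => G (z + ε) + B + P.real {ω | ε ≤ dist (Z n ω) (Y ω)}) atTop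
        (𝓝 (G (z + ε) + B + 0)) := (hδ ε hε).const_add _
    rw [add_zero] at h1
    refine ge_of_tendsto h1 ?_
    filter_upwards [hB] with n hn
    have h2 : {ω | Y ω ≤ z} ⊆ {ω | Z n ω ≤ z + ε} ∪ {ω | ε ≤ dist (Z n ω) (Y ω)} := by
      intro ω hω
      by_contra hcon
      simp only [Set.mem_union, Set.mem_ofPred_eq, not_or, not_le] at hcon hω
      have := hcon.2
      rw [Real.dist_eq, abs_lt] at this
      linarith [hcon.1, this.2]
    have h3 := (measureReal_mono (μ := P) h2).trans (measureReal_union_le _ _)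
    have h4 := (abs_le.mp (hn (z + ε))).2
    simp only [hG]
    linarith
  have lower : ∀ ε > 0, G (z - ε) - B ≤ P.real {ω | Y ω ≤ z} := by
    intro ε hε
    have h1 : Tendsto (fun n => P.real {ω | Y ω ≤ z} + P.real {ω | ε ≤ dist (Z n ω) (Y ω)}) atTop
        (𝓝 (P.real {ω | Y ω ≤ z} + 0)) := (hδ ε hε).const_add _
    rw [add_zero] at h1
    refine ge_of_tendsto h1 ?_
    filter_upwards [hB] with n hn
    have h2 : {ω | Z n ω ≤ z - ε} ⊆ {ω | Y ω ≤ z} ∪ {ω | ε ≤ dist (Z n ω) (Y ω)} := by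
      intro ω hω
      by_contra hcon
      simp only [Set.mem_union, Set.mem_ofPred_eq, not_or, not_le] at hcon hω
      have := hcon.2
      rw [Real.dist_eq, abs_lt] at this
      linarith [hcon.1, this.1]
    have h3 := (measureReal_mono (μ := P) h2).trans (measureReal_union_le _ _)
    have h4 := (abs_le.mp (hn (z - ε))).1
    simp only [hG]
    linarith
  have hu : P.real {ω | Y ω ≤ z} ≤ G z + B := by
    have : Tendsto (fun ε => G (z + ε) + B) (𝓝[>] 0) (𝓝 (G (z + 0) + B)) := by
      apply Tendsto.mono_left _ nhdsWithin_le_nhds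
      exact ((hcont.comp (continuous_const.add continuous_id)).add continuous_const).tendsto 0
    rw [add_zero] at this
    exact ge_of_tendsto this (eventually_mem_nhdsWithin.mono fun ε hε => upper ε hε)
  have hl : G z - B ≤ P.real {ω | Y ω ≤ z} := by
    have : Tendsto (fun ε => G (z - ε) - B) (𝓝[>] 0) (𝓝 (G (z - 0) - B)) := by
      apply Tendsto.mono_left _ nhdsWithin_le_nhds
      exact ((hcont.comp (continuous_const.sub continuous_id)).sub continuous_const).tendsto 0
    rw [sub_zero] at this
    exact le_of_tendsto this (eventually_mem_nhdsWithin.mono fun ε hε => lower ε hε)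
  have e : (gaussianReal 0 (Real.toNNReal w)).real (Set.Iic z) = G z := rfl
  rw [e, abs_le]
  constructor <;> linarith

end Cond

/-- Riemann sums of continuous functions -/
lemma riemann {f : ℝ → ℝ} {T : ℝ} (hT : 0 < T) (hf : ContinuousOn f (Set.Ici 0)) :
    Tendsto (fun n : ℕ => T / n * ∑ k ∈ Finset.range n, f (k * (T / n))) atTop
      (𝓝 (∫ u in (0:ℝ)..T, f u)) := by
  have hfI : ContinuousOn f (Set.Icc 0 T) := hf.mono Set.Icc_subset_Ici_self
  have huc := isCompact_Icc.uniformContinuousOn_of_continuous hfI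
  rw [Metric.uniformContinuousOn_iff_le] at huc
  rw [Metric.tendsto_atTop]
  intro ε hε
  obtain ⟨δ, hδ, hd⟩ := huc (ε / (2 * T)) (by positivity)
  obtain ⟨N, hN⟩ := exists_nat_gt (T / δ)
  refine ⟨N + 1, fun n hn => ?_⟩
  have hn0 : (0:ℝ) < n := by exact_mod_cast (by omega : 0 < n)
  have hNn : (N:ℝ) ≤ n := by exact_mod_cast (by omega : N ≤ n)
  set Δ := T / n with hΔ
  have hΔ0 : 0 < Δ := by positivity
  have hΔδ : Δ ≤ δ := by
    rw [hΔ, div_le_iff₀ hn0]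
    rw [div_lt_iff₀ hδ] at hN
    nlinarith
  have hnΔ : n * Δ = T := by rw [hΔ]; field_simp
  have hsub : ∀ k, k < n → Set.Icc ((k:ℝ) * Δ) ((k + 1 : ℕ) * Δ) ⊆ Set.Icc 0 T := by
    intro k hk x hx
    have h1 : ((k + 1 : ℕ) : ℝ) ≤ n := by exact_mod_cast hk
    refine ⟨le_trans (by positivity) hx.1, hx.2.trans ?_⟩
    rw [← hnΔ]
    gcongr
  have hle : ∀ k : ℕ, (k:ℝ) * Δ ≤ (k + 1 : ℕ) * Δ := by
    intro k; gcongr; simp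
  have hii : ∀ k, k < n → IntervalIntegrable f volume ((k:ℝ) * Δ) ((k + 1 : ℕ) * Δ) := by
    intro k hk
    apply ContinuousOn.intervalIntegrable
    rw [Set.uIcc_of_le (hle k)]
    exact hfI.mono (hsub k hk)
  have hsum := intervalIntegral.sum_integral_adjacent_intervals (f := f) (μ := volume)
    (a := fun k : ℕ => (k:ℝ) * Δ) (n := n) (fun k hk => hii k hk)
  simp only [Nat.cast_zero, zero_mul, hnΔ] at hsum
  rw [← hsum, Real.dist_eq, Finset.mul_sum, ← Finset.sum_sub_distrib]
  have hb : ∀ k ∈ Finset.range n, |Δ * f (k * Δ) - ∫ u in ((k:ℝ) * Δ)..((k + 1 : ℕ) * Δ), f u| ≤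
      ε / (2 * T) * Δ := by
    intro k hk
    have hk' := Finset.mem_range.mp hk
    have e1 : Δ * f (k * Δ) = ∫ u in ((k:ℝ) * Δ)..((k + 1 : ℕ) * Δ), f (k * Δ) := by
      rw [intervalIntegral.integral_const, smul_eq_mul]; push_cast; ring
    rw [e1, ← intervalIntegral.integral_sub (by simp) (hii k hk')]
    have := intervalIntegral.norm_integral_le_of_norm_le_const (a := (k:ℝ) * Δ)
      (b := (k + 1 : ℕ) * Δ) (f := fun u => f (k * Δ) - f u) (C := ε / (2 * T)) (by
        intro x hx
        rw [Set.uIoc_of_le (hle k)] at hx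
        have hx' := hsub k hk' ⟨hx.1.le, hx.2⟩
        have h0' := hsub k hk' ⟨le_refl _, hle k⟩
        rw [← dist_eq_norm]
        apply hd _ h0' _ hx'
        rw [dist_comm, Real.dist_eq, abs_of_nonneg (by linarith [hx.1])]
        have := hx.2
        push_cast at this
        linarith)
    rw [Real.norm_eq_abs] at this
    refine this.trans (le_of_eq ?_)
    rw [abs_of_nonneg (by linarith [hle k])]
    push_cast; ring
  calc _ ≤ ∑ k ∈ Finset.range n, ε / (2 * T) * Δ :=
        (Finset.abs_sum_le_sum_abs _ _).trans (Finset.sum_le_sum hb)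
    _ = ε / 2 := by
        rw [Finset.sum_const, Finset.card_range, nsmul_eq_mul]
        rw [show (n:ℝ) * (ε / (2 * T) * Δ) = ε / (2 * T) * (n * Δ) by ring, hnΔ]
        field_simp
    _ < ε := by linarith

/-! ### The discretised statistic -/

/-- Riemann-sum version of `Y₁₂(T)/√T` -/
def discZ (X : Fin 2 → ℝ → Ω → ℝ) (T : ℝ) (n : ℕ) (ω : Ω) : ℝ :=
  (T / n * ∑ k ∈ Finset.range n, X 0 (k * (T / n)) ω * X 1 (k * (T / n)) ω -
    T * ((1 / T) * (T / n * ∑ k ∈ Finset.range n, X 0 (k * (T / n)) ω)) *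
      ((1 / T) * (T / n * ∑ k ∈ Finset.range n, X 1 (k * (T / n)) ω))) / √T

lemma discZ_meas {θ : ℝ} {X : Fin 2 → ℝ → Ω → ℝ} (hX : IsOUPair θ X) (T : ℝ) (n : ℕ) :
    Measurable (discZ X T n) := by
  have := hX.meas
  unfold discZ
  fun_prop

lemma discZ_tendsto {θ : ℝ} {X : Fin 2 → ℝ → Ω → ℝ} (hX : IsOUPair θ X) {T : ℝ} (hT : 0 < T) :
    ∀ᵐ ω ∂(ℙ : Measure Ω), Tendsto (fun n => discZ X T n ω) atTop
      (𝓝 (ouY X 0 1 T ω / √T)) := by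
  filter_upwards [hX.cont] with ω hω
  have h01 := riemann hT ((hω 0).mul (hω 1))
  have h0 := riemann hT (hω 0)
  have h1 := riemann hT (hω 1)
  exact (h01.sub (((h0.const_mul (1 / T)).const_mul T).mul (h1.const_mul (1 / T)))).div_const _

/-- the constant -/
def bigB (θ : ℝ) : ℝ :=
  ((4 * ((1 + θ) / θ) ^ 2 + 1) / (4 * θ ^ 2) + 3 * ((1 + θ) / θ / θ) ^ 2) ^ 2 +
    32 * (1 / (2 * θ)) * ((1 + θ) / θ / θ) ^ 3

lemma bigB_pos {θ : ℝ} (hθ : 0 < θ) : 0 < bigB θ := by unfold bigB; positivity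

lemma disc_bound {θ : ℝ} (hθ : 0 < θ) [IsProbabilityMeasure (ℙ : Measure Ω)]
    {X : Fin 2 → ℝ → Ω → ℝ} (hX : IsOUPair θ X) {T : ℝ} (hT : 1 ≤ T) (n : ℕ) (hn : T ^ 2 ≤ n)
    (z : ℝ) :
    |(Measure.map (discZ X T n) ℙ).real (Set.Iic z) -
      (gaussianReal 0 (Real.toNNReal (1 / (4 * θ ^ 3)))).real (Set.Iic z)| ≤
      8 * θ ^ 3 * √(bigB θ) / √T := by
  have hT0 : 0 < T := by linarith
  have hn0 : (0:ℝ) < n := by nlinarith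
  have hn1 : 0 < n := by exact_mod_cast hn0
  set Δ := T / n with hΔdef
  have hΔ : 0 < Δ := by positivity
  have hnΔ : n * Δ = T := by rw [hΔdef]; field_simp
  have hΔT : Δ * T ≤ 1 := by
    rw [hΔdef, div_mul_eq_mul_div, div_le_one hn0]; nlinarith
  have hΔ1 : Δ ≤ 1 := by nlinarith
  have hnΔΔ : n * Δ * Δ ≤ 1 := by rw [hnΔ]; linarith
  set U : Fin n → Ω → ℝ := fun k => X 0 (k * Δ) with hU
  set W : Fin n → Ω → ℝ := fun k => X 1 (k * Δ) with hW
  set K : Fin n → Fin n → ℝ := fun i j => gridK θ Δ i j with hK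
  have hUm : ∀ i, Measurable (U i) := fun i => hX.meas 0 _
  have hWm : ∀ i, Measurable (W i) := fun i => hX.meas 1 _
  have hUG : ∀ c : Fin n → ℝ, ∃ v : ℝ≥0, Measure.map (fun ω => ∑ j, c j * U j ω) ℙ
      = gaussianReal 0 v := fun c => hX.gaussian 0 n (fun k => k * Δ) c (fun k => by positivity)
  have hWG : ∀ c : Fin n → ℝ, ∃ v : ℝ≥0, Measure.map (fun ω => ∑ j, c j * W j ω) ℙ
      = gaussianReal 0 v := fun c => hX.gaussian 1 n (fun k => k * Δ) c (fun k => by positivity)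
  have hUK : ∀ i j, ∫ ω, U i ω * U j ω ∂ℙ = K i j := fun i j =>
    hX.cov 0 (i * Δ) (j * Δ) (by positivity) (by positivity)
  have hWK : ∀ i j, ∫ ω, W i ω * W j ω ∂ℙ = K i j := fun i j =>
    hX.cov 1 (i * Δ) (j * Δ) (by positivity) (by positivity)
  have hwick : ∀ i j k l, ∫ ω, U i ω * U j ω * U k ω * U l ω ∂ℙ =
      K i j * K k l + K i k * K j l + K i l * K j k := by
    intro i j k l
    let ix : Fin 4 → Fin n := ![i, j, k, l]
    have := wick4 (P := (ℙ : Measure Ω)) (x := fun a => U (ix a)) (fun a => hUm _)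
      (fun c => hX.gaussian 0 4 (fun a => (ix a) * Δ) c (fun k => by positivity))
      (fun a b => K (ix a) (ix b)) (fun a b => hUK _ _)
    simpa [ix] using this
  have hind : IndepFun (fun ω i => U i ω) (fun ω i => W i ω) ℙ := by
    have hφ : Measurable (fun (p : ℝ → ℝ) (i : Fin n) => p (i * Δ)) :=
      measurable_pi_lambda _ fun i => measurable_pi_apply _
    exact hX.indep.comp hφ hφ
  have hKs : ∀ i j, K i j = K j i := fun i j => gridK_symm θ Δ i j
  have hK0 : ∀ i j, 0 ≤ K i j := fun i j => (gridK_bounds hθ hΔ i j).1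
  set R := (1 + θ) / θ / θ with hRdef
  have hR0 : 0 < R := by positivity
  have hKrow : ∀ i, ∑ j, K i j ≤ R / Δ := by
    intro i
    have := gridK_row hθ hΔ hΔ1 n i
    rwa [Finset.sum_range] at this
  set w := 1 / (4 * θ ^ 3) with hw
  have hw0 : 0 < w := by positivity
  set D := (4 * ((1 + θ) / θ) ^ 2 + 1) / (4 * θ ^ 2) + 3 * R ^ 2 with hD
  have hBdef : bigB θ = D ^ 2 + 32 * (1 / (2 * θ)) * R ^ 3 := rfl
  have hB0 := bigB_pos hθ
  set B := bigB θ
  set M : Fin n → Fin n → ℝ := fun i j => Δ ^ 2 * cenM K i j with hM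
  -- second moment of the conditional variance
  obtain ⟨hQI, hQ⟩ := quad_moment (P := (ℙ : Measure Ω)) (gv_memLp hUm hUG) K hUK hwick M (T * w)
  have hsb := quad_sum_bound K M
    (fun i j => by simp only [hM]; rw [cenM_symm K hKs])
    (1 / (2 * θ)) (R / Δ) (4 * R * Δ)
    (fun i j => by rw [abs_of_nonneg (hK0 i j)]; exact (gridK_bounds hθ hΔ i j).2.2)
    (fun i => by simp_rw [abs_of_nonneg (hK0 i _)]; exact hKrow i)
    (fun i => by
      simp only [hM]
      simp_rw [abs_mul, abs_of_nonneg (sq_nonneg Δ)]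
      rw [← Finset.mul_sum]
      have := mul_le_mul_of_nonneg_left (cenM_row K hK0 hKrow hn1 i) (sq_nonneg Δ)
      refine this.trans (le_of_eq ?_)
      field_simp)
    (by positivity) (by positivity) (by positivity)
  have hsb' : 2 * (n * ((1 / (2 * θ)) * (4 * R * Δ) ^ 2 * (R / Δ))) =
      32 * (1 / (2 * θ)) * R ^ 3 * T := by
    rw [← hnΔ]; field_simp; ring
  have hmean : |∑ i, ∑ j, M i j * K i j - T * w| ≤ D := by
    have h1 := gridK_sq hθ hΔ hΔ1 n hnΔΔ
    rw [Finset.sum_range] at h1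
    simp_rw [Finset.sum_range] at h1
    have h2 := mul_le_mul_of_nonneg_left (cenM_mean K hK0 hKrow hn1) (sq_nonneg Δ)
    have e2 : Δ ^ 2 * (3 * (R / Δ) ^ 2) = 3 * R ^ 2 := by field_simp
    rw [e2] at h2
    have e3 : ∑ i, ∑ j, M i j * K i j - T * w =
        (Δ ^ 2 * ∑ i : Fin n, ∑ j : Fin n, gridK θ Δ i j ^ 2 - n * Δ / (4 * θ ^ 3)) +
        Δ ^ 2 * (∑ i, ∑ j, cenM K i j * K i j - ∑ i, ∑ j, K i j ^ 2) := by
      have : ∑ i, ∑ j, M i j * K i j = Δ ^ 2 * ∑ i, ∑ j, cenM K i j * K i j := by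
        simp_rw [Finset.mul_sum]
        refine Finset.sum_congr rfl fun i _ => Finset.sum_congr rfl fun j _ => ?_
        simp only [hM]; ring
      rw [this, hnΔ, hw]
      simp only [hK]
      ring
    rw [e3, hD]
    refine (abs_add_le _ _).trans (add_le_add h1 ?_)
    rw [abs_mul, abs_of_nonneg (sq_nonneg Δ)]
    exact h2
  have hD2 : (∑ i, ∑ j, M i j * K i j - T * w) ^ 2 ≤ D ^ 2 := by
    rw [← sq_abs]; gcongr
  have hQle : ∫ ω, (∑ i, ∑ j, M i j * (U i ω * U j ω) - T * w) ^ 2 ∂ℙ ≤ (√(B * T)) ^ 2 := by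
    rw [hQ, Real.sq_sqrt (by positivity), hBdef]
    rw [hsb'] at hsb
    nlinarith [sq_nonneg D]
  obtain ⟨hQa, hQb⟩ := abs_le_of_sq (P := (ℙ : Measure Ω)) hQI (by fun_prop)
    (Real.sqrt_pos.mpr (by positivity)) hQle
  -- conditional law
  let c : (Fin n → ℝ) → Fin n → ℝ := fun u j => Δ / √T * (u j - (1 / n) * ∑ k, u k)
  have hc : Measurable c := by
    refine measurable_pi_lambda _ fun j => ?_
    simp only [c]; fun_prop
  let V : (Fin n → ℝ) → ℝ := fun u => ∑ i, ∑ j, c u i * c u j * K i j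
  have hVm : Measurable V := by simp only [V, c]; fun_prop
  have hlaw := fun u => gv_law hWm hWG (c u)
  simp_rw [hWK] at hlaw
  have hVQ : ∀ ω, V (fun i => U i ω) - w =
      (1 / T) * (∑ i, ∑ j, M i j * (U i ω * U j ω) - T * w) := by
    intro ω
    have h1 := cenM_quad K hKs (fun i => U i ω)
    have h2 : V (fun i => U i ω) = Δ ^ 2 / T * ∑ i, ∑ j, cenM K i j * (U i ω * U j ω) := by
      rw [← h1]
      simp only [V, c]
      generalize (1 / (n:ℝ)) * ∑ k, U k ω = m
      rw [Finset.mul_sum]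
      refine Finset.sum_congr rfl fun i _ => ?_
      rw [Finset.mul_sum]
      refine Finset.sum_congr rfl fun j _ => ?_
      have : Δ ^ 2 / T = (Δ / √T) * (Δ / √T) := by
        rw [div_mul_div_comm, Real.mul_self_sqrt hT0.le]; ring
      rw [this]; ring
    have h3 : ∑ i, ∑ j, M i j * (U i ω * U j ω) =
        Δ ^ 2 * ∑ i, ∑ j, cenM K i j * (U i ω * U j ω) := by
      simp_rw [Finset.mul_sum]
      refine Finset.sum_congr rfl fun i _ => Finset.sum_congr rfl fun j _ => ?_
      simp only [hM]; ring
    rw [h2, h3]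
    field_simp
  have habs : ∀ ω, |V (fun i => U i ω) - w| =
      (1 / T) * |∑ i, ∑ j, M i j * (U i ω * U j ω) - T * w| := by
    intro ω
    rw [hVQ, abs_mul, abs_of_pos (by positivity)]
  have hfin := cond_gauss (P := (ℙ : Measure Ω)) hUm hWm hind c hc V hVm (fun u => (hlaw u).1)
    (fun u => (hlaw u).2) hw0 (by simp_rw [habs]; exact hQa.const_mul _) z
  have hZ : discZ X T n = fun ω => ∑ j, c (fun i => U i ω) j * W j ω := by
    funext ω
    rw [discZ]
    simp_rw [← hΔdef]
    rw [Finset.sum_range, Finset.sum_range, Finset.sum_range]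
    have e1 : ∑ j, c (fun i => U i ω) j * W j ω =
        Δ / √T * (∑ j, U j ω * W j ω - (1 / n) * (∑ k, U k ω) * ∑ k, W k ω) := by
      simp only [c]
      generalize (1 / (n:ℝ)) * ∑ k, U k ω = m
      rw [Finset.mul_sum, ← Finset.sum_sub_distrib, Finset.mul_sum]
      refine Finset.sum_congr rfl fun j _ => ?_
      ring
    rw [e1]
    simp only [hU, hW]
    have e2 : (1:ℝ) / n = Δ / T := by rw [hΔdef]; field_simp
    rw [e2]
    have : √T ≠ 0 := (Real.sqrt_pos.mpr hT0).ne'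
    field_simp
  rw [hZ]
  refine hfin.trans ?_
  simp_rw [habs]
  rw [integral_const_mul]
  have hsT : 0 < √T := Real.sqrt_pos.mpr hT0
  calc 2 / w * (1 / T * ∫ ω, |∑ i, ∑ j, M i j * (U i ω * U j ω) - T * w| ∂ℙ)
      ≤ 2 / w * (1 / T * √(B * T)) := by gcongr
    _ = 8 * θ ^ 3 * √B / √T := by
        rw [Real.sqrt_mul hB0.le, hw]
        have : 1 / T * (√B * √T) = √B / √T := by
          rw [div_mul_eq_mul_div, one_mul, div_eq_div_iff hT0.ne' hsT.ne', mul_assoc,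
            Real.mul_self_sqrt hT0.le]
        rw [this]
        field_simp
        norm_num

lemma ou_dKol_bound {θ : ℝ} (hθ : 0 < θ) [IsProbabilityMeasure (ℙ : Measure Ω)]
    {X : Fin 2 → ℝ → Ω → ℝ} (hX : IsOUPair θ X) {T : ℝ} (hT : 1 ≤ T) :
    dKol (Measure.map (fun ω => ouY X 0 1 T ω / Real.sqrt T) ℙ)
          (gaussianReal 0 (Real.toNNReal (1 / (4 * θ ^ 3)))) ≤ 8 * θ ^ 3 * √(bigB θ) / √T := by
  refine ciSup_le fun z => ?_
  refine limit_bound (discZ_meas hX T) (discZ_tendsto hX (by linarith)) (by positivity) ?_ z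
  obtain ⟨N, hN⟩ := exists_nat_ge (T ^ 2)
  filter_upwards [eventually_ge_atTop N] with n hn z
  have : (N:ℝ) ≤ n := by exact_mod_cast hn
  exact disc_bound hθ hX hT n (by linarith) z

/-- there are `C(θ) > 0` and `T₀ ≥ 1` such that for all `T ≥ T₀`,
`d_Kol(Y₁₂(T)/√T, N(0, 1/(4θ³))) ≤ C(θ)·ln(T)/√T`; in particular
`Y₁₂(T)/√T ⇒ N(0, 1/(4θ³))` as `T → ∞`. -/
theorem stmt_6 (θ : ℝ) (hθ : 0 < θ) [IsProbabilityMeasure (ℙ : Measure Ω)]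
    (X : Fin 2 → ℝ → Ω → ℝ) (hX : IsOUPair θ X) :
    (∃ C : ℝ, 0 < C ∧ ∃ T₀ : ℝ, 1 ≤ T₀ ∧ ∀ T : ℝ, T₀ ≤ T →
      dKol (Measure.map (fun ω => ouY X 0 1 T ω / Real.sqrt T) ℙ)
          (gaussianReal 0 (Real.toNNReal (1 / (4 * θ ^ 3))))
        ≤ C * Real.log T / Real.sqrt T) ∧
    Tendsto (fun T : ℝ =>
        dKol (Measure.map (fun ω => ouY X 0 1 T ω / Real.sqrt T) ℙ)
          (gaussianReal 0 (Real.toNNReal (1 / (4 * θ ^ 3))))) atTop (𝓝 0) := by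
  set C := 8 * θ ^ 3 * √(bigB θ) with hC
  have hB := bigB_pos hθ
  have hC0 : 0 < C := by positivity
  have key : ∀ T : ℝ, Real.exp 1 ≤ T →
      dKol (Measure.map (fun ω => ouY X 0 1 T ω / Real.sqrt T) ℙ)
          (gaussianReal 0 (Real.toNNReal (1 / (4 * θ ^ 3)))) ≤ C / Real.sqrt T :=
    fun T hT => ou_dKol_bound hθ hX ((Real.one_le_exp (by norm_num)).trans hT)
  refine ⟨⟨C, hC0, Real.exp 1, Real.one_le_exp (by norm_num), fun T hT => ?_⟩, ?_⟩
  · refine (key T hT).trans ?_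
    have hl : 1 ≤ Real.log T := (Real.le_log_iff_exp_le ((Real.exp_pos 1).trans_le hT)).mpr hT
    gcongr
    nlinarith
  · refine squeeze_zero' (g := fun T => C / Real.sqrt T) (Eventually.of_forall fun T => ?_) ?_ ?_
    · exact Real.iSup_nonneg fun z => abs_nonneg _
    · filter_upwards [eventually_ge_atTop (Real.exp 1)] with T hT using key T hT
    · exact Real.tendsto_sqrt_atTop.const_div_atTop C

end
end

section
/- For every θ > 0 there exist a constant c(θ) > 0 and T₀ ≥ 1, depending only on θ, such that for all T ≥ T₀, d_Kol(√θ · √T · ρ(T), N(0,1)) ≤ c(θ) · ln(T)/√T. In particular, √θ · √T · ρ(T) converges in distribution to N(0,1) as T → ∞. -/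
open MeasureTheory ProbabilityTheory Real Filter Finset
open scoped Topology ENNReal NNReal

noncomputable section

variable {Ω : Type} [MeasureSpace Ω]

/-- standard normal cdf -/
def ouPhi (z : ℝ) : ℝ := (gaussianReal 0 1).real (Set.Iic z)

lemma ouPhi_diff {a b M : ℝ} (hab : a ≤ b) (hM : ∀ x ∈ Set.Ioc a b, gaussianPDFReal 0 1 x ≤ M) :
    0 ≤ ouPhi b - ouPhi a ∧ ouPhi b - ouPhi a ≤ M * (b - a) := by
  have h1 : ouPhi b - ouPhi a = (gaussianReal 0 1).real (Set.Ioc a b) := by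
    unfold ouPhi
    rw [← Set.Iic_union_Ioc_eq_Iic hab, measureReal_union _ measurableSet_Ioc]
    · ring
    · exact Set.Iic_disjoint_Ioc le_rfl
  rw [h1]
  refine ⟨measureReal_nonneg, ?_⟩
  rw [measureReal_def, gaussianReal_apply_eq_integral 0 one_ne_zero, ENNReal.toReal_ofReal]
  · calc ∫ x in Set.Ioc a b, gaussianPDFReal 0 1 x ≤ ∫ x in Set.Ioc a b, M := by
          apply setIntegral_mono_on
          · exact (integrable_gaussianPDFReal 0 1).integrableOn
          · simp
          · exact measurableSet_Ioc
          · exact hM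
      _ = M * (b - a) := by
          simp [measureReal_def, hab, mul_comm]
  · exact setIntegral_nonneg measurableSet_Ioc (fun x _ => gaussianPDFReal_nonneg 0 1 x)

lemma ouPdf_le (x : ℝ) : gaussianPDFReal 0 1 x ≤ exp (-x ^ 2 / 2) := by
  rw [gaussianPDFReal_def]
  have : (√(2 * π * (1:ℝ≥0)))⁻¹ ≤ 1 := by
    apply inv_le_one_of_one_le₀
    rw [Real.one_le_sqrt]
    have := Real.pi_gt_three
    simp; linarith
  calc _ ≤ 1 * exp (-(x - 0) ^ 2 / (2 * (1:ℝ≥0))) :=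
        mul_le_mul_of_nonneg_right this (Real.exp_pos _).le
    _ = _ := by simp

lemma ouPhi_mono {a b : ℝ} (h : a ≤ b) : ouPhi a ≤ ouPhi b :=
  measureReal_mono (Set.Iic_subset_Iic.2 h)

lemma ouPhi_lip {a b : ℝ} (h : a ≤ b) : ouPhi b ≤ ouPhi a + (b - a) := by
  have := (ouPhi_diff (M := 1) h (fun x _ => (ouPdf_le x).trans (by
    rw [Real.exp_le_one_iff]; nlinarith [sq_nonneg x]))).2
  linarith

lemma ouPhi_scale {a z : ℝ} (h : |a - 1| ≤ 1 / 2) : |ouPhi (a * z) - ouPhi z| ≤ 2 * |a - 1| := by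
  have hb := abs_le.1 h
  have key : ∀ x : ℝ, z ^ 2 / 4 ≤ x ^ 2 → gaussianPDFReal 0 1 x ≤ 1 / (1 + z ^ 2 / 8) := by
    intro x hx
    refine (ouPdf_le x).trans ?_
    have h2 : exp (-x ^ 2 / 2) ≤ exp (-(z ^ 2 / 8)) := by
      apply Real.exp_le_exp.2; linarith
    refine h2.trans ?_
    rw [Real.exp_neg, one_div]
    apply inv_anti₀ (by positivity)
    linarith [Real.add_one_le_exp (z ^ 2 / 8)]
  have fin : 1 / (1 + z ^ 2 / 8) * (|a - 1| * |z|) ≤ 2 * |a - 1| := by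
    rw [div_mul_eq_mul_div, div_le_iff₀ (by positivity)]
    have : |z| ≤ 2 * (1 + z ^ 2 / 8) := by
      rw [← sq_abs z]; nlinarith [sq_nonneg (|z| - 2), abs_nonneg z]
    nlinarith [abs_nonneg (a - 1), mul_le_mul_of_nonneg_left this (abs_nonneg (a - 1))]
  have habs : |a * z - z| = |a - 1| * |z| := by rw [← abs_mul]; congr 1; ring
  rcases le_total z (a * z) with hz | hz
  · obtain ⟨h1, h2⟩ := ouPhi_diff (M := 1 / (1 + z ^ 2 / 8)) hz (fun x hx => key x (by
      rcases le_total 0 z with h0 | h0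
      · nlinarith [hx.1, hx.2]
      · have : x ≤ z / 2 := by nlinarith [hx.2]
        nlinarith))
    rw [abs_of_nonneg h1]
    rw [abs_of_nonneg (by linarith)] at habs
    rw [habs] at h2
    linarith
  · obtain ⟨h1, h2⟩ := ouPhi_diff (M := 1 / (1 + z ^ 2 / 8)) hz (fun x hx => key x (by
      rcases le_total 0 z with h0 | h0
      · have : z / 2 ≤ x := by nlinarith [hx.1]
        nlinarith
      · nlinarith [hx.1, hx.2]))
    rw [abs_sub_comm, abs_of_nonneg h1]
    rw [abs_sub_comm, abs_of_nonneg (by linarith)] at habs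
    rw [habs] at h2
    linarith

lemma ou_exp_bound {y : ℝ} (h : |y| ≤ 1 / 4) : (1 - y)⁻¹ ≤ exp (y + y ^ 2) := by
  have hb := abs_le.1 h
  rw [inv_le_iff_one_le_mul₀ (by linarith)]
  rcases le_total 0 y with h0 | h0
  · have := Real.quadratic_le_exp_of_nonneg (show 0 ≤ y + y ^ 2 by positivity)
    have h1 : (1 + (y + y ^ 2) + (y + y ^ 2) ^ 2 / 2) * (1 - y) ≤ exp (y + y ^ 2) * (1 - y) :=
      mul_le_mul_of_nonneg_right this (by linarith)
    refine le_trans ?_ h1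
    have h2 : 0 ≤ y ^ 2 * (1 / 2 - y / 2 * (1 + y + y^2)) := by
      apply mul_nonneg (sq_nonneg y); nlinarith
    nlinarith [h2]
  · have := Real.add_one_le_exp (y + y ^ 2)
    have h1 : (y + y ^ 2 + 1) * (1 - y) ≤ exp (y + y ^ 2) * (1 - y) :=
      mul_le_mul_of_nonneg_right this (by linarith)
    refine le_trans ?_ h1
    nlinarith [mul_nonneg (sq_nonneg y) (neg_nonneg.2 h0)]

lemma ou_chi_fun (s x : ℝ) : gaussianPDFReal 0 1 x * exp (s * (x ^ 2 - 1))
    = ((√(2 * π))⁻¹ * exp (-s)) * exp (-(1 / 2 - s) * x ^ 2) := by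
  rw [gaussianPDFReal_def]
  simp only [NNReal.coe_one, mul_one, sub_zero]
  rw [mul_assoc, mul_assoc, ← Real.exp_add, ← Real.exp_add]
  congr 2; ring

lemma ou_chi_integrable {s : ℝ} (h : |s| ≤ 1 / 8) :
    Integrable (fun x => exp (s * (x ^ 2 - 1))) (gaussianReal 0 1) := by
  have hb := abs_le.1 h
  rw [gaussianReal_of_var_ne_zero 0 one_ne_zero, gaussianPDF_def,
    integrable_withDensity_iff_integrable_smul₀']
  · simp only [ENNReal.toReal_ofReal (gaussianPDFReal_nonneg 0 1 _), smul_eq_mul, ou_chi_fun]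
    exact (integrable_exp_neg_mul_sq (by linarith)).const_mul _
  · exact (measurable_gaussianPDFReal 0 1).ennreal_ofReal.aemeasurable
  · simp

lemma ou_chi_mgf {s : ℝ} (h : |s| ≤ 1 / 8) :
    ∫ x, exp (s * (x ^ 2 - 1)) ∂(gaussianReal 0 1) ≤ exp (2 * s ^ 2) := by
  have hb := abs_le.1 h
  rw [integral_gaussianReal_eq_integral_smul one_ne_zero]
  simp only [smul_eq_mul, ou_chi_fun]
  rw [integral_const_mul, integral_gaussian]
  have h1 : (√(2 * π))⁻¹ * exp (-s) * √(π / (1 / 2 - s)) = exp (-s) * √((1 - 2 * s)⁻¹) := by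
    have : π / (1 / 2 - s) = (2 * π) * (1 - 2 * s)⁻¹ := by
      rw [div_eq_mul_inv, show (1 / 2 - s) = (1 - 2 * s) / 2 by ring, inv_div]; 
      rw [div_eq_mul_inv]; ring
    rw [this, Real.sqrt_mul (show (0:ℝ) ≤ 2 * π by positivity)]
    have : √(2 * π) ≠ 0 := by positivity
    rw [mul_comm (√(2 * π))⁻¹, mul_assoc, inv_mul_cancel_left₀ this]
  rw [h1]
  have h2 : √((1 - 2 * s)⁻¹) ≤ exp (s + 2 * s ^ 2) := by
    rw [Real.sqrt_le_left (by positivity), ← Real.exp_nat_mul]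
    refine (ou_exp_bound (y := 2 * s) (by rw [abs_mul]; norm_num; linarith)).trans (le_of_eq ?_)
    congr 1; push_cast; ring
  calc exp (-s) * √((1 - 2 * s)⁻¹) ≤ exp (-s) * exp (s + 2 * s ^ 2) := by gcongr
    _ = _ := by rw [← Real.exp_add]; congr 1; ring

/-- standard Gaussian measure on `ℝⁿ`. -/
def ouNu (n : ℕ) : Measure (Fin n → ℝ) := Measure.pi (fun _ => gaussianReal 0 1)

instance (n : ℕ) : IsProbabilityMeasure (ouNu n) := by unfold ouNu; infer_instance

lemma ou_conc_one {n : ℕ} (a : Fin n → ℝ) {t u : ℝ} (ht : 0 ≤ t) (ha : ∀ i, |t * a i| ≤ 1 / 8) :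
    (ouNu n).real {h | u ≤ ∑ i, a i * (h i ^ 2 - 1)}
      ≤ exp (-t * u + 2 * t ^ 2 * ∑ i, a i ^ 2) := by
  have hf : (fun h : Fin n → ℝ => exp (t * ∑ i, a i * (h i ^ 2 - 1)))
      = fun h => ∏ i, (fun i x => exp ((t * a i) * (x ^ 2 - 1))) i (h i) := by
    ext h
    rw [Finset.mul_sum, Real.exp_sum]
    simp only [mul_assoc]
  have hIntg : Integrable (fun h : Fin n → ℝ => exp (t * ∑ i, a i * (h i ^ 2 - 1))) (ouNu n) := by
    rw [hf]
    exact Integrable.fintype_prod (fun i => ou_chi_integrable (ha i))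
  refine (measure_ge_le_exp_mul_mgf u ht hIntg).trans ?_
  rw [Real.exp_add]
  gcongr
  unfold mgf
  rw [hf]
  unfold ouNu
  rw [integral_fintype_prod_eq_prod (fun i x => exp ((t * a i) * (x ^ 2 - 1)))]
  calc _ ≤ ∏ i, exp (2 * (t * a i) ^ 2) := by
        apply Finset.prod_le_prod
        · intro i _; exact integral_nonneg (fun x => (Real.exp_pos _).le)
        · intro i _; exact ou_chi_mgf (ha i)
    _ = _ := by
        rw [← Real.exp_sum, Finset.mul_sum]
        congr 1; apply Finset.sum_congr rfl; intro i _; ring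

lemma ou_conc {n : ℕ} (a : Fin n → ℝ) {t u : ℝ} (ht : 0 ≤ t) (ha : ∀ i, |t * a i| ≤ 1 / 8) :
    (ouNu n).real {h | u ≤ |∑ i, a i * h i ^ 2 - ∑ i, a i|}
      ≤ 2 * exp (-t * u + 2 * t ^ 2 * ∑ i, a i ^ 2) := by
  have h1 := ou_conc_one a (u := u) ht ha
  have h2 := ou_conc_one (fun i => - a i) (u := u) ht (by simpa using ha)
  have hsub : {h : Fin n → ℝ | u ≤ |∑ i, a i * h i ^ 2 - ∑ i, a i|} ⊆
      {h | u ≤ ∑ i, a i * (h i ^ 2 - 1)} ∪ {h | u ≤ ∑ i, (- a i) * (h i ^ 2 - 1)} := by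
    intro h hh
    have e1 : ∑ i, a i * (h i ^ 2 - 1) = ∑ i, a i * h i ^ 2 - ∑ i, a i := by
      rw [← Finset.sum_sub_distrib]; apply Finset.sum_congr rfl; intros; ring
    have e2 : ∑ i, (-a i) * (h i ^ 2 - 1) = -(∑ i, a i * h i ^ 2 - ∑ i, a i) := by
      rw [← e1, ← Finset.sum_neg_distrib]; apply Finset.sum_congr rfl; intros; ring
    simp only [Set.mem_ofPred_eq, Set.mem_union, e1, e2] at hh ⊢
    exact le_abs.1 hh
  refine (measureReal_mono hsub).trans ((measureReal_union_le _ _).trans ?_)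
  simp only [neg_sq] at h2
  linarith

lemma ou_lin_charFun {n : ℕ} (a : Fin n → ℝ) (t : ℝ) :
    ∫ k, Complex.exp (t * (∑ i, a i * k i : ℝ) * Complex.I) ∂(ouNu n)
      = Complex.exp (-(∑ i, a i ^ 2 : ℝ) * t ^ 2 / 2) := by
  have hf : (fun k : Fin n → ℝ => Complex.exp (t * (∑ i, a i * k i : ℝ) * Complex.I))
      = fun k => ∏ i, (fun i (x : ℝ) => Complex.exp ((t * a i : ℝ) * x * Complex.I)) i (k i) := by
    ext k
    rw [← Complex.exp_sum]
    congr 1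
    push_cast
    rw [Finset.mul_sum, Finset.sum_mul]
    apply Finset.sum_congr rfl; intros; ring
  rw [hf]
  unfold ouNu
  rw [integral_fintype_prod_eq_prod
    (fun i (x : ℝ) => Complex.exp ((t * a i : ℝ) * x * Complex.I))]
  have : ∀ i, ∫ x : ℝ, Complex.exp ((t * a i : ℝ) * x * Complex.I) ∂(gaussianReal 0 1)
      = Complex.exp (-(t * a i) ^ 2 / 2) := by
    intro i
    have := charFun_gaussianReal (μ := 0) (v := 1) (t * a i)
    rw [charFun_apply_real] at this
    rw [this]; congr 1; push_cast; ring
  simp only [this]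
  rw [← Complex.exp_sum]
  congr 1
  push_cast
  rw [← Finset.sum_neg_distrib, Finset.sum_mul, Finset.sum_div]
  apply Finset.sum_congr rfl; intros; ring

lemma ou_lin_law {n : ℕ} (a : Fin n → ℝ) :
    Measure.map (fun k : Fin n → ℝ => ∑ i, a i * k i) (ouNu n)
      = gaussianReal 0 (Real.toNNReal (∑ i, a i ^ 2)) := by
  have hm : Measurable (fun k : Fin n → ℝ => ∑ i, a i * k i) := by fun_prop
  have : IsProbabilityMeasure (Measure.map (fun k : Fin n → ℝ => ∑ i, a i * k i) (ouNu n)) :=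
    Measure.isProbabilityMeasure_map hm.aemeasurable
  apply Measure.ext_of_charFun
  ext t
  rw [charFun_apply_real, integral_map hm.aemeasurable (by fun_prop), ou_lin_charFun,
    charFun_gaussianReal]
  congr 1
  rw [show ((Real.toNNReal (∑ i, a i ^ 2) : ℝ≥0) : ℂ) = ((∑ i, a i ^ 2 : ℝ) : ℂ) by
    rw [← Real.coe_toNNReal (∑ i, a i ^ 2) (by positivity)]; simp]
  simp; ring

lemma ou_lin_cdf {n : ℕ} (a : Fin n → ℝ) (w : ℝ) (ha : 0 < ∑ i, a i ^ 2) :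
    (ouNu n).real {k | ∑ i, a i * k i ≤ w * √(∑ i, a i ^ 2)} = (gaussianReal 0 1).real (Set.Iic w) := by
  have hm : Measurable (fun k : Fin n → ℝ => ∑ i, a i * k i) := by fun_prop
  have hs : 0 < √(∑ i, a i ^ 2) := Real.sqrt_pos.2 ha
  have hg : gaussianReal 0 1 = Measure.map (fun x => x / √(∑ i, a i ^ 2))
      (Measure.map (fun k : Fin n → ℝ => ∑ i, a i * k i) (ouNu n)) := by
    rw [ou_lin_law, gaussianReal_map_div_const]
    congr 1
    · simp
    · ext
      simp [Real.sq_sqrt ha.le, ha.le, ha.ne']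
  rw [hg, Measure.map_map (by fun_prop) hm, measureReal_def, measureReal_def,
    Measure.map_apply (by fun_prop) measurableSet_Iic]
  congr 2
  ext k
  simp [div_le_iff₀ hs]

lemma ou_prod_cdf {n : ℕ} (m : Fin n → ℝ) (w : ℝ) (hm : 0 < ∑ i, m i ^ 2) :
    ((ouNu n).prod (ouNu n)).real
      {p | ∑ i, m i * p.1 i * p.2 i ≤ w * √(∑ i, m i ^ 2 * p.1 i ^ 2)} = ouPhi w := by
  have hae : ∀ᵐ h ∂(ouNu n), 0 < ∑ i, (m i * h i) ^ 2 := by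
    obtain ⟨i, -, hi⟩ := Finset.exists_ne_zero_of_sum_ne_zero hm.ne'
    have hi' : m i ≠ 0 := fun h => hi (by simp [h])
    have hna := nullSingletonClass_gaussianReal (μ := 0) (v := 1) one_ne_zero
    have : ∀ᵐ h ∂(ouNu n), h i ≠ 0 := by
      unfold ouNu
      exact Measure.ae_eval_ne (μ := fun _ : Fin n => gaussianReal 0 1) i 0
    filter_upwards [this] with h hh
    have h1 : 0 < (m i * h i) ^ 2 := by positivity
    exact lt_of_lt_of_le h1 (Finset.single_le_sum (f := fun i => (m i * h i) ^ 2)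
      (fun j _ => sq_nonneg _) (Finset.mem_univ i))
  have hmeas : MeasurableSet {p : (Fin n → ℝ) × (Fin n → ℝ) |
      ∑ i, m i * p.1 i * p.2 i ≤ w * √(∑ i, m i ^ 2 * p.1 i ^ 2)} := by
    apply measurableSet_le <;> fun_prop
  rw [measureReal_def, Measure.prod_apply hmeas]
  have : ∫⁻ h, (ouNu n) (Prod.mk h ⁻¹' {p : (Fin n → ℝ) × (Fin n → ℝ) |
      ∑ i, m i * p.1 i * p.2 i ≤ w * √(∑ i, m i ^ 2 * p.1 i ^ 2)}) ∂(ouNu n)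
      = ∫⁻ h, (gaussianReal 0 1) (Set.Iic w) ∂(ouNu n) := by
    apply lintegral_congr_ae
    filter_upwards [hae] with h hh
    have := ou_lin_cdf (fun i => m i * h i) w hh
    rw [measureReal_def, measureReal_def, ENNReal.toReal_eq_toReal_iff' (measure_ne_top _ _)
      (measure_ne_top _ _)] at this
    rw [← this]
    congr 1
    ext k
    simp [mul_pow]
  rw [this]
  simp [ouPhi, measureReal_def]

set_option maxHeartbeats 1000000 in
/-- deterministic comparison on the good event -/
lemma ou_good {θ T A B V N η z : ℝ} (hθ : 0 < θ) (hT : 0 < T) (hη : η ≤ 1 / 32)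
    (hA : |A - T / (2 * θ)| ≤ η * (T / (2 * θ))) (hB : |B - T / (2 * θ)| ≤ η * (T / (2 * θ)))
    (hV : |V - T / (4 * θ ^ 3)| ≤ η * (T / (4 * θ ^ 3))) :
    (N ≤ min (z / (1 - 8 * η)) (z / (1 + 8 * η)) * √V → √θ * √T * (N / √(A * B)) ≤ z) ∧
    (√θ * √T * (N / √(A * B)) ≤ z → N ≤ max (z / (1 - 8 * η)) (z / (1 + 8 * η)) * √V) := by
  set p := T / (2 * θ) with hp
  set q := T / (4 * θ ^ 3) with hq
  have hp0 : 0 < p := by positivity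
  have hq0 : 0 < q := by positivity
  have hη0 : 0 ≤ η := by
    by_contra h
    have := (abs_nonneg _).trans hA
    nlinarith
  obtain ⟨hA1, hA2⟩ := abs_le.1 hA
  obtain ⟨hB1, hB2⟩ := abs_le.1 hB
  obtain ⟨hV1, hV2⟩ := abs_le.1 hV
  have hA0 : 0 < A := by nlinarith
  have hB0 : 0 < B := by nlinarith
  have hV0 : 0 < V := by nlinarith
  have hpq : θ * T * q = p ^ 2 := by rw [hp, hq]; field_simp; ring
  set R := θ * T * V / (A * B) with hR
  have hR0 : 0 < R := by positivity
  have hABl : (1 - η) ^ 2 * p ^ 2 ≤ A * B := by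
    have : ((1 - η) * p) * ((1 - η) * p) ≤ A * B :=
      mul_le_mul (by linarith) (by linarith) (by apply mul_nonneg <;> linarith) hA0.le
    nlinarith
  have hABu : A * B ≤ (1 + η) ^ 2 * p ^ 2 := by
    have : A * B ≤ ((1 + η) * p) * ((1 + η) * p) :=
      mul_le_mul (by linarith) (by linarith) hB0.le (by positivity)
    nlinarith
  have hVl : (1 - η) * p ^ 2 ≤ θ * T * V := by
    rw [← hpq]
    have : θ * T * ((1 - η) * q) ≤ θ * T * V :=
      mul_le_mul_of_nonneg_left (by linarith) (by positivity)
    linarith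
  have hVu : θ * T * V ≤ (1 + η) * p ^ 2 := by
    rw [← hpq]
    have : θ * T * V ≤ θ * T * ((1 + η) * q) :=
      mul_le_mul_of_nonneg_left (by linarith) (by positivity)
    linarith
  have hp2 : 0 < p ^ 2 := by positivity
  have hRu : R ≤ (1 + 8 * η) ^ 2 := by
    rw [hR, div_le_iff₀ (by positivity)]
    have h1 : (1 + 8 * η) ^ 2 * ((1 - η) ^ 2 * p ^ 2) ≤ (1 + 8 * η) ^ 2 * (A * B) := by gcongr
    have h2 : 1 + η ≤ (1 + 8 * η) ^ 2 * (1 - η) ^ 2 := by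
      have : 1 + 6 * η ≤ (1 + 8 * η) * (1 - η) := by nlinarith
      have h3 : (1 + 6 * η) ^ 2 ≤ ((1 + 8 * η) * (1 - η)) ^ 2 := by gcongr
      nlinarith
    nlinarith [mul_le_mul_of_nonneg_right h2 hp2.le]
  have hRl : (1 - 8 * η) ^ 2 ≤ R := by
    rw [hR, le_div_iff₀ (by positivity)]
    have h1 : (1 - 8 * η) ^ 2 * (A * B) ≤ (1 - 8 * η) ^ 2 * ((1 + η) ^ 2 * p ^ 2) := by gcongr
    have h2 : (1 - 8 * η) ^ 2 * (1 + η) ^ 2 ≤ 1 - η := by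
      have : (1 - 8 * η) * (1 + η) ≤ 1 - 7 * η := by nlinarith
      have h3 : ((1 - 8 * η) * (1 + η)) ^ 2 ≤ (1 - 7 * η) ^ 2 := by
        apply pow_le_pow_left₀ _ this
        apply mul_nonneg <;> linarith
      nlinarith
    nlinarith [mul_le_mul_of_nonneg_right h2 hp2.le]
  have hau : √R ≤ 1 + 8 * η := Real.sqrt_le_iff.2 ⟨by linarith, hRu⟩
  have hal : 1 - 8 * η ≤ √R := Real.le_sqrt_of_sq_le hRl
  have hsV : 0 < √V := Real.sqrt_pos.2 hV0
  have ha0 : 0 < √R := Real.sqrt_pos.2 hR0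
  have hZ : √θ * √T * (N / √(A * B)) = N / √V * √R := by
    rw [hR, Real.sqrt_div (by positivity), Real.sqrt_mul (show 0 ≤ θ * T by positivity) V,
      Real.sqrt_mul hθ.le]
    have : √(A * B) ≠ 0 := (Real.sqrt_pos.2 (by positivity)).ne'
    field_simp
  rw [hZ, ← le_div_iff₀ ha0, div_le_iff₀ hsV]
  have hd : 0 < 1 - 8 * η := by linarith
  have hd' : 0 < 1 + 8 * η := by linarith
  constructor
  · intro h
    refine h.trans (mul_le_mul_of_nonneg_right ?_ hsV.le)
    rcases le_total 0 z with hz | hz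
    · exact (min_le_right _ _).trans (by gcongr)
    · refine (min_le_left _ _).trans ?_
      rw [div_le_div_iff₀ hd ha0]; nlinarith
  · intro h
    refine h.trans (mul_le_mul_of_nonneg_right ?_ hsV.le)
    rcases le_total 0 z with hz | hz
    · refine le_trans ?_ (le_max_left _ _)
      gcongr
    · refine le_trans ?_ (le_max_right _ _)
      rw [div_le_div_iff₀ ha0 hd']; nlinarith

lemma ouPhi_minmax {η z : ℝ} (h0 : 0 ≤ η) (hη : η ≤ 1 / 32) :
    ouPhi (max (z / (1 - 8 * η)) (z / (1 + 8 * η))) ≤ ouPhi z + 32 * η ∧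
    ouPhi z - 32 * η ≤ ouPhi (min (z / (1 - 8 * η)) (z / (1 + 8 * η))) := by
  have hd : 0 < 1 - 8 * η := by linarith
  have hd' : 0 < 1 + 8 * η := by linarith
  have e1 : |(1 - 8 * η)⁻¹ - 1| ≤ 16 * η := by
    have : (1 - 8 * η)⁻¹ - 1 = 8 * η / (1 - 8 * η) := by field_simp; ring
    rw [this, abs_of_nonneg (by positivity), div_le_iff₀ hd]; nlinarith
  have e2 : |(1 + 8 * η)⁻¹ - 1| ≤ 16 * η := by
    have : (1 + 8 * η)⁻¹ - 1 = -(8 * η / (1 + 8 * η)) := by field_simp; ring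
    rw [this, abs_neg, abs_of_nonneg (by positivity), div_le_iff₀ hd']; nlinarith
  have h1 := ouPhi_scale (z := z) (e1.trans (by linarith))
  have h2 := ouPhi_scale (z := z) (e2.trans (by linarith))
  rw [← div_eq_inv_mul] at h1 h2
  have h1' := abs_le.1 h1
  have h2' := abs_le.1 h2
  constructor
  · rcases max_choice (z / (1 - 8 * η)) (z / (1 + 8 * η)) with h | h <;> rw [h] <;> linarith
  · rcases min_choice (z / (1 - 8 * η)) (z / (1 + 8 * η)) with h | h <;> rw [h] <;> linarith

set_option maxHeartbeats 2000000 in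
lemma ou_diag (θ C : ℝ) (hθ : 0 < θ) (hC : 0 < C) :
    ∃ c : ℝ, 0 < c ∧ ∃ T₀ : ℝ, 1 ≤ T₀ ∧ ∀ T : ℝ, T₀ ≤ T → ∀ (n : ℕ) (m : Fin n → ℝ),
      (∀ i, 0 ≤ m i) → (∀ i, m i ≤ C) → |∑ i, m i - T / (2 * θ)| ≤ C →
      |∑ i, m i ^ 2 - T / (4 * θ ^ 3)| ≤ C →
      (∀ z : ℝ, |((ouNu n).prod (ouNu n)).real {p | √θ * √T * ((∑ i, m i * p.1 i * p.2 i) /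
        √((∑ i, m i * p.1 i ^ 2) * (∑ i, m i * p.2 i ^ 2))) ≤ z} - ouPhi z|
          ≤ c * (log T / √T)) ∧
      (ouNu n).real {h | ∑ i, m i * h i ^ 2 ≤ T / (4 * θ)} ≤ c * (log T / √T) := by
  set C1 := 1 / (4 * θ ^ 3) + C with hC1
  set K := (2 * θ + 4 * θ ^ 3) * (1 + C) with hK
  set E := 2 * exp (2 * (C1 + C ^ 2 * C1)) with hE
  have hC1p : 0 < C1 := by positivity
  have hKp : 0 < K := by positivity
  have hEp : 0 < E := by positivity
  have hlim : Tendsto (fun T : ℝ => log T / √T) atTop (𝓝 0) := by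
    have := (isLittleO_log_rpow_atTop (show (0:ℝ) < 1 / 2 by norm_num)).tendsto_div_nhds_zero
    simpa [Real.sqrt_eq_rpow] using this
  have hev : ∀ᶠ T in atTop, log T / √T < 1 / (32 * K) := hlim.eventually_lt_const (by positivity)
  obtain ⟨T1, hT1⟩ := eventually_atTop.1 hev
  refine ⟨3 * E + 32 * K, by positivity, max (max T1 (exp 1)) ((8 * (C + C ^ 2)) ^ 2), ?_, ?_⟩
  · exact le_max_of_le_left (le_max_of_le_right (by
      have := Real.add_one_le_exp 1; linarith))
  intro T hT n m hm0 hmC hs1 hs2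
  have hTT1 : T1 ≤ T := (le_max_left _ _).trans ((le_max_left _ _).trans hT)
  have hTe : exp 1 ≤ T := (le_max_right _ _).trans ((le_max_left _ _).trans hT)
  have hTC : (8 * (C + C ^ 2)) ^ 2 ≤ T := (le_max_right _ _).trans hT
  have hT1' : 1 ≤ T := by have := Real.add_one_le_exp 1; linarith
  have hT0 : 0 < T := by linarith
  have hlog : 1 ≤ log T := by rw [Real.le_log_iff_exp_le hT0]; exact hTe
  have hsT : 0 < √T := Real.sqrt_pos.2 hT0
  have hsT1 : 1 ≤ √T := by rw [Real.one_le_sqrt]; exact hT1'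
  have hsq : √T * √T = T := Real.mul_self_sqrt hT0.le
  have hsC : 8 * (C + C ^ 2) ≤ √T := Real.le_sqrt_of_sq_le hTC
  set ε := log T / √T with hε
  have hεp : 0 < ε := by positivity
  have hηs : K * ε ≤ 1 / 32 := by
    have := hT1 T hTT1
    rw [lt_div_iff₀ (by positivity)] at this
    linarith
  have hεT : ε * T = √T * log T := by rw [hε, div_mul_eq_mul_div, div_eq_iff hsT.ne']; nlinarith
  have hm2 : ∑ i, m i ^ 2 ≤ C1 * T := by
    have h := (abs_le.1 hs2).2
    have : C ≤ C * T := by nlinarith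
    have e : T / (4 * θ ^ 3) = 1 / (4 * θ ^ 3) * T := by ring
    rw [hC1]; nlinarith
  have hm4 : ∑ i, (m i ^ 2) ^ 2 ≤ C ^ 2 * C1 * T := by
    calc ∑ i, (m i ^ 2) ^ 2 ≤ ∑ i, C ^ 2 * m i ^ 2 := by
          apply Finset.sum_le_sum
          intro i _
          rw [sq (m i ^ 2)]
          exact mul_le_mul_of_nonneg_right (pow_le_pow_left₀ (hm0 i) (hmC i) 2) (sq_nonneg _)
      _ = C ^ 2 * ∑ i, m i ^ 2 := by rw [Finset.mul_sum]
      _ ≤ C ^ 2 * (C1 * T) := by gcongr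
      _ = _ := by ring
  -- concentration
  have htail : ∀ a : Fin n → ℝ, (∀ i, 0 ≤ a i) → (∀ i, a i ≤ C + C ^ 2) →
      (∑ i, a i ^ 2 ≤ (C1 + C ^ 2 * C1) * T) →
      (ouNu n).real {h | √T * log T ≤ |∑ i, a i * h i ^ 2 - ∑ i, a i|} ≤ E * ε := by
    intro a ha0 haC haS
    have h1 := ou_conc a (t := 1 / √T) (u := √T * log T) (by positivity) (by
      intro i
      rw [abs_of_nonneg (mul_nonneg (by positivity) (ha0 i)), one_div, ← div_eq_inv_mul,
        div_le_iff₀ hsT]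
      have := haC i
      linarith)
    refine h1.trans ?_
    have e1 : -(1 / √T) * (√T * log T) + 2 * (1 / √T) ^ 2 * ∑ i, a i ^ 2
        ≤ -log T + 2 * (C1 + C ^ 2 * C1) := by
      have : -(1 / √T) * (√T * log T) = -log T := by field_simp
      rw [this]
      have : (1 / √T) ^ 2 = 1 / T := by rw [div_pow, Real.sq_sqrt hT0.le]; simp
      rw [this]
      have : 2 * (1 / T) * ∑ i, a i ^ 2 ≤ 2 * (1 / T) * ((C1 + C ^ 2 * C1) * T) := by gcongr
      have e : 2 * (1 / T) * ((C1 + C ^ 2 * C1) * T) = 2 * (C1 + C ^ 2 * C1) := by field_simp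
      linarith
    calc 2 * exp (-(1 / √T) * (√T * log T) + 2 * (1 / √T) ^ 2 * ∑ i, a i ^ 2)
        ≤ 2 * exp (-log T + 2 * (C1 + C ^ 2 * C1)) := by gcongr
      _ = E * T⁻¹ := by rw [Real.exp_add, Real.exp_neg, Real.exp_log hT0, hE]; ring
      _ ≤ E * ε := by
        gcongr
        rw [hε, inv_eq_one_div, div_le_div_iff₀ hT0 hsT]
        nlinarith
  have hCT : C * 1 ≤ C * (√T * log T) := by
    apply mul_le_mul_of_nonneg_left _ hC.le; nlinarith
  set bad1 := {h : Fin n → ℝ | √T * log T ≤ |∑ i, m i * h i ^ 2 - ∑ i, m i|} with hbad1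
  set bad2 := {h : Fin n → ℝ | √T * log T ≤ |∑ i, m i ^ 2 * h i ^ 2 - ∑ i, m i ^ 2|} with hbad2
  have hP1 : (ouNu n).real bad1 ≤ E * ε := htail m hm0 (fun i => by nlinarith [hmC i]) (by
    have : 0 ≤ C ^ 2 * C1 * T := by positivity
    linarith)
  have hP2 : (ouNu n).real bad2 ≤ E * ε := htail (fun i => m i ^ 2) (fun i => sq_nonneg _)
    (fun i => by nlinarith [pow_le_pow_left₀ (hm0 i) (hmC i) 2]) (by
    have : 0 ≤ C1 * T := by positivity
    linarith)
  have hg1 : ∀ h, h ∉ bad1 → |∑ i, m i * h i ^ 2 - T / (2 * θ)| ≤ (K * ε) * (T / (2 * θ)) := by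
    intro h hh
    have h1 : |∑ i, m i * h i ^ 2 - ∑ i, m i| < √T * log T := by
      by_contra hcon; exact hh (not_lt.1 hcon)
    have h2 := abs_add_le (∑ i, m i * h i ^ 2 - ∑ i, m i) (∑ i, m i - T / (2 * θ))
    rw [sub_add_sub_cancel] at h2
    have h3 : (K * ε) * (T / (2 * θ)) = (1 + 2 * θ ^ 2) * ((1 + C) * (√T * log T)) := by
      rw [← hεT, hK]; field_simp; ring
    have h4 : 0 ≤ 2 * θ ^ 2 * ((1 + C) * (√T * log T)) := by positivity
    rw [h3]; linarith
  have hg2 : ∀ h, h ∉ bad2 →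
      |∑ i, m i ^ 2 * h i ^ 2 - T / (4 * θ ^ 3)| ≤ (K * ε) * (T / (4 * θ ^ 3)) := by
    intro h hh
    have h1 : |∑ i, m i ^ 2 * h i ^ 2 - ∑ i, m i ^ 2| < √T * log T := by
      by_contra hcon; exact hh (not_lt.1 hcon)
    have h2 := abs_add_le (∑ i, m i ^ 2 * h i ^ 2 - ∑ i, m i ^ 2) (∑ i, m i ^ 2 - T / (4 * θ ^ 3))
    rw [sub_add_sub_cancel] at h2
    have h3 : (K * ε) * (T / (4 * θ ^ 3)) = (1 + 1 / (2 * θ ^ 2)) * ((1 + C) * (√T * log T)) := by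
      rw [← hεT, hK]; field_simp; ring
    have h4 : 0 ≤ 1 / (2 * θ ^ 2) * ((1 + C) * (√T * log T)) := by positivity
    rw [h3]; linarith
  have hKε : 0 < K * ε := by positivity
  constructor
  · intro z
    have hmpos : 0 < ∑ i, m i ^ 2 := by
      by_contra hcon
      have h0 : ∑ i, m i ^ 2 = 0 := le_antisymm (not_lt.1 hcon) (by positivity)
      have := (hg2 (fun _ => 0))
      -- use smallness
      rw [h0] at hs2
      rw [zero_sub, abs_neg, abs_of_pos (by positivity)] at hs2
      have h3 : (K * ε) * (T / (4 * θ ^ 3)) = (1 + 1 / (2 * θ ^ 2)) * ((1 + C) * (√T * log T)) := by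
        rw [← hεT, hK]; field_simp; ring
      have h4 : 0 ≤ 1 / (2 * θ ^ 2) * ((1 + C) * (√T * log T)) := by positivity
      have h5 : 0 < √T * log T := by positivity
      have h6 : (K * ε) * (T / (4 * θ ^ 3)) ≤ 1 / 32 * (T / (4 * θ ^ 3)) := by gcongr
      have h7 : 0 < T / (4 * θ ^ 3) := by positivity
      linarith
    set bad : Set ((Fin n → ℝ) × (Fin n → ℝ)) :=
      (bad1 ×ˢ Set.univ ∪ bad2 ×ˢ Set.univ) ∪ Set.univ ×ˢ bad1 with hbad
    have hPbad : ((ouNu n).prod (ouNu n)).real bad ≤ 3 * E * ε := by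
      refine (measureReal_union_le _ _).trans ?_
      have := measureReal_union_le (μ := (ouNu n).prod (ouNu n)) (bad1 ×ˢ Set.univ)
        (bad2 ×ˢ Set.univ)
      simp only [measureReal_prod_prod, probReal_univ, mul_one, one_mul] at this ⊢
      linarith
    have hgood : ∀ p, p ∉ bad → p.1 ∉ bad1 ∧ p.1 ∉ bad2 ∧ p.2 ∉ bad1 := by
      intro p hp
      simp only [hbad, Set.mem_union, Set.mem_prod, Set.mem_univ, and_true, true_and, not_or] at hp
      exact ⟨hp.1.1, hp.1.2, hp.2⟩
    obtain ⟨hmx, hmn⟩ := ouPhi_minmax (z := z) hKε.le hηs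
    rw [abs_le]
    constructor
    · have hsub : {p : (Fin n → ℝ) × (Fin n → ℝ) | ∑ i, m i * p.1 i * p.2 i ≤
          min (z / (1 - 8 * (K * ε))) (z / (1 + 8 * (K * ε))) * √(∑ i, m i ^ 2 * p.1 i ^ 2)} ⊆
          {p | √θ * √T * ((∑ i, m i * p.1 i * p.2 i) /
            √((∑ i, m i * p.1 i ^ 2) * (∑ i, m i * p.2 i ^ 2))) ≤ z} ∪ bad := by
        intro p hp
        by_cases hb : p ∈ bad
        · exact Or.inr hb
        · left
          obtain ⟨g1, g2, g3⟩ := hgood p hb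
          exact (ou_good hθ hT0 hηs (hg1 _ g1) (hg1 _ g3) (hg2 _ g2)).1 hp
      have := (measureReal_mono (μ := (ouNu n).prod (ouNu n)) hsub).trans
        (measureReal_union_le _ _)
      rw [ou_prod_cdf m _ hmpos] at this
      linarith
    · have hsub : {p : (Fin n → ℝ) × (Fin n → ℝ) | √θ * √T * ((∑ i, m i * p.1 i * p.2 i) /
            √((∑ i, m i * p.1 i ^ 2) * (∑ i, m i * p.2 i ^ 2))) ≤ z} ⊆
          {p | ∑ i, m i * p.1 i * p.2 i ≤
          max (z / (1 - 8 * (K * ε))) (z / (1 + 8 * (K * ε))) * √(∑ i, m i ^ 2 * p.1 i ^ 2)}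
           ∪ bad := by
        intro p hp
        by_cases hb : p ∈ bad
        · exact Or.inr hb
        · left
          obtain ⟨g1, g2, g3⟩ := hgood p hb
          exact (ou_good hθ hT0 hηs (hg1 _ g1) (hg1 _ g3) (hg2 _ g2)).2 hp
      have := (measureReal_mono (μ := (ouNu n).prod (ouNu n)) hsub).trans
        (measureReal_union_le _ _)
      rw [ou_prod_cdf m _ hmpos] at this
      linarith
  · have hsub : {h : Fin n → ℝ | ∑ i, m i * h i ^ 2 ≤ T / (4 * θ)} ⊆ bad1 := by
      intro h hh
      by_contra hb
      have h1 := (abs_le.1 (hg1 h hb)).1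
      have hh' : ∑ i, m i * h i ^ 2 ≤ T / (4 * θ) := hh
      have e : T / (2 * θ) = 2 * (T / (4 * θ)) := by field_simp; norm_num
      have h2 : 0 < T / (4 * θ) := by positivity
      rw [e] at h1
      nlinarith
    refine (measureReal_mono hsub).trans (hP1.trans ?_)
    have : 0 ≤ (2 * E + 32 * K) * ε := by positivity
    linarith

/-- The centered bilinear form. -/
def ouQ (n : ℕ) (Δ : ℝ) (x y : Fin n → ℝ) : ℝ :=
  Δ * ∑ i, x i * y i - (n * Δ) * ((1 / n) * ∑ i, x i) * ((1 / n) * ∑ i, y i)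

/-- its matrix -/
def ouQm (n : ℕ) (Δ : ℝ) : Matrix (Fin n) (Fin n) ℝ :=
  Matrix.of (fun i j => Δ * ((if i = j then 1 else 0) - 1 / n))

lemma ouQm_symm (n : ℕ) (Δ : ℝ) : (ouQm n Δ).transpose = ouQm n Δ := by
  ext i j
  simp [ouQm, eq_comm]

lemma ouQ_eq (n : ℕ) (hn : 0 < n) (Δ : ℝ) (x y : Fin n → ℝ) :
    ouQ n Δ x y = dotProduct x (Matrix.mulVec (ouQm n Δ) y) := by
  have hn' : (n : ℝ) ≠ 0 := by positivity
  have h1 : ∀ i, Matrix.mulVec (ouQm n Δ) y i = Δ * (y i - (1 / n) * ∑ j, y j) := by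
    intro i
    simp only [Matrix.mulVec, dotProduct, ouQm, Matrix.of_apply]
    simp only [mul_assoc, ← Finset.mul_sum, sub_mul, Finset.sum_sub_distrib]
    simp
  simp only [dotProduct, h1, ouQ]
  have h2 : ∀ i, x i * (Δ * (y i - (1 / n) * ∑ j, y j))
      = Δ * (x i * y i) - (Δ * (1 / n) * ∑ j, y j) * x i := by intro i; ring
  simp only [h2, Finset.sum_sub_distrib, ← Finset.mul_sum]
  field_simp

lemma ouQ_self_le (n : ℕ) (Δ : ℝ) (hΔ : 0 ≤ Δ) (x : Fin n → ℝ) :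
    ouQ n Δ x x ≤ Δ * ∑ i, x i ^ 2 := by
  unfold ouQ
  have : 0 ≤ (n * Δ) * ((1 / n) * ∑ i, x i) * ((1 / n) * ∑ i, x i) := by
    rw [mul_assoc]; exact mul_nonneg (by positivity) (mul_self_nonneg _)
  simp only [sq]; linarith

lemma ouQ_self_nonneg (n : ℕ) (hn : 0 < n) (Δ : ℝ) (hΔ : 0 ≤ Δ) (x : Fin n → ℝ) :
    0 ≤ ouQ n Δ x x := by
  have hn' : (0:ℝ) < n := by positivity
  have h := sq_sum_le_card_mul_sum_sq (s := Finset.univ) (f := x)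
  simp only [Finset.card_univ, Fintype.card_fin] at h
  have e : ouQ n Δ x x = Δ * (1 / n) * (n * ∑ i, x i ^ 2 - (∑ i, x i) ^ 2) := by
    unfold ouQ; simp only [sq]; field_simp
  rw [e]
  exact mul_nonneg (by positivity) (by linarith)

lemma ou_schur {n : ℕ} (S : Matrix (Fin n) (Fin n) ℝ) (hsym : S.transpose = S)
    (h0 : ∀ i j, 0 ≤ S i j) (ρ : ℝ) (hρ : ∀ i, ∑ j, S i j ≤ ρ) (x : Fin n → ℝ) :
    dotProduct x (S.mulVec x) ≤ ρ * ∑ i, x i ^ 2 := by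
  have hs : ∀ i j, S j i = S i j := fun i j => congrFun (congrFun hsym i) j
  have h1 : dotProduct x (S.mulVec x) = ∑ i, ∑ j, S i j * (x i * x j) := by
    simp only [dotProduct, Matrix.mulVec, Finset.mul_sum]
    refine Finset.sum_congr rfl fun i _ => Finset.sum_congr rfl fun j _ => by ring
  have h2 : ∑ i, ∑ j, S i j * (x i * x j)
      ≤ ∑ i, ∑ j, (S i j * (x i ^ 2 / 2) + S i j * (x j ^ 2 / 2)) := by
    refine Finset.sum_le_sum fun i _ => Finset.sum_le_sum fun j _ => ?_
    rw [← mul_add]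
    apply mul_le_mul_of_nonneg_left _ (h0 i j)
    nlinarith [sq_nonneg (x i - x j)]
  have h3 : ∑ i, ∑ j, (S i j * (x i ^ 2 / 2) + S i j * (x j ^ 2 / 2))
      = ∑ i, (∑ j, S i j) * x i ^ 2 := by
    simp only [Finset.sum_add_distrib]
    rw [Finset.sum_comm (f := fun i j => S i j * (x j ^ 2 / 2)), ← Finset.sum_add_distrib]
    refine Finset.sum_congr rfl fun i _ => ?_
    simp only [← Finset.sum_mul]
    simp only [hs i]
    ring
  rw [h1]
  refine h2.trans ?_
  rw [h3, Finset.mul_sum]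
  exact Finset.sum_le_sum fun i _ => mul_le_mul_of_nonneg_right (hρ i) (sq_nonneg _)

lemma ou_matrix {n : ℕ} (hn : 0 < n) {Δ : ℝ} (hΔ : 0 < Δ) (S : Matrix (Fin n) (Fin n) ℝ)
    (hS : S.PosSemidef) (h0 : ∀ i j, 0 ≤ S i j) (ρ : ℝ) (hρ : ∀ i, ∑ j, S i j ≤ ρ) :
    ∃ (B : Matrix (Fin n) (Fin n) ℝ) (m : Fin n → ℝ), B * B.transpose = S ∧
      (∀ x y : Fin n → ℝ, ouQ n Δ (B.mulVec x) (B.mulVec y) = ∑ i, m i * x i * y i) ∧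
      (∀ i, 0 ≤ m i) ∧ (∀ i, m i ≤ Δ * ρ) ∧
      |∑ i, m i - Δ * ∑ i, S i i| ≤ Δ * ρ ∧
      |∑ i, m i ^ 2 - Δ ^ 2 * ∑ i, ∑ j, S i j ^ 2| ≤ 3 * (Δ * ρ) ^ 2 := by
  have hn' : (0:ℝ) < n := by positivity
  have hsym : S.transpose = S := by simpa using hS.isHermitian.eq
  have hs : ∀ i j, S j i = S i j := fun i j => congrFun (congrFun hsym i) j
  obtain ⟨L, hL⟩ : ∃ L : Matrix (Fin n) (Fin n) ℝ, S = L * L.transpose := by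
    open scoped MatrixOrder in
    obtain ⟨L, hL⟩ := CStarAlgebra.nonneg_iff_eq_star_mul_self.1 (hS.nonneg)
    exact ⟨L.transpose, by simpa [Matrix.star_eq_conjTranspose] using hL⟩
  set M := L.transpose * ouQm n Δ * L with hM
  have hMh : M.IsHermitian := by
    rw [Matrix.IsHermitian, hM]
    simp [Matrix.transpose_mul, ouQm_symm, Matrix.mul_assoc]
  set U : Matrix (Fin n) (Fin n) ℝ := (hMh.eigenvectorUnitary : Matrix (Fin n) (Fin n) ℝ) with hU
  have hUU : U * U.transpose = 1 := by
    have := Matrix.mem_unitaryGroup_iff.1 hMh.eigenvectorUnitary.2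
    simpa [Matrix.star_eq_conjTranspose] using this
  have hUU' : U.transpose * U = 1 := by
    have := Matrix.mem_unitaryGroup_iff'.1 hMh.eigenvectorUnitary.2
    simpa [Matrix.star_eq_conjTranspose] using this
  set m := hMh.eigenvalues with hm
  have hspec : U.transpose * M * U = Matrix.diagonal m := by
    have h := hMh.spectral_theorem
    rw [Unitary.conjStarAlgAut_apply] at h
    have h' : M = U * Matrix.diagonal m * U.transpose := by
      conv_lhs => rw [h]
      simp [hU, hm, Matrix.star_eq_conjTranspose]
    rw [h']
    calc _ = (U.transpose * U) * Matrix.diagonal m * (U.transpose * U) := by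
          simp only [Matrix.mul_assoc]
      _ = _ := by rw [hUU']; simp
  set B := L * U with hB
  have hBB : B * B.transpose = S := by
    rw [hB, Matrix.transpose_mul, hL]
    calc _ = L * (U * U.transpose) * L.transpose := by simp only [Matrix.mul_assoc]
      _ = _ := by rw [hUU]; simp
  have hBQB : B.transpose * ouQm n Δ * B = Matrix.diagonal m := by
    rw [← hspec, hM, hB, Matrix.transpose_mul]
    simp only [Matrix.mul_assoc]
  clear_value B
  have hform : ∀ x y : Fin n → ℝ,
      ouQ n Δ (B.mulVec x) (B.mulVec y) = ∑ i, m i * x i * y i := by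
    intro x y
    rw [ouQ_eq n hn]
    have : dotProduct (B.mulVec x) ((ouQm n Δ).mulVec (B.mulVec y))
        = dotProduct x ((B.transpose * ouQm n Δ * B).mulVec y) := by
      rw [← Matrix.mulVec_mulVec, ← Matrix.mulVec_mulVec, Matrix.dotProduct_mulVec x,
        Matrix.vecMul_transpose]
    rw [this, hBQB]
    simp only [dotProduct, Matrix.mulVec_diagonal]
    refine Finset.sum_congr rfl fun i _ => by ring
  have hmi : ∀ i, m i = ouQ n Δ (B.mulVec (Pi.single i 1)) (B.mulVec (Pi.single i 1)) := by
    intro i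
    rw [hform]
    simp [Pi.single_apply]
  refine ⟨B, m, hBB, hform, ?_, ?_, ?_, ?_⟩
  · intro i; rw [hmi]; exact ouQ_self_nonneg n hn Δ hΔ.le _
  · intro i
    rw [hmi]
    refine (ouQ_self_le n Δ hΔ.le _).trans ?_
    apply mul_le_mul_of_nonneg_left _ hΔ.le
    set e : Fin n → ℝ := Pi.single i 1 with he
    set y := B.mulVec e with hy
    set s := ∑ j, y j ^ 2 with hs'
    have hs0 : 0 ≤ s := by positivity
    have h1 : s = dotProduct e (B.transpose.mulVec y) := by
      rw [Matrix.dotProduct_mulVec, Matrix.vecMul_transpose, hs']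
      simp only [dotProduct, sq, ← hy]
    have h2 : s ^ 2 ≤ ∑ j, (B.transpose.mulVec y) j ^ 2 := by
      have : s = (B.transpose.mulVec y) i := by
        rw [h1, he]; simp
      rw [this]
      exact Finset.single_le_sum (f := fun j => (B.transpose.mulVec y) j ^ 2)
        (fun j _ => sq_nonneg _) (Finset.mem_univ i)
    have h3 : ∑ j, (B.transpose.mulVec y) j ^ 2 = dotProduct y (S.mulVec y) := by
      rw [← hBB, ← Matrix.mulVec_mulVec, Matrix.dotProduct_mulVec y, ← Matrix.mulVec_transpose]
      simp only [dotProduct, sq]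
    have h4 := ou_schur S hsym h0 ρ hρ y
    have h5 : s ^ 2 ≤ ρ * s := by rw [h3] at h2; exact h2.trans h4
    rcases hs0.eq_or_lt with h | h
    · rw [← h]
      exact (Finset.sum_nonneg fun j _ => h0 i j).trans (hρ i)
    · nlinarith
  all_goals
    have hρ0 : 0 ≤ ρ := (Finset.sum_nonneg fun j _ => h0 ⟨0, hn⟩ j).trans (hρ ⟨0, hn⟩)
    have hQS : ∀ i j, (ouQm n Δ * S) i j = Δ * (S i j - (1 / n) * ∑ k, S j k) := by
      intro i j
      simp only [Matrix.mul_apply, ouQm, Matrix.of_apply, mul_assoc, ← Finset.mul_sum, sub_mul,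
        Finset.sum_sub_distrib]
      simp [hs j]
    have hr0 : ∀ i, 0 ≤ ∑ j, S i j := fun i => Finset.sum_nonneg fun j _ => h0 i j
    have hrr0 : 0 ≤ ∑ i, ∑ j, S i j := Finset.sum_nonneg fun i _ => hr0 i
    have hrr : ∑ i, ∑ j, S i j ≤ n * ρ := by
      refine (Finset.sum_le_sum fun i _ => hρ i).trans ?_
      simp
    have htr1 : ∑ i, m i = Matrix.trace (ouQm n Δ * S) := by
      rw [← Matrix.trace_diagonal, ← hBQB, Matrix.mul_assoc, Matrix.trace_mul_comm,
        Matrix.mul_assoc, hBB]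
  · have : ∑ i, m i = Δ * ∑ i, S i i - Δ * ((1 / n) * ∑ i, ∑ j, S i j) := by
      rw [htr1, Matrix.trace]
      simp only [Matrix.diag_apply, hQS, ← Finset.mul_sum, Finset.sum_sub_distrib, mul_sub]
    rw [this, sub_sub_cancel_left, abs_neg, abs_of_nonneg (by positivity)]
    apply mul_le_mul_of_nonneg_left _ hΔ.le
    rw [one_div, ← div_eq_inv_mul, div_le_iff₀ hn']
    linarith
  · have htr2 : ∑ i, m i ^ 2 = Matrix.trace ((ouQm n Δ * S) * (ouQm n Δ * S)) := by
      have : ∑ i, m i ^ 2 = Matrix.trace (Matrix.diagonal m * Matrix.diagonal m) := by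
        rw [Matrix.diagonal_mul_diagonal, Matrix.trace_diagonal]
        simp only [sq]
      rw [this, ← hBQB, ← hBB]
      calc _ = Matrix.trace (B.transpose * (ouQm n Δ * B * (B.transpose * ouQm n Δ * B))) := by
            simp only [Matrix.mul_assoc]
        _ = _ := by rw [Matrix.trace_mul_comm]; simp only [Matrix.mul_assoc]
    set r : Fin n → ℝ := fun i => ∑ j, S i j with hr
    have hval : ∑ i, m i ^ 2 = Δ ^ 2 * ∑ i, ∑ j, S i j ^ 2
        - Δ ^ 2 * (2 * ((1 / n) * ∑ i, r i ^ 2)) + Δ ^ 2 * ((1 / n) * ∑ i, r i) ^ 2 := by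
      rw [htr2, Matrix.trace]
      simp only [Matrix.diag_apply, Matrix.mul_apply (M := ouQm n Δ * S), hQS]
      have e : ∀ i j, Δ * (S i j - (1 / n) * ∑ k, S j k) * (Δ * (S j i - (1 / n) * ∑ k, S i k))
          = Δ ^ 2 * (S i j ^ 2) - Δ ^ 2 * (1 / n) * (S i j * r i) - Δ ^ 2 * (1 / n) * (S i j * r j)
            + Δ ^ 2 * (1 / n) ^ 2 * (r i * r j) := by
        intro i j
        rw [hs i j]; simp only [hr]; ring
      simp only [e, Finset.sum_add_distrib, Finset.sum_sub_distrib, ← Finset.mul_sum]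
      have e1 : ∑ i, ∑ j, S i j * r i = ∑ i, r i ^ 2 := by
        refine Finset.sum_congr rfl fun i _ => ?_
        rw [← Finset.sum_mul, sq]
      have e2 : ∑ i, ∑ j, S i j * r j = ∑ i, r i ^ 2 := by
        rw [Finset.sum_comm, ← e1]
        refine Finset.sum_congr rfl fun i _ => Finset.sum_congr rfl fun j _ => ?_
        rw [hs i j]
      have e3 : ∑ i, r i * ∑ j, r j = (∑ i, r i) ^ 2 := by
        rw [← Finset.sum_mul, sq]
      rw [e1, e2, e3]; ring
    rw [hval]
    have b1 : (1 / (n:ℝ)) * ∑ i, r i ^ 2 ≤ ρ ^ 2 := by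
      rw [one_div, ← div_eq_inv_mul, div_le_iff₀ hn']
      calc ∑ i, r i ^ 2 ≤ ∑ i : Fin n, ρ ^ 2 :=
            Finset.sum_le_sum fun i _ => pow_le_pow_left₀ (hr0 i) (hρ i) 2
        _ = _ := by simp [mul_comm]
    have b2 : (1 / (n:ℝ)) * ∑ i, r i ≤ ρ := by
      rw [one_div, ← div_eq_inv_mul, div_le_iff₀ hn']; linarith
    have b0 : 0 ≤ (1 / (n:ℝ)) * ∑ i, r i ^ 2 := by positivity
    have b3 : 0 ≤ (1 / (n:ℝ)) * ∑ i, r i := mul_nonneg (by positivity) hrr0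
    have b4 : ((1 / (n:ℝ)) * ∑ i, r i) ^ 2 ≤ ρ ^ 2 := pow_le_pow_left₀ b3 b2 2
    have hΔ2 : 0 ≤ Δ ^ 2 := sq_nonneg _
    have c1 := mul_le_mul_of_nonneg_left b1 hΔ2
    have c2 := mul_le_mul_of_nonneg_left b4 hΔ2
    have c3 := mul_nonneg hΔ2 b0
    have c4 := mul_nonneg hΔ2 (sq_nonneg ((1 / (n:ℝ)) * ∑ i, r i))
    have c5 : 0 ≤ Δ ^ 2 * ρ ^ 2 := by positivity
    rw [abs_le, mul_pow]
    constructor <;> nlinarith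

lemma ou_geom_le {r : ℝ} (h0 : 0 ≤ r) (h1 : r < 1) (n : ℕ) : ∑ i ∈ range n, r ^ i ≤ (1 - r)⁻¹ := by
  rw [← tsum_geometric_of_lt_one h0 h1]
  exact (summable_geometric_of_lt_one h0 h1).sum_le_tsum _ (fun i _ => by positivity)

lemma ou_geom_base (r : ℝ) (n : ℕ) : (∑ i ∈ range n, r ^ i) * (1 - r) = 1 - r ^ n := by
  have := geom_sum_mul r n; linarith

lemma ou_row (r : ℝ) (k d : ℕ) :
    (∑ l ∈ range (k + 1 + d), r ^ ((k - l) + (l - k))) * (1 - r)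
      = 1 + r - r ^ (k + 1) - r ^ (d + 1) := by
  induction d with
  | zero =>
    have : ∑ l ∈ range (k + 1), r ^ ((k - l) + (l - k)) = ∑ l ∈ range (k + 1), r ^ l := by
      rw [← Finset.sum_range_reflect]
      refine Finset.sum_congr rfl fun l hl => ?_
      have := Finset.mem_range.1 hl
      congr 1; omega
    rw [add_zero, this, ou_geom_base]; ring
  | succ d ih =>
    rw [← add_assoc, Finset.sum_range_succ, add_mul, ih]
    have : (k - (k + 1 + d)) + (k + 1 + d - k) = d + 1 := by omega
    rw [this]; ring

lemma ou_row' {r : ℝ} (h1 : r < 1) {k n : ℕ} (hk : k < n) :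
    ∑ l ∈ range n, r ^ ((k - l) + (l - k))
      = (1 + r) / (1 - r) - (r ^ (k + 1) + r ^ (n - k)) / (1 - r) := by
  obtain ⟨d, rfl⟩ := Nat.exists_eq_add_of_lt hk
  have := ou_row r k d
  have e : k + d + 1 - k = d + 1 := by omega
  rw [e, ← sub_div, eq_div_iff (by linarith), show k + d + 1 = k + 1 + d by ring, this]; ring

lemma ou_row_le {r : ℝ} (h0 : 0 ≤ r) (h1 : r < 1) {k n : ℕ} (hk : k < n) :
    ∑ l ∈ range n, r ^ ((k - l) + (l - k)) ≤ 2 / (1 - r) := by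
  rw [ou_row' h1 hk]
  have h : 0 < 1 - r := by linarith
  have : 0 ≤ (r ^ (k + 1) + r ^ (n - k)) / (1 - r) := by positivity
  have : (1 + r) / (1 - r) ≤ 2 / (1 - r) := by gcongr; linarith
  linarith

lemma ou_double {r : ℝ} (h0 : 0 ≤ r) (h1 : r < 1) (n : ℕ) :
    |∑ k ∈ range n, ∑ l ∈ range n, r ^ ((k - l) + (l - k)) - n * ((1 + r) / (1 - r))|
      ≤ 2 / (1 - r) ^ 2 := by
  have h : 0 < 1 - r := by linarith
  have e : ∑ k ∈ range n, ∑ l ∈ range n, r ^ ((k - l) + (l - k))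
      = n * ((1 + r) / (1 - r)) - (∑ k ∈ range n, (r ^ (k + 1) + r ^ (n - k))) / (1 - r) := by
    rw [Finset.sum_congr rfl fun k hk => ou_row' h1 (Finset.mem_range.1 hk),
      Finset.sum_sub_distrib, ← Finset.sum_div _ (fun k => r ^ (k + 1) + r ^ (n - k))]
    simp
  rw [e, sub_sub_cancel_left, abs_neg, abs_of_nonneg (by positivity)]
  have b1 : ∑ k ∈ range n, r ^ (k + 1) ≤ (1 - r)⁻¹ := by
    simp only [pow_succ, ← Finset.sum_mul]
    have := ou_geom_le h0 h1 n
    have h3 : 0 ≤ ∑ i ∈ range n, r ^ i := by positivity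
    nlinarith
  have b2 : ∑ k ∈ range n, r ^ (n - k) ≤ (1 - r)⁻¹ := by
    refine le_trans (le_of_eq ?_) b1
    rw [← Finset.sum_range_reflect]
    refine Finset.sum_congr rfl fun l hl => ?_
    have := Finset.mem_range.1 hl
    congr 1; omega
  rw [Finset.sum_add_distrib]
  calc _ ≤ ((1 - r)⁻¹ + (1 - r)⁻¹) / (1 - r) := by gcongr
    _ = _ := by field_simp; ring

/-- x coth x ≈ 1 -/
lemma ou_coth {x : ℝ} (hx : 0 < x) :
    |x * ((1 + exp (-2 * x)) / (1 - exp (-2 * x))) - 1| ≤ x := by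
  set r := exp (-2 * x) with hr
  have h1 : 1 - 2 * x ≤ r := by have := Real.add_one_le_exp (-2 * x); linarith
  have hr1 : r < 1 := by rw [hr, Real.exp_lt_one_iff]; linarith
  have h2 : r * (1 + 2 * x) ≤ 1 := by
    have := Real.add_one_le_exp (2 * x)
    have h3 : r * exp (2 * x) = 1 := by rw [hr, ← Real.exp_add]; simp
    have h4 := Real.exp_pos (-2 * x)
    nlinarith
  have hd : 0 < 1 - r := by linarith
  have e : x * ((1 + r) / (1 - r)) - 1 = (x * (1 + r) - (1 - r)) / (1 - r) := by field_simp
  rw [e, abs_le, ← neg_le, neg_le, le_div_iff₀ hd, div_le_iff₀ hd]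
  constructor <;> nlinarith

lemma ou_one_sub_exp {x : ℝ} (h0 : 0 ≤ x) (h1 : x ≤ 1) : x / 2 ≤ 1 - exp (-x) := by
  have h2 : 1 + x ≤ exp x := by linarith [Real.add_one_le_exp x]
  have h3 : exp (-x) ≤ (1 + x)⁻¹ := by
    rw [Real.exp_neg]; exact inv_anti₀ (by linarith) h2
  have h4 : (1 + x)⁻¹ ≤ 1 - x / 2 := by
    rw [inv_le_iff_one_le_mul₀ (by linarith)]; nlinarith
  linarith

/-- discretized covariance -/
def ouK (θ Δ : ℝ) (k l : ℕ) : ℝ :=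
  (exp (-θ * |(l * Δ : ℝ) - k * Δ|) - exp (-θ * (l * Δ + k * Δ))) / (2 * θ)

lemma ouK_eq {θ Δ : ℝ} (hΔ : 0 < Δ) (k l : ℕ) :
    ouK θ Δ k l = (exp (-(θ * Δ)) ^ ((k - l) + (l - k)) - exp (-(θ * Δ)) ^ (k + l)) / (2 * θ) := by
  unfold ouK
  rw [← Real.exp_nat_mul, ← Real.exp_nat_mul]
  congr 3
  · have : |(l * Δ : ℝ) - k * Δ| = (((k - l) + (l - k) : ℕ) : ℝ) * Δ := by
      rw [← sub_mul, abs_mul, abs_of_pos hΔ]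
      congr 1
      rcases le_total k l with h | h
      · rw [Nat.sub_eq_zero_of_le h, zero_add, Nat.cast_sub h, abs_of_nonneg]
        have : (k:ℝ) ≤ l := by exact_mod_cast h
        linarith
      · rw [Nat.sub_eq_zero_of_le h, add_zero, Nat.cast_sub h, abs_of_nonpos]
        · ring
        · have : (l:ℝ) ≤ k := by exact_mod_cast h
          linarith
    rw [this]; ring
  · push_cast; ring

lemma ouK_sums {θ Δ T : ℝ} {n : ℕ} (hθ : 0 < θ) (hΔ : 0 < Δ) (hT : n * Δ = T)
    (h1 : θ * Δ ≤ 1) (h2 : T * Δ ≤ 1) :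
    (∀ k l, 0 ≤ ouK θ Δ k l) ∧ (∀ k ∈ range n, Δ * ∑ l ∈ range n, ouK θ Δ k l ≤ 2 / θ ^ 2) ∧
    |Δ * ∑ k ∈ range n, ouK θ Δ k k - T / (2 * θ)| ≤ 1 / θ ^ 2 ∧
    |Δ ^ 2 * ∑ k ∈ range n, ∑ l ∈ range n, ouK θ Δ k l ^ 2 - T / (4 * θ ^ 3)|
      ≤ (16 / θ ^ 2 + 1) / (4 * θ ^ 2) := by
  set x := θ * Δ with hx
  have hx0 : 0 < x := by positivity
  set q := exp (-x) with hq
  have hq0 : 0 < q := Real.exp_pos _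
  have hqx : x / 2 ≤ 1 - q := ou_one_sub_exp hx0.le h1
  have hq1 : q < 1 := by linarith
  have hq2 : q ^ 2 ≤ q := by nlinarith
  have hK : ∀ k l, ouK θ Δ k l = (q ^ ((k - l) + (l - k)) - q ^ (k + l)) / (2 * θ) :=
    fun k l => ouK_eq hΔ k l
  have hab : ∀ k l : ℕ, q ^ (k + l) ≤ q ^ ((k - l) + (l - k)) := fun k l =>
    pow_le_pow_of_le_one hq0.le hq1.le (by omega)
  have hinv : (1 - q)⁻¹ ≤ 2 / x := by
    rw [inv_le_iff_one_le_mul₀ (by linarith), div_mul_eq_mul_div, le_div_iff₀ hx0]; linarith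
  have hΔx : Δ * (2 / x) = 2 / θ := by rw [hx]; field_simp
  have hΔinv : Δ * (1 - q)⁻¹ ≤ 2 / θ := by
    rw [← hΔx]; gcongr
  have hinv2 : (1 - q ^ 2)⁻¹ ≤ (1 - q)⁻¹ := inv_anti₀ (by linarith) (by linarith)
  have hΔinv2 : Δ * (1 - q ^ 2)⁻¹ ≤ 2 / θ := le_trans (by gcongr) hΔinv
  have hq21 : q ^ 2 < 1 := by linarith
  have hdi : 0 < (1 - q)⁻¹ := inv_pos.2 (by linarith)
  have hdi2 : 0 < (1 - q ^ 2)⁻¹ := inv_pos.2 (by linarith)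
  refine ⟨?_, ?_, ?_, ?_⟩
  · intro k l; rw [hK]; exact div_nonneg (by linarith [hab k l]) (by positivity)
  · intro k hk
    have h3 : ∑ l ∈ range n, ouK θ Δ k l ≤ (1 / (2 * θ)) * (2 / (1 - q)) := by
      calc ∑ l ∈ range n, ouK θ Δ k l ≤ ∑ l ∈ range n, (1 / (2 * θ)) * q ^ ((k - l) + (l - k)) := by
            refine Finset.sum_le_sum fun l _ => ?_
            rw [hK, one_div, ← div_eq_inv_mul]
            gcongr
            have : 0 < q ^ (k + l) := by positivity
            linarith
        _ ≤ _ := by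
            rw [← Finset.mul_sum]
            gcongr
            exact ou_row_le hq0.le hq1 (Finset.mem_range.1 hk)
    calc _ ≤ Δ * ((1 / (2 * θ)) * (2 / (1 - q))) := by gcongr
      _ = (1 / θ) * (Δ * (1 - q)⁻¹) := by field_simp
      _ ≤ (1 / θ) * (2 / θ) := by gcongr
      _ = _ := by field_simp
  · have e : Δ * ∑ k ∈ range n, ouK θ Δ k k - T / (2 * θ)
        = -((1 / (2 * θ)) * (Δ * ∑ k ∈ range n, (q ^ 2) ^ k)) := by
      have : ∀ k, ouK θ Δ k k = 1 / (2 * θ) - 1 / (2 * θ) * (q ^ 2) ^ k := by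
        intro k; rw [hK]; simp only [Nat.sub_self, add_zero, pow_zero]
        rw [← two_mul, pow_mul]; ring
      simp only [this, Finset.sum_sub_distrib, ← Finset.mul_sum]
      rw [← hT]; simp; ring
    rw [e, abs_neg, abs_of_nonneg (by positivity)]
    calc _ ≤ 1 / (2 * θ) * (Δ * (1 - q ^ 2)⁻¹) := by
          gcongr; exact ou_geom_le (by positivity) hq21 n
      _ ≤ 1 / (2 * θ) * (2 / θ) := by gcongr
      _ = _ := by field_simp
  · set W := ∑ k ∈ range n, ∑ l ∈ range n, (q ^ 2) ^ ((k - l) + (l - k)) with hW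
    set D := ∑ k ∈ range n, ∑ l ∈ range n, ouK θ Δ k l ^ 2 with hD
    have hd := ou_double (r := q ^ 2) (by positivity) hq21 n
    rw [← hW] at hd
    have hterm : ∀ k l : ℕ, 4 * θ ^ 2 * ouK θ Δ k l ^ 2 ≤ (q ^ 2) ^ ((k - l) + (l - k)) ∧
        (q ^ 2) ^ ((k - l) + (l - k)) - 2 * (q ^ k * q ^ l) ≤ 4 * θ ^ 2 * ouK θ Δ k l ^ 2 := by
      intro k l
      have e : 4 * θ ^ 2 * ouK θ Δ k l ^ 2 = (q ^ ((k - l) + (l - k)) - q ^ (k + l)) ^ 2 := by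
        rw [hK]; field_simp; ring
      rw [e, ← pow_add, ← pow_mul, mul_comm 2, pow_mul]
      have ha := hab k l
      have hb : 0 < q ^ (k + l) := by positivity
      have ha1 : q ^ ((k - l) + (l - k)) ≤ 1 := pow_le_one₀ hq0.le hq1.le
      constructor <;> nlinarith
    have hup : 4 * θ ^ 2 * D ≤ W := by
      rw [hD, Finset.mul_sum]
      refine Finset.sum_le_sum fun k _ => ?_
      rw [Finset.mul_sum]
      exact Finset.sum_le_sum fun l _ => (hterm k l).1
    have hlo : W - 2 * (∑ k ∈ range n, q ^ k) ^ 2 ≤ 4 * θ ^ 2 * D := by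
      rw [hD, hW, sq (∑ k ∈ range n, q ^ k), Finset.sum_mul_sum, Finset.mul_sum, Finset.mul_sum,
        ← Finset.sum_sub_distrib]
      refine Finset.sum_le_sum fun k _ => ?_
      rw [Finset.mul_sum, Finset.mul_sum, ← Finset.sum_sub_distrib]
      exact Finset.sum_le_sum fun l _ => (hterm k l).2
    have hg := ou_geom_le hq0.le hq1 n
    have hg0 : 0 ≤ ∑ k ∈ range n, q ^ k := by positivity
    have hgΔ : Δ ^ 2 * (∑ k ∈ range n, q ^ k) ^ 2 ≤ (2 / θ) ^ 2 := by
      rw [← mul_pow]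
      apply pow_le_pow_left₀ (by positivity)
      exact le_trans (by gcongr) hΔinv
    have hdΔ : Δ ^ 2 * (2 / (1 - q ^ 2) ^ 2) ≤ 2 * (2 / θ) ^ 2 := by
      have : Δ ^ 2 * (2 / (1 - q ^ 2) ^ 2) = 2 * (Δ * (1 - q ^ 2)⁻¹) ^ 2 := by
        rw [mul_pow, inv_pow]; ring
      rw [this]; gcongr
    have hcoth := ou_coth hx0
    have hq2e : exp (-2 * x) = q ^ 2 := by rw [hq, ← Real.exp_nat_mul]; congr 1; push_cast; ring
    rw [hq2e] at hcoth
    set H := (1 + q ^ 2) / (1 - q ^ 2) with hH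
    have hcT : |Δ ^ 2 * (n * H) - T / θ| ≤ 1 := by
      have : Δ ^ 2 * (n * H) - T / θ = T / θ * (x * H - 1) := by
        rw [← hT, hx]; field_simp
      have hT0 : 0 ≤ T := by rw [← hT]; positivity
      rw [this, abs_mul, abs_of_nonneg (by positivity)]
      calc _ ≤ T / θ * x := by gcongr
        _ = T * Δ := by rw [hx]; field_simp
        _ ≤ 1 := h2
    obtain ⟨d1, d2⟩ := abs_le.1 hd
    obtain ⟨c1, c2⟩ := abs_le.1 hcT
    have hΔ2 : 0 ≤ Δ ^ 2 := sq_nonneg _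
    have u1 := mul_le_mul_of_nonneg_left hup hΔ2
    have u2 := mul_le_mul_of_nonneg_left hlo hΔ2
    have u3 := mul_le_mul_of_nonneg_left d1 hΔ2
    have u4 := mul_le_mul_of_nonneg_left d2 hΔ2
    have e : Δ ^ 2 * D - T / (4 * θ ^ 3) = (Δ ^ 2 * (4 * θ ^ 2 * D) - T / θ) / (4 * θ ^ 2) := by
      field_simp
    have e16 : 16 / θ ^ 2 = 4 * (2 / θ) ^ 2 := by field_simp; norm_num
    rw [e, abs_div, abs_of_pos (show 0 < 4 * θ ^ 2 by positivity)]
    gcongr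
    rw [e16, abs_le]
    generalize Δ ^ 2 * (4 * θ ^ 2 * D) = a1 at *
    generalize hs : (2 / (1 - q ^ 2) ^ 2) = a2 at *
    generalize (∑ k ∈ range n, q ^ k) ^ 2 = a3 at *
    rw [mul_sub] at u2 u4
    rw [mul_neg, mul_sub] at u3
    constructor <;> linarith

lemma ou_memLp {θ : ℝ} [IsProbabilityMeasure (ℙ : Measure Ω)] {X : Fin 2 → ℝ → Ω → ℝ}
    (hX : IsOUPair θ X) (i : Fin 2) {t : ℝ} (ht : 0 ≤ t) : MemLp (X i t) 2 (ℙ : Measure Ω) := by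
  obtain ⟨v, hv⟩ := hX.gaussian i 1 (fun _ => t) (fun _ => 1) (fun _ => ht)
  simp only [Finset.univ_unique, Fin.default_eq_zero, one_mul, Finset.sum_singleton] at hv
  have h := memLp_id_gaussianReal (μ := 0) (v := v) 2
  rw [show (fun ω => X i t ω) = X i t from rfl] at hv
  rw [← hv] at h
  exact (memLp_map_measure_iff h.1 (hX.meas i t).aemeasurable).1 h

lemma ou_lin_var {θ : ℝ} [IsProbabilityMeasure (ℙ : Measure Ω)] {X : Fin 2 → ℝ → Ω → ℝ}
    (hX : IsOUPair θ X) (i : Fin 2) (n : ℕ) {Δ : ℝ} (hΔ : 0 ≤ Δ) (c : Fin n → ℝ) :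
    0 ≤ ∑ j, ∑ k, c j * c k * ouK θ Δ j k ∧
    Measure.map (fun ω => ∑ j, c j * X i ((j : ℕ) * Δ) ω) ℙ
      = gaussianReal 0 (Real.toNNReal (∑ j, ∑ k, c j * c k * ouK θ Δ j k)) := by
  have ht : ∀ j : Fin n, 0 ≤ ((j : ℕ) : ℝ) * Δ := fun j => by positivity
  obtain ⟨v, hv⟩ := hX.gaussian i n (fun j => (j : ℕ) * Δ) c ht
  have hm : Measurable (fun ω => ∑ j : Fin n, c j * X i ((j : ℕ) * Δ) ω) :=
    Finset.measurable_sum _ fun j _ => (hX.meas i _).const_mul _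
  have h1 : ∫ ω, (∑ j : Fin n, c j * X i ((j : ℕ) * Δ) ω) ^ 2 ∂ℙ = v := by
    have e := variance_id_gaussianReal (μ := 0) (v := v)
    rw [variance_eq_integral (by fun_prop)] at e
    simp only [id, integral_id_gaussianReal, sub_zero] at e
    rw [← hv, integral_map hm.aemeasurable (by fun_prop)] at e
    simpa using e
  have h2 : ∫ ω, (∑ j : Fin n, c j * X i ((j : ℕ) * Δ) ω) ^ 2 ∂ℙ
      = ∑ j : Fin n, ∑ k : Fin n, c j * c k * ouK θ Δ j k := by
    have hIntg : ∀ j k : Fin n, Integrable (fun ω => c j * c k *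
        (X i ((j : ℕ) * Δ) ω * X i ((k : ℕ) * Δ) ω)) ℙ := fun j k =>
      ((ou_memLp hX i (ht j)).integrable_mul (ou_memLp hX i (ht k))).const_mul _
    have e : ∀ ω, (∑ j : Fin n, c j * X i ((j : ℕ) * Δ) ω) ^ 2
        = ∑ j : Fin n, ∑ k : Fin n, c j * c k *
        (X i ((j : ℕ) * Δ) ω * X i ((k : ℕ) * Δ) ω) := by
      intro ω
      rw [sq, Finset.sum_mul_sum]
      refine Finset.sum_congr rfl fun j _ => Finset.sum_congr rfl fun k _ => by ring
    simp_rw [e]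
    rw [integral_finsetSum _ fun j _ => integrable_finsetSum _ fun k _ => hIntg j k]
    refine Finset.sum_congr rfl fun j _ => ?_
    rw [integral_finsetSum _ fun k _ => hIntg j k]
    refine Finset.sum_congr rfl fun k _ => ?_
    rw [integral_const_mul, hX.cov i _ _ (ht j) (ht k)]
    rfl
  rw [← h2, h1]
  exact ⟨v.2, by simpa using hv⟩

def ouVec (X : Fin 2 → ℝ → Ω → ℝ) (i : Fin 2) (n : ℕ) (Δ : ℝ) (ω : Ω) : Fin n → ℝ :=
  fun j => X i ((j : ℕ) * Δ) ω

lemma ouVec_meas {θ : ℝ} {X : Fin 2 → ℝ → Ω → ℝ}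
    (hX : IsOUPair θ X) (i : Fin 2) (n : ℕ) (Δ : ℝ) : Measurable (ouVec X i n Δ) :=
  measurable_pi_lambda _ fun _ => hX.meas i _

lemma ou_vec_law {θ : ℝ} [IsProbabilityMeasure (ℙ : Measure Ω)] {X : Fin 2 → ℝ → Ω → ℝ}
    (hX : IsOUPair θ X) (i : Fin 2) (n : ℕ) {Δ : ℝ} (hΔ : 0 ≤ Δ)
    (B : Matrix (Fin n) (Fin n) ℝ)
    (hB : B * B.transpose = Matrix.of fun j k : Fin n => ouK θ Δ j k) :
    Measure.map (ouVec X i n Δ) ℙ = Measure.map (fun h => B.mulVec h) (ouNu n) := by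
  have hm1 := ouVec_meas hX i n Δ
  have hm2 : Measurable (fun h : Fin n → ℝ => B.mulVec h) := by
    apply measurable_pi_lambda; intro j
    simp only [Matrix.mulVec, dotProduct]; fun_prop
  have := Measure.isProbabilityMeasure_map (μ := (ℙ : Measure Ω)) hm1.aemeasurable
  have := Measure.isProbabilityMeasure_map (μ := ouNu n) hm2.aemeasurable
  apply Measure.ext_of_charFunDual
  ext L
  rw [charFunDual_eq_charFun_map_one, charFunDual_eq_charFun_map_one]
  congr 1
  have hLm : Measurable L := L.continuous.measurable
  rw [Measure.map_map hLm hm1, Measure.map_map hLm hm2]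
  set c : Fin n → ℝ := fun j => L (Pi.single j 1) with hc
  have hL : ∀ x, L x = ∑ j, c j * x j := by
    intro x
    conv_lhs => rw [pi_eq_sum_univ' x, map_sum]
    refine Finset.sum_congr rfl fun j _ => ?_
    rw [map_smul, smul_eq_mul, mul_comm, hc]
  have e1 : (L ∘ ouVec X i n Δ) = fun ω => ∑ j : Fin n, c j * X i ((j : ℕ) * Δ) ω := by
    ext ω; simp only [Function.comp, hL]; rfl
  have e2 : (L ∘ fun h => B.mulVec h) = fun h => ∑ k, (∑ j, c j * B j k) * h k := by
    ext h; simp only [Function.comp, hL, Matrix.mulVec, dotProduct, Finset.mul_sum, Finset.sum_mul]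
    rw [Finset.sum_comm]
    refine Finset.sum_congr rfl fun j _ => Finset.sum_congr rfl fun k _ => by ring
  rw [e1, e2, (ou_lin_var hX i n hΔ c).2, ou_lin_law]
  congr 2
  have hB' : ∀ j k : Fin n, ouK θ Δ j k = ∑ l, B j l * B k l := by
    intro j k
    have := congrFun (congrFun hB j) k
    rw [Matrix.mul_apply] at this
    simpa using this.symm
  have e3 : ∀ l, (∑ j, c j * B j l) ^ 2 = ∑ j, ∑ k, c j * c k * (B j l * B k l) := by
    intro l
    rw [sq, Finset.sum_mul_sum]
    exact Finset.sum_congr rfl fun j _ => Finset.sum_congr rfl fun k _ => by ring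
  simp only [hB', e3, Finset.mul_sum]
  symm
  rw [Finset.sum_comm]
  exact Finset.sum_congr rfl fun j _ => Finset.sum_comm

lemma ou_joint_law {θ : ℝ} [IsProbabilityMeasure (ℙ : Measure Ω)] {X : Fin 2 → ℝ → Ω → ℝ}
    (hX : IsOUPair θ X) (n : ℕ) {Δ : ℝ} (hΔ : 0 ≤ Δ)
    (B : Matrix (Fin n) (Fin n) ℝ)
    (hB : B * B.transpose = Matrix.of fun j k : Fin n => ouK θ Δ j k) :
    Measure.map (fun ω => (ouVec X 0 n Δ ω, ouVec X 1 n Δ ω)) ℙ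
      = Measure.map (fun p => (B.mulVec p.1, B.mulVec p.2)) ((ouNu n).prod (ouNu n)) := by
  have hm2 : Measurable (fun h : Fin n → ℝ => B.mulVec h) := by
    apply measurable_pi_lambda; intro j
    simp only [Matrix.mulVec, dotProduct]; fun_prop
  have hev : Measurable (fun (f : ℝ → ℝ) => fun j : Fin n => f ((j : ℕ) * Δ)) :=
    measurable_pi_lambda _ fun j => measurable_pi_apply _
  have hi : IndepFun (ouVec X 0 n Δ) (ouVec X 1 n Δ) (ℙ : Measure Ω) := hX.indep.comp hev hev
  rw [(indepFun_iff_map_prod_eq_prod_map_map (ouVec_meas hX 0 n Δ).aemeasurable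
    (ouVec_meas hX 1 n Δ).aemeasurable).1 hi, ou_vec_law hX 0 n hΔ B hB, ou_vec_law hX 1 n hΔ B hB,
    Measure.map_prod_map _ _ hm2 hm2]
  rfl

lemma ou_discrete (θ : ℝ) (hθ : 0 < θ) [IsProbabilityMeasure (ℙ : Measure Ω)]
    (X : Fin 2 → ℝ → Ω → ℝ) (hX : IsOUPair θ X) :
    ∃ c, 0 < c ∧ ∃ T₀, 1 ≤ T₀ ∧ ∀ T, T₀ ≤ T → ∀ (n : ℕ), 0 < n → θ * (T / n) ≤ 1 →
      T * (T / n) ≤ 1 →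
      (∀ z, |(ℙ : Measure Ω).real {ω | √θ * √T * ouRhoTilde X n (T / n) ω ≤ z} - ouPhi z|
        ≤ c * (log T / √T)) ∧
      ∀ i, (ℙ : Measure Ω).real {ω | ouYtilde X i i n (T / n) ω ≤ T / (4 * θ)}
        ≤ c * (log T / √T) := by
  set C : ℝ := 12 / θ ^ 4 + (16 / θ ^ 2 + 1) / (4 * θ ^ 2) + 3 / θ ^ 2 with hC
  have hCpos : 0 < C := by positivity
  obtain ⟨c, hc, T₀, hT₀, H⟩ := ou_diag θ C hθ hCpos
  refine ⟨c, hc, T₀, hT₀, fun T hT n hn h1 h2 => ?_⟩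
  have hTpos : 0 < T := by linarith
  have hn' : (0 : ℝ) < n := by exact_mod_cast hn
  set Δ := T / n with hΔd
  have hΔ : 0 < Δ := by positivity
  have hnT : n * Δ = T := by rw [hΔd]; field_simp
  obtain ⟨k0, k1, k2, k3⟩ := ouK_sums hθ hΔ hnT h1 h2
  set S : Matrix (Fin n) (Fin n) ℝ := Matrix.of fun j k : Fin n => ouK θ Δ j k with hS
  have hpsd : S.PosSemidef := by
    refine Matrix.PosSemidef.of_dotProduct_mulVec_nonneg ?_ fun x => ?_
    · ext j k
      simp only [Matrix.conjTranspose_apply, hS, Matrix.of_apply, star_trivial, ouK]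
      rw [abs_sub_comm, add_comm ((j : ℕ) * Δ : ℝ)]
    · have := (ou_lin_var hX 0 n hΔ.le x).1
      refine this.trans_eq ?_
      simp only [dotProduct, Matrix.mulVec, Finset.mul_sum, hS, Matrix.of_apply, star_trivial,
        Pi.star_apply]
      refine Finset.sum_congr rfl fun j _ => Finset.sum_congr rfl fun k _ => by ring
  obtain ⟨B, m, hB, hQ, m0, mC, ms, ms2⟩ := ou_matrix hn hΔ S hpsd (fun i j => k0 _ _)
    ((2 / θ ^ 2) / Δ) (fun i => by
      rw [le_div_iff₀ hΔ, mul_comm]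
      have := k1 i (by simp)
      rw [Finset.sum_range] at this
      exact this)
  have hρ : Δ * ((2 / θ ^ 2) / Δ) = 2 / θ ^ 2 := by field_simp
  rw [hρ] at mC ms ms2
  have a1 : 0 < 12 / θ ^ 4 := by positivity
  have a2 : 0 < (16 / θ ^ 2 + 1) / (4 * θ ^ 2) := by positivity
  have a3 : 3 / θ ^ 2 = 2 / θ ^ 2 + 1 / θ ^ 2 := by ring
  have a4 : 0 < 1 / θ ^ 2 := by positivity
  have a5 : 0 < 2 / θ ^ 2 := by positivity
  have b1 : ∀ i, m i ≤ C := fun i => (mC i).trans (by rw [hC]; linarith)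
  have b2 : |∑ i, m i - T/(2*θ)| ≤ C := by
    rw [Finset.sum_range] at k2
    have := abs_sub_le (∑ i, m i) (Δ * ∑ i, S i i) (T / (2 * θ))
    have k2' : |Δ * ∑ i, S i i - T / (2 * θ)| ≤ 1 / θ ^ 2 := k2
    rw [hC]; linarith
  have b3 : |∑ i, m i ^ 2 - T/(4*θ^3)| ≤ C := by
    simp only [Finset.sum_range] at k3
    have := abs_sub_le (∑ i, m i ^ 2) (Δ ^ 2 * ∑ i, ∑ j, S i j ^ 2) (T / (4 * θ ^ 3))
    have k3' : |Δ ^ 2 * ∑ i, ∑ j, S i j ^ 2 - T / (4 * θ ^ 3)| ≤ (16/θ^2+1)/(4*θ^2) := k3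
    have : 3 * (2 / θ ^ 2) ^ 2 = 12 / θ ^ 4 := by ring
    rw [hC]; linarith
  obtain ⟨D1, D2⟩ := H T hT n m m0 b1 b2 b3
  have hY : ∀ i j ω, ouYtilde X i j n Δ ω = ouQ n Δ (ouVec X i n Δ ω) (ouVec X j n Δ ω) := by
    intro i j ω
    simp only [ouYtilde, ouXtilde, ouQ, ouVec, Finset.sum_range]
  have hQm : Measurable (fun p : (Fin n → ℝ) × (Fin n → ℝ) => ouQ n Δ p.1 p.2) := by
    unfold ouQ; fun_prop
  have hQm1 : Measurable (fun p : (Fin n → ℝ) => ouQ n Δ p p) :=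
    hQm.comp (measurable_id.prodMk measurable_id)
  have hm2 : Measurable (fun h : Fin n → ℝ => B.mulVec h) := by
    apply measurable_pi_lambda; intro j
    simp only [Matrix.mulVec, dotProduct]; fun_prop
  refine ⟨fun z => ?_, fun i => ?_⟩
  · refine le_trans (le_of_eq ?_) (D1 z)
    congr 2
    set E : Set ((Fin n → ℝ) × (Fin n → ℝ)) := {p | √θ * √T * (ouQ n Δ p.1 p.2 /
      √(ouQ n Δ p.1 p.1 * ouQ n Δ p.2 p.2)) ≤ z} with hE
    have hEm : MeasurableSet E := by
      apply measurableSet_le _ measurable_const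
      exact (hQm.div ((hQm1.comp measurable_fst).mul (hQm1.comp measurable_snd)).sqrt).const_mul _
    have hm3 : Measurable (fun p : (Fin n → ℝ) × (Fin n → ℝ) => (B.mulVec p.1, B.mulVec p.2)) :=
      (hm2.comp measurable_fst).prodMk (hm2.comp measurable_snd)
    have l := DFunLike.congr_fun (ou_joint_law hX n hΔ.le B hB) E
    rw [Measure.map_apply ((ouVec_meas hX 0 n Δ).prodMk (ouVec_meas hX 1 n Δ)) hEm,
      Measure.map_apply hm3 hEm] at l
    have l' := congrArg ENNReal.toReal l
    refine Eq.trans ?_ (l'.trans ?_)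
    · simp only [Measure.real]; congr 2
      ext ω
      simp only [hE, Set.mem_ofPred_eq, Set.mem_preimage, ouRhoTilde, hY]
    · simp only [Measure.real]; congr 2
      ext p
      simp only [hE, Set.mem_ofPred_eq, Set.mem_preimage, hQ, sq, mul_assoc]
  · refine le_trans (le_of_eq ?_) D2
    set E : Set ((Fin n → ℝ)) := {p | ouQ n Δ p p ≤ T / (4 * θ)} with hE
    have hEm : MeasurableSet E := measurableSet_le hQm1 measurable_const
    have l := DFunLike.congr_fun (ou_vec_law hX i n hΔ.le B hB) E
    rw [Measure.map_apply (ouVec_meas hX i n Δ) hEm, Measure.map_apply hm2 hEm] at l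
    have l' := congrArg ENNReal.toReal l
    refine Eq.trans ?_ (l'.trans ?_)
    · simp only [Measure.real]; congr 2
      ext ω
      simp only [hE, Set.mem_ofPred_eq, Set.mem_preimage, hY]
    · simp only [Measure.real]; congr 2
      ext p
      simp only [hE, Set.mem_ofPred_eq, Set.mem_preimage, hQ, sq, mul_assoc]

lemma ou_riemann {f : ℝ → ℝ} {T : ℝ} (hT : 0 < T) (hf : ContinuousOn f (Set.Ici 0)) :
    Tendsto (fun n : ℕ => (T / n) * ∑ k ∈ range n, f (k * (T / n))) atTop
      (𝓝 (∫ u in (0:ℝ)..T, f u)) := by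
  have hc : ContinuousOn f (Set.Icc 0 T) := hf.mono Set.Icc_subset_Ici_self
  have hu := isCompact_Icc.uniformContinuousOn_of_continuous hc
  rw [Metric.uniformContinuousOn_iff] at hu
  rw [Metric.tendsto_atTop]
  intro ε hε
  obtain ⟨δ, hδ, H⟩ := hu (ε / (2 * T)) (by positivity)
  obtain ⟨N, hN⟩ := exists_nat_gt (T / δ)
  refine ⟨N + 1, fun n hn => ?_⟩
  have hn1 : (N : ℝ) + 1 ≤ n := by exact_mod_cast hn
  have hn0 : (0 : ℝ) < n := by have : (0:ℝ) ≤ N := by positivity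
                               linarith
  set Δ := T / n with hΔ
  have hΔ0 : 0 < Δ := by positivity
  have hΔδ : Δ < δ := by
    rw [hΔ, div_lt_iff₀ hn0]; rw [div_lt_iff₀ hδ] at hN; nlinarith
  have hnΔ : n * Δ = T := by rw [hΔ]; field_simp
  have hle : ∀ k ∈ range n, ((k : ℝ) + 1) * Δ ≤ T := by
    intro k hk
    have : (k : ℝ) + 1 ≤ n := by exact_mod_cast Finset.mem_range.1 hk
    rw [← hnΔ]; gcongr
  have hIntg : ∀ k < n, IntervalIntegrable f volume ((k : ℕ) * Δ) ((k + 1 : ℕ) * Δ) := by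
    intro k hk
    apply ContinuousOn.intervalIntegrable
    have h0 : (0 : ℝ) ≤ k * Δ := by positivity
    rw [Set.uIcc_of_le (by push_cast; nlinarith)]
    exact hf.mono fun x hx => h0.trans hx.1
  have hs := intervalIntegral.sum_integral_adjacent_intervals (a := fun k : ℕ => (k : ℝ) * Δ) hIntg
  simp only [Nat.cast_zero, zero_mul, hnΔ] at hs
  rw [← hs, dist_eq_norm, Finset.mul_sum, ← Finset.sum_sub_distrib]
  have hb : ∀ k ∈ range n, ‖Δ * f (k * Δ) - ∫ x in (k * Δ : ℝ)..((k + 1 : ℕ) * Δ), f x‖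
      ≤ ε / (2 * T) * Δ := by
    intro k hk
    have h0 : (0 : ℝ) ≤ k * Δ := by positivity
    have e : Δ * f (k * Δ) = ∫ x in (k * Δ : ℝ)..((k + 1 : ℕ) * Δ), f (k * Δ) := by
      rw [intervalIntegral.integral_const, smul_eq_mul]; push_cast; ring
    rw [e, ← intervalIntegral.integral_sub (by simp) (hIntg k (Finset.mem_range.1 hk))]
    refine (intervalIntegral.norm_integral_le_of_norm_le_const (C := ε / (2 * T)) ?_).trans ?_
    · intro x hx
      rw [Set.uIoc_of_le (by push_cast; nlinarith)] at hx
      have hx2 := hx.2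
      have hx1 := hx.1
      push_cast at hx2
      have := hle k hk
      rw [← dist_eq_norm]
      refine (H _ ⟨h0, by linarith⟩ _ ⟨by linarith, by linarith⟩ ?_).le
      rw [Real.dist_eq, abs_sub_comm, abs_of_pos (by linarith)]
      linarith
    · push_cast
      rw [show ((k : ℝ) + 1) * Δ - k * Δ = Δ by ring, abs_of_pos hΔ0]
  refine (norm_sum_le_of_le _ hb).trans_lt ?_
  rw [Finset.sum_const, card_range, nsmul_eq_mul, mul_left_comm, hnΔ]
  field_simp; norm_num

lemma ou_limset {μ : Measure Ω} [IsProbabilityMeasure μ] (A : Set Ω) (s : ℕ → Set Ω) (c : ℝ)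
    (hA : ∀ᵐ ω ∂μ, ω ∈ A → ∀ᶠ n in atTop, ω ∈ s n)
    (hs : ∀ᶠ n in atTop, μ.real (s n) ≤ c) : μ.real A ≤ c := by
  have hc : 0 ≤ c := by
    obtain ⟨n, hn⟩ := hs.exists
    exact measureReal_nonneg.trans hn
  set t : ℕ → Set Ω := fun m => ⋂ k ≥ m, s k with ht
  have hmono : Monotone t := by
    intro a b hab ω h
    simp only [ht, Set.mem_iInter] at h ⊢
    exact fun k hk => h k (hab.trans hk)
  have h1 : μ A ≤ μ (⋃ m, t m) := by
    apply measure_mono_ae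
    filter_upwards [hA] with ω h hω
    obtain ⟨N, hN⟩ := eventually_atTop.1 (h hω)
    exact Set.mem_iUnion.2 ⟨N, by simp only [ht, Set.mem_iInter]; exact hN⟩
  have h2 : μ (⋃ m, t m) ≤ ENNReal.ofReal c := by
    rw [hmono.measure_iUnion]
    refine iSup_le fun m => ?_
    obtain ⟨N, hN⟩ := eventually_atTop.1 hs
    have : t m ⊆ s (max m N) := by
      intro ω h
      simp only [ht, Set.mem_iInter] at h
      exact h _ (le_max_left _ _)
    refine (measure_mono this).trans ?_
    have := hN (max m N) (le_max_right _ _)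
    rw [Measure.real] at this
    exact (ENNReal.le_ofReal_iff_toReal_le (measure_ne_top _ _) hc).2 this
  exact ENNReal.toReal_le_of_le_ofReal hc (h1.trans h2)

lemma ou_Ylim {θ : ℝ} {X : Fin 2 → ℝ → Ω → ℝ} (hX : IsOUPair θ X) {T : ℝ} (hT : 0 < T) :
    ∀ᵐ ω ∂(ℙ : Measure Ω), ∀ i j, Tendsto (fun n : ℕ => ouYtilde X i j n (T / n) ω) atTop
      (𝓝 (ouY X i j T ω)) := by
  filter_upwards [hX.cont] with ω h i j
  have h1 := ou_riemann hT ((h i).mul (h j))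
  have hx : ∀ i, Tendsto (fun n : ℕ => ouXtilde X i n (T / n) ω) atTop (𝓝 (ouXbar X i T ω)) := by
    intro i
    refine ((ou_riemann hT (h i)).const_mul (1 / T)).congr' ?_
    filter_upwards [eventually_gt_atTop 0] with n hn
    have : (0 : ℝ) < n := by exact_mod_cast hn
    rw [ouXtilde]; field_simp
  refine ((h1.sub (((hx i).const_mul T).mul (hx j))).congr' ?_)
  filter_upwards [eventually_gt_atTop 0] with n hn
  have : (0 : ℝ) < n := by exact_mod_cast hn
  rw [ouYtilde, show (n : ℝ) * (T / n) = T by field_simp]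
  rfl

lemma ouYtilde_meas {θ : ℝ} {X : Fin 2 → ℝ → Ω → ℝ} (hX : IsOUPair θ X) (i j : Fin 2) (n : ℕ)
    (Δ : ℝ) : Measurable (ouYtilde X i j n Δ) := by
  have hx : ∀ i, Measurable (ouXtilde X i n Δ) := fun i =>
    (Finset.measurable_sum _ fun k _ => hX.meas i _).const_mul _
  exact ((Finset.measurable_sum _ fun k _ => (hX.meas i _).mul (hX.meas j _)).const_mul _).sub
    (((hx i).const_mul _).mul (hx j))

lemma ouRho_aemeas {θ : ℝ} {X : Fin 2 → ℝ → Ω → ℝ} (hX : IsOUPair θ X) {T : ℝ} (hT : 0 < T) :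
    AEMeasurable (ouRho X T) (ℙ : Measure Ω) := by
  have hY : ∀ i j, AEMeasurable (ouY X i j T) (ℙ : Measure Ω) := fun i j =>
    aemeasurable_of_tendsto_metrizable_ae atTop
      (fun n : ℕ => (ouYtilde_meas hX i j n (T / n)).aemeasurable)
      ((ou_Ylim hX hT).mono fun ω h => h i j)
  exact (hY 0 1).div ((hY 0 0).mul (hY 1 1)).sqrt

lemma ou_cdf_bound (θ : ℝ) (hθ : 0 < θ) [IsProbabilityMeasure (ℙ : Measure Ω)]
    (X : Fin 2 → ℝ → Ω → ℝ) (hX : IsOUPair θ X) :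
    ∃ c, 0 < c ∧ ∃ T₀, 1 ≤ T₀ ∧ ∀ T, T₀ ≤ T →
      ∀ z, |(ℙ : Measure Ω).real {ω | √θ * √T * ouRho X T ω ≤ z} - ouPhi z|
        ≤ c * (log T / √T) := by
  obtain ⟨c, hc, T₀, hT₀, H⟩ := ou_discrete θ hθ X hX
  refine ⟨3 * c, by positivity, T₀, hT₀, fun T hT z => ?_⟩
  have hTpos : 0 < T := by linarith
  have hev : ∀ᶠ n : ℕ in atTop, 0 < n ∧ θ * (T / n) ≤ 1 ∧ T * (T / n) ≤ 1 := by
    have h0 : Tendsto (fun n : ℕ => T / (n : ℝ)) atTop (𝓝 0) :=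
      tendsto_const_div_atTop_nhds_zero_nat T
    have h1 := h0.const_mul θ
    have h2 := h0.const_mul T
    rw [mul_zero] at h1 h2
    filter_upwards [eventually_gt_atTop 0, h1.eventually_le_const one_pos,
      h2.eventually_le_const one_pos] with n a b d using ⟨a, b, d⟩
  set ε := c * (log T / √T) with hε
  have hlim := ou_Ylim hX hTpos
  have hbad : ∀ i, (ℙ : Measure Ω).real {ω | ouY X i i T ω ≤ 0} ≤ ε := by
    intro i
    refine ou_limset _ (fun n => {ω | ouYtilde X i i n (T / n) ω ≤ T / (4 * θ)}) _ ?_ ?_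
    · filter_upwards [hlim] with ω h hω
      refine ((h i i).eventually_lt_const (lt_of_le_of_lt hω (show 0 < T / (4 * θ) by positivity))).mono
        fun n hn => le_of_lt hn
    · filter_upwards [hev] with n hn
      exact (H T hT n hn.1 hn.2.1 hn.2.2).2 i
  set Bad : Set Ω := {ω | ouY X 0 0 T ω ≤ 0} ∪ {ω | ouY X 1 1 T ω ≤ 0} with hBad
  have hBadle : (ℙ : Measure Ω).real Bad ≤ 2 * ε := by
    have := measureReal_union_le (μ := (ℙ : Measure Ω)) {ω | ouY X 0 0 T ω ≤ 0} {ω | ouY X 1 1 T ω ≤ 0}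
    linarith [hbad 0, hbad 1]
  have hZ : ∀ᵐ ω ∂(ℙ : Measure Ω), ω ∉ Bad → Tendsto
      (fun n : ℕ => √θ * √T * ouRhoTilde X n (T / n) ω) atTop (𝓝 (√θ * √T * ouRho X T ω)) := by
    filter_upwards [hlim] with ω h hω
    have h0 : 0 < ouY X 0 0 T ω := not_le.1 fun h => hω (Or.inl h)
    have h1 : 0 < ouY X 1 1 T ω := not_le.1 fun h => hω (Or.inr h)
    exact ((h 0 1).div ((h 0 0).mul (h 1 1)).sqrt (Real.sqrt_pos.2 (mul_pos h0 h1)).ne').const_mul _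
  set Z : Ω → ℝ := fun ω => √θ * √T * ouRho X T ω with hZd
  set Zn : ℕ → Ω → ℝ := fun n ω => √θ * √T * ouRhoTilde X n (T / n) ω with hZn
  have hZm : AEMeasurable Z (ℙ : Measure Ω) := (ouRho_aemeas hX hTpos).const_mul _
  have hZnm : ∀ n, Measurable (Zn n) := fun n =>
    ((ouYtilde_meas hX 0 1 n _).div
      ((ouYtilde_meas hX 0 0 n _).mul (ouYtilde_meas hX 1 1 n _)).sqrt).const_mul _
  have hup : ∀ η > 0, (ℙ : Measure Ω).real {ω | Z ω ≤ z} ≤ ouPhi z + η + ε + 2 * ε := by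
    intro η hη
    have a : (ℙ : Measure Ω).real ({ω | Z ω ≤ z} \ Bad) ≤ ouPhi z + η + ε := by
      refine ou_limset _ (fun n => {ω | Zn n ω ≤ z + η}) _ ?_ ?_
      · filter_upwards [hZ] with ω h hω
        exact ((h hω.2).eventually_lt_const (lt_of_le_of_lt hω.1 (show z < z + η by linarith))).mono
          fun n hn => le_of_lt hn
      · filter_upwards [hev] with n hn
        have h1 := (abs_le.1 ((H T hT n hn.1 hn.2.1 hn.2.2).1 (z + η))).2
        have h2 := ouPhi_lip (show z ≤ z + η by linarith)
        change (ℙ : Measure Ω).real {ω | √θ * √T * ouRhoTilde X n (T / n) ω ≤ z + η} ≤ _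
        linarith
    have b : (ℙ : Measure Ω).real {ω | Z ω ≤ z} ≤ (ℙ : Measure Ω).real (({ω | Z ω ≤ z} \ Bad) ∪ Bad) :=
      measureReal_mono (fun ω h => by by_cases hb : ω ∈ Bad; exacts [Or.inr hb, Or.inl ⟨h, hb⟩])
    have d := measureReal_union_le (μ := (ℙ : Measure Ω)) ({ω | Z ω ≤ z} \ Bad) Bad
    linarith
  have hlo : ∀ η > 0, (ℙ : Measure Ω).real {ω | z < Z ω} ≤ 1 - ouPhi z + η + ε + 2 * ε := by
    intro η hη
    have a : (ℙ : Measure Ω).real ({ω | z < Z ω} \ Bad) ≤ 1 - ouPhi z + η + ε := by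
      refine ou_limset _ (fun n => {ω | Zn n ω ≤ z - η}ᶜ) _ ?_ ?_
      · filter_upwards [hZ] with ω h hω
        exact ((h hω.2).eventually_const_lt (lt_trans (show z - η < z by linarith) hω.1)).mono
          fun n hn => not_le.2 hn
      · filter_upwards [hev] with n hn
        have h1 := (abs_le.1 ((H T hT n hn.1 hn.2.1 hn.2.2).1 (z - η))).1
        have h2 := ouPhi_lip (show z - η ≤ z by linarith)
        rw [probReal_compl_eq_one_sub (measurableSet_le (hZnm n) measurable_const)]
        change 1 - (ℙ : Measure Ω).real {ω | √θ * √T * ouRhoTilde X n (T / n) ω ≤ z - η} ≤ _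
        linarith
    have b : (ℙ : Measure Ω).real {ω | z < Z ω} ≤ (ℙ : Measure Ω).real (({ω | z < Z ω} \ Bad) ∪ Bad) :=
      measureReal_mono (fun ω h => by by_cases hb : ω ∈ Bad; exacts [Or.inr hb, Or.inl ⟨h, hb⟩])
    have d := measureReal_union_le (μ := (ℙ : Measure Ω)) ({ω | z < Z ω} \ Bad) Bad
    linarith
  have hsum : 1 ≤ (ℙ : Measure Ω).real {ω | Z ω ≤ z} + (ℙ : Measure Ω).real {ω | z < Z ω} := by
    have d := measureReal_union_le (μ := (ℙ : Measure Ω)) {ω | Z ω ≤ z} {ω | z < Z ω}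
    have : {ω | Z ω ≤ z} ∪ {ω | z < Z ω} = Set.univ := by
      ext ω; simpa using le_or_gt (Z ω) z
    rw [this, probReal_univ] at d
    exact d
  have e1 : (ℙ : Measure Ω).real {ω | Z ω ≤ z} ≤ ouPhi z + 3 * ε :=
    le_of_forall_pos_le_add fun η hη => by linarith [hup η hη]
  have e2 : (ℙ : Measure Ω).real {ω | z < Z ω} ≤ 1 - ouPhi z + 3 * ε :=
    le_of_forall_pos_le_add fun η hη => by linarith [hlo η hη]
  rw [abs_le]
  constructor <;> linarith

/-- there are `c(θ) > 0` and `T₀ ≥ 1` such that for all `T ≥ T₀`,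
`d_Kol(√θ·√T·ρ(T), N(0,1)) ≤ c(θ)·ln(T)/√T`; in particular
`√θ·√T·ρ(T) ⇒ N(0,1)` as `T → ∞`. -/
theorem stmt_7 (θ : ℝ) (hθ : 0 < θ) [IsProbabilityMeasure (ℙ : Measure Ω)]
    (X : Fin 2 → ℝ → Ω → ℝ) (hX : IsOUPair θ X) :
    (∃ c : ℝ, 0 < c ∧ ∃ T₀ : ℝ, 1 ≤ T₀ ∧ ∀ T : ℝ, T₀ ≤ T →
      dKol (Measure.map (fun ω => Real.sqrt θ * Real.sqrt T * ouRho X T ω) ℙ)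
          (gaussianReal 0 1)
        ≤ c * Real.log T / Real.sqrt T) ∧
    Tendsto (fun T : ℝ =>
        dKol (Measure.map (fun ω => Real.sqrt θ * Real.sqrt T * ouRho X T ω) ℙ)
          (gaussianReal 0 1)) atTop (𝓝 0) := by
  obtain ⟨c, hc, T₀, hT₀, H⟩ := ou_cdf_bound θ hθ X hX
  have main : ∀ T : ℝ, T₀ ≤ T →
      dKol (Measure.map (fun ω => Real.sqrt θ * Real.sqrt T * ouRho X T ω) ℙ)
          (gaussianReal 0 1)
        ≤ c * Real.log T / Real.sqrt T := by
    intro T hT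
    refine ciSup_le fun z => ?_
    have hm : AEMeasurable (fun ω => Real.sqrt θ * Real.sqrt T * ouRho X T ω) (ℙ : Measure Ω) :=
      (ouRho_aemeas hX (by linarith)).const_mul _
    rw [Measure.map_apply_of_aemeasurable hm measurableSet_Iic, mul_div_assoc]
    exact H T hT z
  refine ⟨⟨c, hc, T₀, hT₀, main⟩, ?_⟩
  have hl : Tendsto (fun T : ℝ => c * Real.log T / Real.sqrt T) atTop (𝓝 0) := by
    have h := (isLittleO_log_rpow_atTop (show (0:ℝ) < 1 / 2 by norm_num)).tendsto_div_nhds_zero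
    have h2 := h.const_mul c
    rw [mul_zero] at h2
    simpa only [Real.sqrt_eq_rpow, mul_div_assoc] using h2
  refine squeeze_zero' (Eventually.of_forall fun T => Real.iSup_nonneg fun z => abs_nonneg _) ?_ hl
  filter_upwards [eventually_ge_atTop T₀] with T hT using main T hT

end
end
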